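/- arXiv:2501.00299 — 13 statements merged into one kernel-verified Lean document; each statement's English description precedes it below -/
import Mathlib

section
/- Let p > 1 and let μ, ν : {1,2,...} → (0,∞) be positive weights such that B¹_{μ,ν} := sup_{r≥1} (∑_{x=r}^∞ μ(x)) · (∑_{x=1}^r ν(x)^{-1/(p-1)})^{p-1} is finite. Then for every finitely supported function f : {1,2,...} → ℝ one has ∑_{x=1}^∞ |∑_{y=1}^x f(y)|^p μ(x) ≤ (p^p/(p-1)^{p-1}) · B¹_{μ,ν} · ∑_{x=1}^∞ |f(x)|^p ν(x). -/
open scoped ENNReal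

lemma aux_conc (θ : ℝ) (h0 : 0 ≤ θ) (h1 : θ ≤ 1) (b c : ℝ) (hb : 0 ≤ b) (hc : 0 < c) :
    θ * ((c - b) * c ^ (θ - 1)) ≤ c ^ θ - b ^ θ := by
  have h := rpow_one_add_le_one_add_mul_self (s := b / c - 1)
    (by have := div_nonneg hb hc.le; linarith) h0 h1
  rw [show 1 + (b / c - 1) = b / c by ring, Real.div_rpow hb hc.le] at h
  have hcθ : 0 < c ^ θ := Real.rpow_pos_of_pos hc θ
  rw [div_le_iff₀ hcθ] at h
  rw [Real.rpow_sub_one hc.ne']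
  have e : (1 + θ * (b / c - 1)) * c ^ θ = c ^ θ - θ * ((c - b) * (c ^ θ / c)) := by
    field_simp
    ring
  linarith

lemma aux_tele (G F : ℕ → ℝ) (y N : ℕ) (hy : y ≤ N)
    (h : ∀ x, y ≤ x → x < N → G x ≤ F x - F (x + 1)) :
    ∑ x ∈ Finset.Ico y N, G x ≤ F y - F N := by
  induction N, hy using Nat.le_induction with
  | base => simp
  | succ n hn ih =>
    rw [Finset.sum_Ico_succ_top hn]
    have := ih (fun x hx hx' => h x hx (by omega))
    have := h n hn (by omega)
    linarith

lemma aux_core (p : ℝ) (hp : 1 < p) (m v a : ℕ → ℝ) (hm : ∀ n, 0 < m n) (hv : ∀ n, 0 < v n)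
    (ha : ∀ n, 0 ≤ a n) (B : ℝ) (hB : 0 ≤ B) (N : ℕ)
    (H : ∀ r < N, (∑ x ∈ Finset.Ico r N, m x) *
      (∑ x ∈ Finset.range (r + 1), v x ^ (-1 / (p - 1))) ^ (p - 1) ≤ B) :
    ∑ x ∈ Finset.range N, (∑ y ∈ Finset.range (x + 1), a y) ^ p * m x ≤
      (p ^ p / (p - 1) ^ (p - 1)) * B * ∑ x ∈ Finset.range N, a x ^ p * v x := by
  have hp0 : 0 < p := by linarith
  have hp1 : 0 < p - 1 := by linarith
  set w : ℕ → ℝ := fun x => v x ^ (-1 / (p - 1)) with hw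
  have hwpos : ∀ x, 0 < w x := fun x => Real.rpow_pos_of_pos (hv x) _
  set W : ℕ → ℝ := fun r => ∑ x ∈ Finset.range (r + 1), w x with hW
  set M : ℕ → ℝ := fun r => ∑ x ∈ Finset.Ico r N, m x with hM
  have hWpos : ∀ r, 0 < W r := fun r =>
    Finset.sum_pos (fun x _ => hwpos x) ⟨0, by simp⟩
  have hMpos : ∀ r < N, 0 < M r := fun r hr =>
    Finset.sum_pos (fun x _ => hm x) ⟨r, by simp [hr]⟩
  have hMnn : ∀ r, 0 ≤ M r := fun r => Finset.sum_nonneg (fun x _ => (hm x).le)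
  replace H : ∀ r < N, M r * W r ^ (p - 1) ≤ B := H
  set s : ℝ := 1 - p⁻¹ with hs
  have hpi : 0 < p⁻¹ := by positivity
  have hpi1 : p⁻¹ < 1 := inv_lt_one_of_one_lt₀ hp
  have hs0 : 0 < s := by linarith
  have hs1 : s < 1 := by linarith
  have hsp : s * p = p - 1 := by rw [hs]; field_simp
  -- first sum
  set u : ℕ → ℝ := fun y => w y * W y ^ (s - 1) with hu
  have hupos : ∀ y, 0 < u y := fun y => mul_pos (hwpos y) (Real.rpow_pos_of_pos (hWpos y) _)
  have S1 : ∀ x, s * ∑ y ∈ Finset.range (x + 1), u y ≤ W x ^ s := by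
    intro x
    induction x with
    | zero =>
      have := aux_conc s hs0.le hs1.le 0 (W 0) le_rfl (hWpos 0)
      rw [Real.zero_rpow hs0.ne'] at this
      simp only [zero_add, Finset.sum_range_one, hu, hW] at this ⊢
      simpa using this
    | succ n ih =>
      rw [Finset.sum_range_succ, mul_add]
      have := aux_conc s hs0.le hs1.le (W n) (W (n+1)) (hWpos n).le (hWpos (n+1))
      have e : W (n+1) - W n = w (n+1) := by
        simp only [hW]; rw [Finset.sum_range_succ _ (n+1)]; ring
      rw [e] at this
      have e2 : u (n+1) = w (n+1) * W (n+1) ^ (s-1) := rfl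
      rw [e2]
      linarith
  -- second sum
  have S2 : ∀ y < N, ∑ x ∈ Finset.Ico y N, m x * M x ^ (-s) ≤ p * M y ^ p⁻¹ := by
    intro y hy
    have := aux_tele (fun x => m x * M x ^ (-s)) (fun x => p * M x ^ p⁻¹) y N hy.le ?_
    · have h2 : 0 ≤ p * M N ^ p⁻¹ := mul_nonneg hp0.le (Real.rpow_nonneg (hMnn N) _)
      linarith
    · intro x _ hx
      have := aux_conc p⁻¹ hpi.le hpi1.le (M (x+1)) (M x) (hMnn _) (hMpos x hx)
      have e : M x - M (x+1) = m x := by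
        simp only [hM]; rw [Finset.sum_eq_sum_Ico_succ_bot hx]; ring
      rw [e, show p⁻¹ - 1 = -s by rw [hs]; ring] at this
      have := mul_le_mul_of_nonneg_left this hp0.le
      rw [← mul_assoc, mul_inv_cancel₀ hp0.ne', one_mul] at this
      linarith
  -- Hölder
  have S3 : ∀ x, (∑ y ∈ Finset.range (x + 1), a y) ^ p ≤
      (∑ y ∈ Finset.range (x + 1), u y) ^ (p - 1) *
        ∑ y ∈ Finset.range (x + 1), a y ^ p * v y * W y ^ s := by
    intro x
    have := Real.inner_le_weight_mul_Lp_of_nonneg (Finset.range (x+1)) hp.le u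
      (fun y => a y / u y) (fun y => (hupos y).le) (fun y => div_nonneg (ha y) (hupos y).le)
    have e1 : ∀ y, u y * (a y / u y) = a y := fun y => mul_div_cancel₀ _ (hupos y).ne'
    have e2 : ∀ y, u y * (a y / u y) ^ p = a y ^ p * v y * W y ^ s := by
      intro y
      rw [Real.div_rpow (ha y) (hupos y).le]
      have : u y ^ p = u y * (v y * W y ^ s)⁻¹ := by
        have h1 : u y ^ p = u y * u y ^ (p - 1) := by
          rw [Real.rpow_sub_one (hupos y).ne']
          field_simp [(hupos y).ne']
        rw [h1]
        congr 1
        simp only [hu, hw]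
        rw [Real.mul_rpow (Real.rpow_nonneg (hv y).le _) (Real.rpow_nonneg (hWpos y).le _),
          ← Real.rpow_mul (hv y).le, ← Real.rpow_mul (hWpos y).le,
          div_mul_cancel₀ _ hp1.ne', Real.rpow_neg_one, mul_inv, ← Real.rpow_neg (hWpos y).le]
        congr 2
        rw [hs]; field_simp; ring
      rw [this]
      have := (hupos y).ne'
      field_simp
    simp only [e1, e2] at this
    have hU : 0 ≤ ∑ y ∈ Finset.range (x + 1), u y := Finset.sum_nonneg (fun y _ => (hupos y).le)
    have hK : 0 ≤ ∑ y ∈ Finset.range (x + 1), a y ^ p * v y * W y ^ s :=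
      Finset.sum_nonneg (fun y _ => mul_nonneg (mul_nonneg (Real.rpow_nonneg (ha y) _) (hv y).le)
        (Real.rpow_nonneg (hWpos y).le _))
    calc _ ≤ _ := Real.rpow_le_rpow (Finset.sum_nonneg (fun y _ => ha y)) this hp0.le
      _ = _ := by
        rw [Real.mul_rpow (Real.rpow_nonneg hU _) (Real.rpow_nonneg hK _),
          ← Real.rpow_mul hU, ← Real.rpow_mul hK, inv_mul_cancel₀ hp0.ne', Real.rpow_one, ← hs, hsp]
  set D : ℕ → ℝ := fun y => a y ^ p * v y * W y ^ s with hD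
  have hDnn : ∀ y, 0 ≤ D y := fun y =>
    mul_nonneg (mul_nonneg (Real.rpow_nonneg (ha y) _) (hv y).le) (Real.rpow_nonneg (hWpos y).le _)
  set c : ℝ := (s⁻¹) ^ (p - 1) with hc
  have hcnn : 0 ≤ c := Real.rpow_nonneg (inv_nonneg.2 hs0.le) _
  have hBs : 0 ≤ B ^ s := Real.rpow_nonneg hB _
  have S4 : ∀ x < N, (∑ y ∈ Finset.range (x + 1), a y) ^ p * m x ≤
      c * B ^ s * ((m x * M x ^ (-s)) * ∑ y ∈ Finset.range (x + 1), D y) := by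
    intro x hx
    have hU : 0 ≤ ∑ y ∈ Finset.range (x + 1), u y := Finset.sum_nonneg (fun y _ => (hupos y).le)
    have h1 : (∑ y ∈ Finset.range (x + 1), u y) ^ (p - 1) ≤ c * (B ^ s * M x ^ (-s)) := by
      have h2 : ∑ y ∈ Finset.range (x + 1), u y ≤ s⁻¹ * W x ^ s := by
        rw [← div_eq_inv_mul, le_div_iff₀ hs0, mul_comm]; exact S1 x
      calc _ ≤ (s⁻¹ * W x ^ s) ^ (p - 1) := Real.rpow_le_rpow hU h2 hp1.le
        _ = c * (W x ^ (p - 1)) ^ s := by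
          rw [Real.mul_rpow (inv_nonneg.2 hs0.le) (Real.rpow_nonneg (hWpos x).le _),
            ← Real.rpow_mul (hWpos x).le, ← Real.rpow_mul (hWpos x).le, mul_comm s]
        _ ≤ c * (B / M x) ^ s := by
          refine mul_le_mul_of_nonneg_left ?_ hcnn
          refine Real.rpow_le_rpow (Real.rpow_nonneg (hWpos x).le _) ?_ hs0.le
          rw [le_div_iff₀ (hMpos x hx), mul_comm]
          exact H x hx
        _ = _ := by
          rw [Real.div_rpow hB (hMnn x), Real.rpow_neg (hMnn x), div_eq_mul_inv]
    calc _ ≤ ((∑ y ∈ Finset.range (x + 1), u y) ^ (p - 1) *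
        ∑ y ∈ Finset.range (x + 1), D y) * m x :=
          mul_le_mul_of_nonneg_right (S3 x) (hm x).le
      _ ≤ ((c * (B ^ s * M x ^ (-s))) * ∑ y ∈ Finset.range (x + 1), D y) * m x := by
          refine mul_le_mul_of_nonneg_right ?_ (hm x).le
          exact mul_le_mul_of_nonneg_right h1 (Finset.sum_nonneg (fun y _ => hDnn y))
      _ = _ := by ring
  have hconst : c * p = p ^ p / (p - 1) ^ (p - 1) := by
    have : s⁻¹ = p / (p - 1) := by rw [← hsp]; field_simp
    rw [hc, this, Real.div_rpow hp0.le hp1.le, Real.rpow_sub_one hp0.ne' p]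
    field_simp
  calc _ ≤ ∑ x ∈ Finset.range N,
        c * B ^ s * ((m x * M x ^ (-s)) * ∑ y ∈ Finset.range (x + 1), D y) :=
        Finset.sum_le_sum (fun x hx => S4 x (Finset.mem_range.1 hx))
    _ = c * B ^ s * ∑ y ∈ Finset.range N, D y * ∑ x ∈ Finset.Ico y N, m x * M x ^ (-s) := by
        rw [← Finset.mul_sum]
        congr 1
        simp_rw [Finset.mul_sum]
        rw [Finset.sum_comm' (t' := Finset.range N) (s' := fun y => Finset.Ico y N)]
        · refine Finset.sum_congr rfl fun y _ => Finset.sum_congr rfl fun x _ => by ring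
        · intro x y
          simp only [Finset.mem_range, Finset.mem_Ico]
          omega
    _ ≤ c * B ^ s * ∑ y ∈ Finset.range N, (p * B ^ p⁻¹) * (a y ^ p * v y) := by
        refine mul_le_mul_of_nonneg_left ?_ (mul_nonneg hcnn hBs)
        refine Finset.sum_le_sum fun y hy => ?_
        have hy := Finset.mem_range.1 hy
        have h1 : M y ^ p⁻¹ * W y ^ s ≤ B ^ p⁻¹ := by
          have : W y ^ s = (W y ^ (p - 1)) ^ p⁻¹ := by
            rw [← Real.rpow_mul (hWpos y).le]
            congr 1
            rw [hs]; field_simp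
          rw [this, ← Real.mul_rpow (hMnn y) (Real.rpow_nonneg (hWpos y).le _)]
          exact Real.rpow_le_rpow (mul_nonneg (hMnn y) (Real.rpow_nonneg (hWpos y).le _))
            (H y hy) hpi.le
        have hk : 0 ≤ a y ^ p * v y := mul_nonneg (Real.rpow_nonneg (ha y) _) (hv y).le
        calc _ ≤ D y * (p * M y ^ p⁻¹) := mul_le_mul_of_nonneg_left (S2 y hy) (hDnn y)
          _ = (a y ^ p * v y) * p * (M y ^ p⁻¹ * W y ^ s) := by simp only [hD]; ring
          _ ≤ (a y ^ p * v y) * p * B ^ p⁻¹ :=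
            mul_le_mul_of_nonneg_left h1 (mul_nonneg hk hp0.le)
          _ = _ := by ring
    _ = (c * p) * (B ^ s * B ^ p⁻¹) * ∑ y ∈ Finset.range N, (a y ^ p * v y) := by
        rw [← Finset.mul_sum]; ring
    _ = _ := by
        rw [hconst, ← Real.rpow_add_of_nonneg hB hs0.le hpi.le, show s + p⁻¹ = 1 by rw [hs]; ring,
          Real.rpow_one]

/-- Discrete Muckenhoupt criterion, sufficiency (Proposition 2.1, upper bound):
if `B¹_{μ,ν} < ∞` then the weighted Hardy inequality holds with constant
`p^p/(p-1)^{p-1} · B¹_{μ,ν}`. -/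
theorem stmt_0 (p : ℝ) (hp : 1 < p) (μ ν : ℕ → ℝ)
    (hμ : ∀ n, 1 ≤ n → 0 < μ n) (hν : ∀ n, 1 ≤ n → 0 < ν n)
    (B1 : ℝ≥0∞)
    (hB1 : B1 = ⨆ r : ℕ,
      (∑' x : ℕ, ENNReal.ofReal (μ (x + (r + 1)))) *
        (∑ x ∈ Finset.Icc 1 (r + 1), ENNReal.ofReal (ν x ^ (-1 / (p - 1)))) ^ (p - 1))
    (hB1fin : B1 ≠ ⊤)
    (f : ℕ → ℝ) (hf : (Function.support f).Finite) :
    ∑' x : ℕ, ENNReal.ofReal (|∑ y ∈ Finset.Icc 1 (x + 1), f y| ^ p * μ (x + 1)) ≤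
      ENNReal.ofReal (p ^ p / (p - 1) ^ (p - 1)) * B1 *
        ∑' x : ℕ, ENNReal.ofReal (|f (x + 1)| ^ p * ν (x + 1)) := by
  have hp0 : 0 < p := by linarith
  have hp1 : 0 < p - 1 := by linarith
  have hm : ∀ n, 0 < μ (n + 1) := fun n => hμ _ (by omega)
  have hv : ∀ n, 0 < ν (n + 1) := fun n => hν _ (by omega)
  have reidx : ∀ {α : Type} [AddCommMonoid α] (g : ℕ → α) (r : ℕ),
      ∑ x ∈ Finset.Icc 1 (r + 1), g x = ∑ x ∈ Finset.range (r + 1), g (x + 1) := by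
    intro α _ g r
    rw [Finset.range_eq_Ico, Finset.sum_Ico_add' g 0 (r+1) 1]
    rfl
  refine ENNReal.tsum_le_of_sum_range_le fun N => ?_
  have hcore := aux_core p hp (fun n => μ (n+1)) (fun n => ν (n+1)) (fun n => |f (n+1)|) hm hv
    (fun n => abs_nonneg _) B1.toReal ENNReal.toReal_nonneg N ?_
  · calc ∑ x ∈ Finset.range N, ENNReal.ofReal (|∑ y ∈ Finset.Icc 1 (x + 1), f y| ^ p * μ (x + 1))
        ≤ ∑ x ∈ Finset.range N,
          ENNReal.ofReal ((∑ y ∈ Finset.range (x + 1), |f (y + 1)|) ^ p * μ (x + 1)) := by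
          refine Finset.sum_le_sum fun x _ => ENNReal.ofReal_le_ofReal ?_
          refine mul_le_mul_of_nonneg_right ?_ (hm x).le
          refine Real.rpow_le_rpow (abs_nonneg _) ?_ hp0.le
          rw [reidx]
          exact Finset.abs_sum_le_sum_abs _ _
      _ = ENNReal.ofReal (∑ x ∈ Finset.range N,
          (∑ y ∈ Finset.range (x + 1), |f (y + 1)|) ^ p * μ (x + 1)) := by
          rw [ENNReal.ofReal_sum_of_nonneg]
          intro x _
          exact mul_nonneg (Real.rpow_nonneg (Finset.sum_nonneg fun y _ => abs_nonneg _) _) (hm x).le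
      _ ≤ _ := ENNReal.ofReal_le_ofReal hcore
      _ = ENNReal.ofReal (p ^ p / (p - 1) ^ (p - 1)) * B1 *
          ∑ x ∈ Finset.range N, ENNReal.ofReal (|f (x + 1)| ^ p * ν (x + 1)) := by
          rw [ENNReal.ofReal_mul (by positivity), ENNReal.ofReal_mul (by positivity),
            ENNReal.ofReal_toReal hB1fin, ENNReal.ofReal_sum_of_nonneg]
          intro x _
          exact mul_nonneg (Real.rpow_nonneg (abs_nonneg _) _) (hv x).le
      _ ≤ _ := by
          gcongr
          exact ENNReal.sum_le_tsum _
  · intro r hr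
    have hwn : ∀ x, 0 ≤ ν (x + 1) ^ (-1 / (p - 1)) := fun x => Real.rpow_nonneg (hv x).le _
    have hM : 0 ≤ ∑ x ∈ Finset.Ico r N, μ (x + 1) := Finset.sum_nonneg fun x _ => (hm x).le
    rw [← ENNReal.ofReal_le_iff_le_toReal hB1fin, ENNReal.ofReal_mul hM,
      ← ENNReal.ofReal_rpow_of_nonneg (Finset.sum_nonneg fun x _ => hwn x) hp1.le,
      ENNReal.ofReal_sum_of_nonneg (fun x _ => (hm x).le),
      ENNReal.ofReal_sum_of_nonneg (fun x _ => hwn x), hB1]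
    refine le_trans ?_ (le_iSup _ r)
    rw [reidx]
    gcongr
    rw [Finset.sum_Ico_eq_sum_range]
    refine le_trans (le_of_eq ?_) (ENNReal.sum_le_tsum (Finset.range (N - r)))
    refine Finset.sum_congr rfl fun x _ => ?_
    congr 2
    omega
end

section
/- Let p > 1, let μ, ν : {1,2,...} → (0,∞) be positive weights, and suppose C > 0 is a constant such that ∑_{x=1}^∞ |∑_{y=1}^x f(y)|^p μ(x) ≤ C · ∑_{x=1}^∞ |f(x)|^p ν(x) holds for every finitely supported f : {1,2,...} → ℝ. Then for every integer r ≥ 1, (∑_{x=r}^∞ μ(x)) · (∑_{x=1}^r ν(x)^{-1/(p-1)})^{p-1} ≤ C; in particular B¹_{μ,ν} ≤ C. -/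
open scoped ENNReal

/-- Discrete Muckenhoupt criterion, necessity (Proposition 2.1, lower bound):
if the weighted Hardy inequality holds with constant `C` for all finitely supported `f`,
then for every `r ≥ 1` the Muckenhoupt product is at most `C`; in particular
`B¹_{μ,ν} ≤ C`. -/
theorem stmt_1 (p : ℝ) (hp : 1 < p) (μ ν : ℕ → ℝ)
    (hμ : ∀ n, 1 ≤ n → 0 < μ n) (hν : ∀ n, 1 ≤ n → 0 < ν n)
    (C : ℝ) (hC : 0 < C)
    (hHardy : ∀ f : ℕ → ℝ, (Function.support f).Finite →
      ∑' x : ℕ, ENNReal.ofReal (|∑ y ∈ Finset.Icc 1 (x + 1), f y| ^ p * μ (x + 1)) ≤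
        ENNReal.ofReal C * ∑' x : ℕ, ENNReal.ofReal (|f (x + 1)| ^ p * ν (x + 1))) :
    (∀ r : ℕ,
      (∑' x : ℕ, ENNReal.ofReal (μ (x + (r + 1)))) *
        (∑ x ∈ Finset.Icc 1 (r + 1), ENNReal.ofReal (ν x ^ (-1 / (p - 1)))) ^ (p - 1) ≤
        ENNReal.ofReal C) ∧
    (⨆ r : ℕ,
      (∑' x : ℕ, ENNReal.ofReal (μ (x + (r + 1)))) *
        (∑ x ∈ Finset.Icc 1 (r + 1), ENNReal.ofReal (ν x ^ (-1 / (p - 1)))) ^ (p - 1)) ≤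
      ENNReal.ofReal C := by
  have key : ∀ r : ℕ,
      (∑' x : ℕ, ENNReal.ofReal (μ (x + (r + 1)))) *
        (∑ x ∈ Finset.Icc 1 (r + 1), ENNReal.ofReal (ν x ^ (-1 / (p - 1)))) ^ (p - 1) ≤
        ENNReal.ofReal C := by
    intro r
    have hp1 : 0 < p - 1 := by linarith
    set w : ℕ → ℝ := fun x => ν x ^ (-1 / (p - 1)) with hw
    have hwpos : ∀ n, 1 ≤ n → 0 < w n := fun n hn => Real.rpow_pos_of_pos (hν n hn) _
    have hwp : ∀ n, 1 ≤ n → w n ^ p * ν n = w n := by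
      intro n hn
      have h0 := hν n hn
      simp only [hw]
      rw [← Real.rpow_mul h0.le]
      nth_rewrite 2 [← Real.rpow_one (ν n)]
      rw [← Real.rpow_add h0]
      congr 1
      field_simp
      ring
    set S : ℝ := ∑ x ∈ Finset.Icc 1 (r + 1), w x with hS
    have hSpos : 0 < S := by
      apply Finset.sum_pos
      · intro i hi
        exact hwpos i (Finset.mem_Icc.1 hi).1
      · exact ⟨1, by simp⟩
    have hSE : ∑ x ∈ Finset.Icc 1 (r + 1), ENNReal.ofReal (w x) = ENNReal.ofReal S := by
      rw [hS, ENNReal.ofReal_sum_of_nonneg]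
      intro i hi
      exact (hwpos i (Finset.mem_Icc.1 hi).1).le
    have hSE' : ∑ x ∈ Finset.Icc 1 (r + 1), ENNReal.ofReal (ν x ^ (-1 / (p - 1)))
        = ENNReal.ofReal S := hSE
    rw [hSE']
    have H := hHardy (fun x => if x ∈ Finset.Icc 1 (r + 1) then w x else 0) (by
      apply (Finset.Icc 1 (r + 1)).finite_toSet.subset
      intro x hx
      by_contra h
      exact hx (if_neg h))
    have hR : ∑' x : ℕ, ENNReal.ofReal
        (|(if x + 1 ∈ Finset.Icc 1 (r + 1) then w (x + 1) else 0)| ^ p * ν (x + 1))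
        = ENNReal.ofReal S := by
      rw [tsum_eq_sum (s := Finset.range (r + 1)), ← hSE, Finset.range_eq_Ico,
        Finset.sum_Ico_add' (fun x => ENNReal.ofReal
          (|(if x ∈ Finset.Icc 1 (r + 1) then w x else 0)| ^ p * ν x)) 0 (r + 1) 1]
      · apply Finset.sum_congr
        · ext x
          simp only [Finset.mem_Ico, Finset.mem_Icc]
          omega
        · intro x hx
          have h1 := (Finset.mem_Icc.1 hx).1
          rw [if_pos hx, abs_of_pos (hwpos x h1), hwp x h1]
      · intro x hx
        rw [if_neg]
        · simp [Real.zero_rpow (by linarith : p ≠ 0)]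
        · simp only [Finset.mem_range, Finset.mem_Icc] at *
          omega
    rw [hR] at H
    have hL : ENNReal.ofReal (S ^ p) * ∑' x : ℕ, ENNReal.ofReal (μ (x + (r + 1))) ≤
        ENNReal.ofReal C * ENNReal.ofReal S := by
      refine le_trans ?_ H
      rw [← ENNReal.tsum_mul_left]
      refine le_trans (le_of_eq ?_) (ENNReal.tsum_comp_le_tsum_of_injective
        (add_left_injective r) _)
      apply tsum_congr
      intro x
      rw [← ENNReal.ofReal_mul (Real.rpow_nonneg hSpos.le _)]
      have : ∑ y ∈ Finset.Icc 1 (x + r + 1), (if y ∈ Finset.Icc 1 (r + 1) then w y else 0)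
          = S := by
        rw [← Finset.sum_filter, hS]
        apply Finset.sum_congr _ (fun _ _ => rfl)
        ext y
        simp only [Finset.mem_filter, Finset.mem_Icc]
        omega
      rw [add_assoc] at this
      simp only [add_assoc, this, abs_of_pos hSpos]
    have hS0 : ENNReal.ofReal S ≠ 0 := by simpa using hSpos
    rw [← ENNReal.mul_le_mul_iff_left hS0 ENNReal.ofReal_ne_top]
    refine le_trans (le_of_eq ?_) hL
    rw [ENNReal.ofReal_rpow_of_pos hSpos, mul_assoc, ← ENNReal.ofReal_mul (Real.rpow_nonneg hSpos.le _),
      mul_comm]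
    congr 2
    nth_rewrite 2 [← Real.rpow_one S]
    rw [← Real.rpow_add hSpos]
    congr 1
    ring
  exact ⟨key, iSup_le key⟩
end

section
/- Let p > 1 and let μ, ν : {1,2,...} → (0,∞) be positive weights such that B²_{μ,ν} := sup_{r≥1} (∑_{x=1}^r μ(x)) · (∑_{x=r+1}^∞ ν(x)^{-1/(p-1)})^{p-1} is finite. Then for every finitely supported function f : {1,2,...} → ℝ with ∑_{x=1}^∞ f(x) = 0, one has ∑_{x=1}^∞ |∑_{y=1}^x f(y)|^p μ(x) ≤ (p^p/(p-1)^{p-1}) · B²_{μ,ν} · ∑_{x=1}^∞ |f(x)|^p ν(x). -/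
open scoped ENNReal

lemma conc (a s t : ℝ) (ha : 0 < a) (ha1 : a ≤ 1) (hs : 0 ≤ s) (ht : 0 < t) :
    (t - s) * t ^ (a - 1) * a ≤ t ^ a - s ^ a := by
  have h := rpow_one_add_le_one_add_mul_self (s := s / t - 1)
    (by have : 0 ≤ s / t := by positivity
        linarith) ha.le ha1
  have e : 1 + (s / t - 1) = s / t := by ring
  rw [e, Real.div_rpow hs ht.le] at h
  have hta : 0 < t ^ a := Real.rpow_pos_of_pos ht a
  rw [div_le_iff₀ hta] at h
  rw [Real.rpow_sub_one ht.ne']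
  have : (t - s) * (t ^ a / t) * a = - (a * (s / t - 1) * t ^ a) := by field_simp; ring
  rw [this]; linarith

lemma core (p : ℝ) (hp : 1 < p) (m n t g : ℕ → ℝ) (B : ℝ) (N : ℕ)
    (hm : ∀ k, 0 < m k) (hn : ∀ k, 0 < n k) (ht : ∀ k, 0 < t k) (hg : ∀ k, 0 ≤ g k)
    (hB0 : 0 ≤ B)
    (htr : ∀ k, t k = n k ^ (-1 / (p - 1)) + t (k + 1))
    (hB : ∀ k, (∑ i ∈ Finset.range (k + 1), m i) * t k ^ (p - 1) ≤ B) :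
    ∑ k ∈ Finset.range N, (∑ j ∈ Finset.Ico k N, g j) ^ p * m k ≤
      p ^ p / (p - 1) ^ (p - 1) * B * ∑ j ∈ Finset.range N, g j ^ p * n j := by
  have hp0 : 0 < p := by linarith
  have hp1 : 0 < p - 1 := by linarith
  obtain ⟨a, ha⟩ : ∃ a, a = 1 - p⁻¹ := ⟨_, rfl⟩
  have hip : p⁻¹ < 1 := inv_lt_one_of_one_lt₀ hp
  have hip0 : 0 < p⁻¹ := by positivity
  have ha0 : 0 < a := by linarith
  have ha1 : a ≤ 1 := by linarith
  have hap : a * p = p - 1 := by rw [ha]; field_simp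
  set w : ℕ → ℝ := fun k => n k ^ (-1 / (p - 1)) with hw
  have hwp : ∀ k, 0 < w k := fun k => Real.rpow_pos_of_pos (hn k) _
  set W : ℕ → ℝ := fun k => w k * t k ^ (a - 1) with hW
  have hWp : ∀ k, 0 < W k := fun k => mul_pos (hwp k) (Real.rpow_pos_of_pos (ht k) _)
  set M : ℕ → ℝ := fun k => ∑ i ∈ Finset.range k, m i with hM
  have hMp : ∀ k, 0 < M (k + 1) := fun k =>
    Finset.sum_pos (fun i _ => hm i) (by simp)
  have hM0 : ∀ k, 0 ≤ M k := fun k => Finset.sum_nonneg (fun i _ => (hm i).le)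
  -- sum of W
  have hWs : ∀ k, k ≤ N → ∑ j ∈ Finset.Ico k N, W j ≤ a⁻¹ * t k ^ a := by
    intro k hk
    have h1 : ∑ j ∈ Finset.Ico k N, W j * a ≤ ∑ j ∈ Finset.Ico k N, (t j ^ a - t (j+1) ^ a) := by
      apply Finset.sum_le_sum
      intro j _
      have := conc a (t (j+1)) (t j) ha0 ha1 (ht _).le (ht _)
      have e : t j - t (j+1) = w j := by rw [htr j]; ring
      rwa [e] at this
    have h2 : ∑ j ∈ Finset.Ico k N, (t j ^ a - t (j+1) ^ a) = t k ^ a - t N ^ a := by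
      have := Finset.sum_Ico_sub (fun j => t j ^ a) hk
      rw [← neg_sub, ← this, ← Finset.sum_neg_distrib]
      exact Finset.sum_congr rfl (fun _ _ => by ring)
    rw [h2, ← Finset.sum_mul] at h1
    have h3 : 0 < t N ^ a := Real.rpow_pos_of_pos (ht _) _
    rw [inv_mul_eq_div, le_div_iff₀ ha0]
    linarith
  have hMs : ∀ k, ∑ i ∈ Finset.range k, m i * M (i + 1) ^ (p⁻¹ - 1) ≤ p * M k ^ p⁻¹ := by
    intro k
    have h1 : ∑ i ∈ Finset.range k, m i * M (i + 1) ^ (p⁻¹ - 1) * p⁻¹ ≤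
        ∑ i ∈ Finset.range k, (M (i+1) ^ p⁻¹ - M i ^ p⁻¹) := by
      apply Finset.sum_le_sum
      intro j _
      have := conc p⁻¹ (M j) (M (j+1)) hip0 hip.le (hM0 _) (hMp _)
      have e : M (j+1) - M j = m j := by simp [hM, Finset.sum_range_succ]
      rwa [e] at this
    have e0 : M 0 ^ p⁻¹ = 0 := by simp [hM, Real.zero_rpow hip0.ne']
    rw [Finset.sum_range_sub (fun i => M i ^ p⁻¹), ← Finset.sum_mul, e0, sub_zero,
      ← div_eq_mul_inv, div_le_iff₀ hp0] at h1
    linarith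
  set G : ℕ → ℝ := fun j => g j ^ p * n j * t j ^ a with hG
  have hG0 : ∀ j, 0 ≤ G j := fun j => by
    have := hg j; have := (hn j).le; have := (ht j).le
    positivity
  have hGW : ∀ j, W j * (g j / W j) ^ p = G j := by
    intro j
    rw [Real.div_rpow (hg j) (hWp j).le]
    have : W j / W j ^ p = n j * t j ^ a := by
      rw [← Real.rpow_one_sub' (hWp j).le (by linarith), hW]
      simp only
      rw [Real.mul_rpow (hwp j).le (Real.rpow_nonneg (ht j).le _), hw]
      simp only
      rw [← Real.rpow_mul (hn j).le, ← Real.rpow_mul (ht j).le]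
      have e1 : -1 / (p - 1) * (1 - p) = 1 := by field_simp; ring
      have e2 : (a - 1) * (1 - p) = a := by nlinarith
      rw [e1, e2, Real.rpow_one]
    have hGj : G j = g j ^ p * (n j * t j ^ a) := by simp only [hG]; ring
    rw [hGj, ← this]; ring
  have hold : ∀ k, k ≤ N → (∑ j ∈ Finset.Ico k N, g j) ^ p ≤
      (∑ j ∈ Finset.Ico k N, G j) * ((a⁻¹) ^ (p - 1) * (t k ^ (p - 1)) ^ a) := by
    intro k hk
    have h := Real.inner_le_weight_mul_Lp_of_nonneg (Finset.Ico k N) hp.le W (fun j => g j / W j)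
      (fun j => (hWp j).le) (fun j => div_nonneg (hg j) (hWp j).le)
    simp only [hGW] at h
    have e : ∑ j ∈ Finset.Ico k N, W j * (g j / W j) = ∑ j ∈ Finset.Ico k N, g j :=
      Finset.sum_congr rfl (fun j _ => by have := (hWp j).ne'; field_simp)
    rw [e, ← ha] at h
    have hW0 : 0 ≤ ∑ j ∈ Finset.Ico k N, W j := Finset.sum_nonneg (fun j _ => (hWp j).le)
    have hGs : 0 ≤ ∑ j ∈ Finset.Ico k N, G j := Finset.sum_nonneg (fun j _ => hG0 j)
    calc _ ≤ ((∑ j ∈ Finset.Ico k N, W j) ^ a * (∑ j ∈ Finset.Ico k N, G j) ^ p⁻¹) ^ p :=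
          Real.rpow_le_rpow (Finset.sum_nonneg (fun j _ => hg j)) h hp0.le
      _ = (∑ j ∈ Finset.Ico k N, W j) ^ (p - 1) * (∑ j ∈ Finset.Ico k N, G j) := by
          rw [Real.mul_rpow (by positivity) (by positivity), ← Real.rpow_mul hW0,
            Real.rpow_inv_rpow hGs hp0.ne', hap]
      _ ≤ (a⁻¹ * t k ^ a) ^ (p - 1) * (∑ j ∈ Finset.Ico k N, G j) := by
          gcongr
          exact hWs k hk
      _ = _ := by
          rw [Real.mul_rpow (by positivity) (Real.rpow_nonneg (ht k).le _), ← Real.rpow_mul (ht k).le,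
            ← Real.rpow_mul (ht k).le, mul_comm a (p-1)]
          ring
  have hC : p ^ p / (p - 1) ^ (p - 1) = a⁻¹ ^ (p - 1) * p := by
    have : a⁻¹ = p / (p - 1) := by rw [← hap]; field_simp
    rw [this, Real.div_rpow hp0.le hp1.le, Real.rpow_sub_one hp0.ne']
    field_simp
  have htB : ∀ k, (t k ^ (p - 1)) ^ a ≤ B ^ a * M (k + 1) ^ (p⁻¹ - 1) := by
    intro k
    have h0 : 0 ≤ t k ^ (p - 1) := Real.rpow_nonneg (ht k).le _
    have e : p⁻¹ - 1 = -a := by rw [ha]; ring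
    rw [e, Real.rpow_neg (hMp k).le, ← div_eq_mul_inv, ← Real.div_rpow hB0 (hMp k).le]
    apply Real.rpow_le_rpow h0 _ ha0.le
    rw [le_div_iff₀ (hMp k), mul_comm]
    exact hB k
  have hlast : ∀ j, t j ^ a * M (j + 1) ^ p⁻¹ ≤ B ^ p⁻¹ := by
    intro j
    have e : t j ^ a = (t j ^ (p - 1)) ^ p⁻¹ := by
      rw [← Real.rpow_mul (ht j).le, ← hap]; congr 1; field_simp
    rw [e, mul_comm, ← Real.mul_rpow (hMp j).le (Real.rpow_nonneg (ht j).le _)]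
    apply Real.rpow_le_rpow (mul_nonneg (hMp j).le (Real.rpow_nonneg (ht j).le _)) (hB j) hip0.le
  have hBB : B ^ a * B ^ p⁻¹ = B := by
    rw [← Real.rpow_add_of_nonneg hB0 ha0.le hip0.le, ha]; simp
  calc _ ≤ ∑ k ∈ Finset.range N, ∑ j ∈ Finset.Ico k N,
          G j * (a⁻¹ ^ (p - 1) * (B ^ a * M (k + 1) ^ (p⁻¹ - 1))) * m k := by
        apply Finset.sum_le_sum
        intro k hk
        rw [← Finset.sum_mul, ← Finset.sum_mul]
        apply mul_le_mul_of_nonneg_right _ (hm k).le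
        refine (hold k (Finset.mem_range.1 hk).le).trans ?_
        apply mul_le_mul_of_nonneg_left _ (Finset.sum_nonneg (fun j _ => hG0 j))
        apply mul_le_mul_of_nonneg_left (htB k) (by positivity)
    _ = ∑ j ∈ Finset.range N, G j * (a⁻¹ ^ (p - 1) * B ^ a) *
          ∑ k ∈ Finset.range (j + 1), m k * M (k + 1) ^ (p⁻¹ - 1) := by
        rw [Finset.range_eq_Ico, Finset.sum_Ico_Ico_comm]
        apply Finset.sum_congr rfl
        intro j _
        rw [Finset.mul_sum, Finset.range_eq_Ico]
        exact Finset.sum_congr rfl (fun _ _ => by ring)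
    _ ≤ ∑ j ∈ Finset.range N, G j * (a⁻¹ ^ (p - 1) * B ^ a) * (p * M (j + 1) ^ p⁻¹) := by
        apply Finset.sum_le_sum
        intro j _
        apply mul_le_mul_of_nonneg_left (hMs _) (mul_nonneg (hG0 j) (by positivity))
    _ = ∑ j ∈ Finset.range N, (g j ^ p * n j * (a⁻¹ ^ (p - 1) * p * B ^ a)) *
          (t j ^ a * M (j + 1) ^ p⁻¹) := by
        exact Finset.sum_congr rfl (fun _ _ => by simp only [hG]; ring)
    _ ≤ ∑ j ∈ Finset.range N, (g j ^ p * n j * (a⁻¹ ^ (p - 1) * p * B ^ a)) * B ^ p⁻¹ := by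
        apply Finset.sum_le_sum
        intro j _
        apply mul_le_mul_of_nonneg_left (hlast j)
        have := hg j; have := (hn j).le
        positivity
    _ = _ := by
        rw [hC, Finset.mul_sum]
        refine Finset.sum_congr rfl (fun j _ => ?_)
        calc _ = g j ^ p * n j * (a⁻¹ ^ (p - 1) * p) * (B ^ a * B ^ p⁻¹) := by ring
          _ = _ := by rw [hBB]; ring

theorem stmt_2 (p : ℝ) (hp : 1 < p) (μ ν : ℕ → ℝ)
    (hμ : ∀ n, 1 ≤ n → 0 < μ n) (hν : ∀ n, 1 ≤ n → 0 < ν n)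
    (B2 : ℝ≥0∞)
    (hB2 : B2 = ⨆ r : ℕ,
      (∑ x ∈ Finset.Icc 1 (r + 1), ENNReal.ofReal (μ x)) *
        (∑' x : ℕ, ENNReal.ofReal (ν (x + (r + 2)) ^ (-1 / (p - 1)))) ^ (p - 1))
    (hB2fin : B2 ≠ ⊤)
    (f : ℕ → ℝ) (hf : (Function.support f).Finite)
    (hsum : ∑' x : ℕ, f (x + 1) = 0) :
    ∑' x : ℕ, ENNReal.ofReal (|∑ y ∈ Finset.Icc 1 (x + 1), f y| ^ p * μ (x + 1)) ≤
      ENNReal.ofReal (p ^ p / (p - 1) ^ (p - 1)) * B2 *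
        ∑' x : ℕ, ENNReal.ofReal (|f (x + 1)| ^ p * ν (x + 1)) := by
  have hp0 : 0 < p := by linarith
  have hp1 : 0 < p - 1 := by linarith
  have hIcc : ∀ (h : ℕ → ℝ) (k : ℕ),
      ∑ y ∈ Finset.Icc 1 (k + 1), h y = ∑ i ∈ Finset.range (k + 1), h (i + 1) := by
    intro h k
    rw [Finset.range_eq_Ico, Finset.sum_Ico_add' h 0 (k + 1) 1]
    rfl
  have hle : ∀ r : ℕ, (∑ x ∈ Finset.Icc 1 (r + 1), ENNReal.ofReal (μ x)) *
        (∑' x : ℕ, ENNReal.ofReal (ν (x + (r + 2)) ^ (-1 / (p - 1)))) ^ (p - 1) ≤ B2 := by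
    intro r
    rw [hB2]
    exact le_iSup (fun r : ℕ => (∑ x ∈ Finset.Icc 1 (r + 1), ENNReal.ofReal (μ x)) *
        (∑' x : ℕ, ENNReal.ofReal (ν (x + (r + 2)) ^ (-1 / (p - 1)))) ^ (p - 1)) r
  have hw : ∀ k x : ℕ, 0 < ν (x + (k + 2)) ^ (-1 / (p - 1)) := fun k x =>
    Real.rpow_pos_of_pos (hν _ (by omega)) _
  have hS : Summable (fun x : ℕ => ν (x + 2) ^ (-1 / (p - 1))) := by
    have hne : (∑' x : ℕ, ENNReal.ofReal (ν (x + (0 + 2)) ^ (-1 / (p - 1)))) ≠ ⊤ := by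
      intro htop
      have h := hle 0
      rw [htop, ENNReal.top_rpow_of_pos hp1, ENNReal.mul_top] at h
      · exact hB2fin (top_le_iff.1 h)
      · simpa using hμ 1 le_rfl
    have := ENNReal.summable_toReal hne
    refine this.congr (fun x => ?_)
    rw [ENNReal.toReal_ofReal (hw 0 x).le]
  have hSk : ∀ k : ℕ, Summable (fun x : ℕ => ν (x + (k + 2)) ^ (-1 / (p - 1))) := by
    intro k
    have := (summable_nat_add_iff k).2 hS
    simpa [add_assoc] using this
  obtain ⟨K, hK⟩ := hf.bddAbove
  have hfK : ∀ x, K < x → f x = 0 := by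
    intro x hx
    by_contra h
    exact absurd (hK (Function.mem_support.2 h)) (by omega)
  have h0 : ∑ x ∈ Finset.range (K + 1), f (x + 1) = 0 := by
    rw [← hsum]; symm
    apply tsum_eq_sum
    intro x hx
    exact hfK _ (by simp at hx; omega)
  have hF : ∀ k, k ≤ K → |∑ y ∈ Finset.Icc 1 (k + 1), f y| ≤
      ∑ j ∈ Finset.Ico k K, |f (j + 2)| := by
    intro k hk
    rw [hIcc]
    have h := Finset.sum_range_add_sum_Ico (fun x => f (x + 1)) (show k + 1 ≤ K + 1 by omega)
    rw [h0, ← Finset.sum_Ico_add' (fun x => f (x + 1)) k K 1] at h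
    rw [eq_neg_of_add_eq_zero_left h, abs_neg]
    exact Finset.abs_sum_le_sum_abs _ _
  have hF0 : ∀ k, K ≤ k → ∑ y ∈ Finset.Icc 1 (k + 1), f y = 0 := by
    intro k hk
    rw [hIcc, ← h0]; symm
    apply Finset.sum_subset
    · intro x; simp; omega
    · intro x _ hx
      exact hfK _ (by simp at hx; omega)
  have hc := core p hp (fun k => μ (k + 1)) (fun k => ν (k + 2))
    (fun k => ∑' x : ℕ, ν (x + (k + 2)) ^ (-1 / (p - 1))) (fun j => |f (j + 2)|) B2.toReal K
    (fun k => hμ _ (by omega)) (fun k => hν _ (by omega))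
    (fun k => (hSk k).tsum_pos (fun x => (hw k x).le) 0 (hw k 0))
    (fun k => abs_nonneg _) ENNReal.toReal_nonneg
    (by
      intro k
      rw [(hSk k).tsum_eq_zero_add]
      congr 1
      · simp
      · refine tsum_congr (fun x => ?_)
        congr 2; ring)
    (by
      intro k
      have h := hle k
      rw [← ENNReal.ofReal_tsum_of_nonneg (fun x => (hw k x).le) (hSk k),
        ← ENNReal.ofReal_sum_of_nonneg (fun i hi => (hμ i (Finset.mem_Icc.1 hi).1).le),
        ENNReal.ofReal_rpow_of_nonneg (tsum_nonneg (fun x => (hw k x).le)) hp1.le,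
        ← ENNReal.ofReal_mul (Finset.sum_nonneg (fun i hi => (hμ i (Finset.mem_Icc.1 hi).1).le)),
        hIcc] at h
      exact (ENNReal.ofReal_le_iff_le_toReal hB2fin).1 h)
  have hnn : ∀ x : ℕ, 0 ≤ |f (x + 1)| ^ p * ν (x + 1) := fun x =>
    mul_nonneg (Real.rpow_nonneg (abs_nonneg _) _) (hν _ (by omega)).le
  have hC0 : 0 ≤ p ^ p / (p - 1) ^ (p - 1) := by positivity
  calc _ = ∑ k ∈ Finset.range K,
        ENNReal.ofReal (|∑ y ∈ Finset.Icc 1 (k + 1), f y| ^ p * μ (k + 1)) := by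
        apply tsum_eq_sum
        intro k hk
        rw [hF0 k (by simpa using hk)]
        simp [Real.zero_rpow hp0.ne']
    _ ≤ ∑ k ∈ Finset.range K,
        ENNReal.ofReal ((∑ j ∈ Finset.Ico k K, |f (j + 2)|) ^ p * μ (k + 1)) := by
        apply Finset.sum_le_sum
        intro k hk
        apply ENNReal.ofReal_le_ofReal
        apply mul_le_mul_of_nonneg_right _ (hμ _ (by omega)).le
        exact Real.rpow_le_rpow (abs_nonneg _) (hF k (Finset.mem_range.1 hk).le) hp0.le
    _ = ENNReal.ofReal (∑ k ∈ Finset.range K,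
        (∑ j ∈ Finset.Ico k K, |f (j + 2)|) ^ p * μ (k + 1)) := by
        rw [ENNReal.ofReal_sum_of_nonneg]
        intro k _
        exact mul_nonneg (Real.rpow_nonneg (Finset.sum_nonneg (fun _ _ => abs_nonneg _)) _)
          (hμ _ (by omega)).le
    _ ≤ ENNReal.ofReal (p ^ p / (p - 1) ^ (p - 1) * B2.toReal *
          ∑ j ∈ Finset.range K, |f (j + 2)| ^ p * ν (j + 2)) := ENNReal.ofReal_le_ofReal hc
    _ = ENNReal.ofReal (p ^ p / (p - 1) ^ (p - 1)) * B2 *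
          ∑ j ∈ Finset.range K, ENNReal.ofReal (|f (j + 2)| ^ p * ν (j + 2)) := by
        rw [ENNReal.ofReal_mul (by positivity), ENNReal.ofReal_mul hC0,
          ENNReal.ofReal_toReal hB2fin, ENNReal.ofReal_sum_of_nonneg (fun j _ => hnn (j + 1))]
    _ ≤ _ := by
        gcongr
        refine le_trans ?_ (ENNReal.sum_le_tsum (Finset.range (K + 1)))
        rw [Finset.sum_range_succ']
        exact le_self_add
end

section
/- Let p > 1 and let α be a real number with α ≠ p - 1. Then there exists a constant A > 0 such that for every finitely supported sequence u : ℕ → ℝ with u_0 = 0, ∑_{n=1}^∞ |u_n - u_{n-1}|^p n^α ≥ A · ∑_{n=1}^∞ |u_n|^p n^{α-p}. -/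
theorem aux_bern (p a b : ℝ) (hp : 1 < p) (ha : 0 ≤ a) (hb : 0 ≤ b) :
    a ^ p - b ^ p ≤ p * a ^ (p - 1) * |a - b| := by
  rcases ha.eq_or_lt with rfl | ha
  · rw [Real.zero_rpow (by linarith), Real.zero_rpow (by linarith)]
    have := Real.rpow_nonneg hb p
    linarith
  · have h := one_add_mul_self_le_rpow_one_add (s := b / a - 1)
      (by have : 0 ≤ b / a := by positivity
          linarith) hp.le
    have e : 1 + (b / a - 1) = b / a := by ring
    rw [e, Real.div_rpow hb ha.le, le_div_iff₀ (by positivity)] at h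
    have e2 : a ^ p = a ^ (p - 1) * a := by
      rw [← Real.rpow_add_one ha.ne']; congr 1; ring
    have e3 : (1 + p * (b / a - 1)) * a ^ p = a ^ p - p * a ^ (p - 1) * (a - b) := by
      rw [e2]; field_simp; ring
    have h4 : p * a ^ (p - 1) * (a - b) ≤ p * a ^ (p - 1) * |a - b| :=
      mul_le_mul_of_nonneg_left (le_abs_self _) (by positivity)
    linarith

theorem aux_young0 (p ε : ℝ) (hp : 1 < p) (hε : 0 < ε) : ∃ K : ℝ, 0 < K ∧
    ∀ a b d x : ℝ, 0 ≤ a → 0 ≤ b → |a - b| ≤ d → 0 < x →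
      (a ^ p - b ^ p) * x ≤ ε * a ^ p + K * (d ^ p * x ^ p) := by
  have hp0 : 0 < p := by linarith
  obtain ⟨δ, hδ, hδε⟩ : ∃ δ : ℝ, 0 < δ ∧ p * δ = ε := ⟨ε / p, by positivity, by field_simp⟩
  refine ⟨p * (1 / δ) ^ (p - 1), by positivity, ?_⟩
  intro a b d x ha hb hd hx
  have hd0 : 0 ≤ d := (abs_nonneg _).trans hd
  have h1 : (a ^ p - b ^ p) * x ≤ p * a ^ (p - 1) * (d * x) := by
    have := aux_bern p a b hp ha hb
    have h2 : p * a ^ (p - 1) * |a - b| ≤ p * a ^ (p - 1) * d :=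
      mul_le_mul_of_nonneg_left hd (by positivity)
    calc _ ≤ (p * a ^ (p - 1) * d) * x := mul_le_mul_of_nonneg_right (by linarith) hx.le
      _ = _ := by ring
  have e2 : ∀ y : ℝ, 0 ≤ y → y ^ p = y ^ (p - 1) * y := by
    intro y hy
    rw [← Real.rpow_add_one' hy (by linarith)]; congr 1; ring
  rw [← Real.mul_rpow hd0 hx.le]
  have hz : 0 ≤ d * x := by positivity
  generalize d * x = z at *
  rcases le_total z (δ * a) with h | h
  · have : p * a ^ (p - 1) * z ≤ p * a ^ (p - 1) * (δ * a) :=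
      mul_le_mul_of_nonneg_left h (by positivity)
    have e : p * a ^ (p - 1) * (δ * a) = ε * a ^ p := by rw [e2 a ha, ← hδε]; ring
    have : 0 ≤ p * (1 / δ) ^ (p - 1) * z ^ p := by positivity
    linarith
  · have h3 : a ≤ 1 / δ * z := by
      rw [one_div, ← div_eq_inv_mul, le_div_iff₀ hδ]; linarith
    have h4 : a ^ (p - 1) ≤ (1 / δ) ^ (p - 1) * z ^ (p - 1) := by
      rw [← Real.mul_rpow (by positivity) hz]
      exact Real.rpow_le_rpow ha h3 (by linarith)
    have h5 : p * a ^ (p - 1) * z ≤ p * ((1 / δ) ^ (p - 1) * z ^ (p - 1)) * z := by gcongr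
    have e : p * ((1 / δ) ^ (p - 1) * z ^ (p - 1)) * z = p * (1 / δ) ^ (p - 1) * z ^ p := by
      rw [e2 z hz]; ring
    have : 0 ≤ ε * a ^ p := by positivity
    linarith

theorem aux_young (p α ε : ℝ) (hp : 1 < p) (hε : 0 < ε) : ∃ K : ℝ, 0 < K ∧
    ∀ a b d x : ℝ, 0 ≤ a → 0 ≤ b → |a - b| ≤ d → 0 < x →
      (a ^ p - b ^ p) * x ^ (α - p + 1) ≤
        ε * (a ^ p * x ^ (α - p)) + K * (d ^ p * x ^ α) := by
  obtain ⟨K, hK, h⟩ := aux_young0 p ε hp hε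
  refine ⟨K, hK, fun a b d x ha hb hd hx => ?_⟩
  have h1 := mul_le_mul_of_nonneg_right (h a b d x ha hb hd hx)
    (Real.rpow_nonneg hx.le (α - p))
  have e1 : x ^ (α - p + 1) = x ^ (α - p) * x := Real.rpow_add_one hx.ne' _
  have e2 : x ^ α = x ^ p * x ^ (α - p) := by
    rw [← Real.rpow_add hx]; congr 1; ring
  rw [e1, e2]
  linarith

theorem aux_pow (b x : ℝ) (hb : 0 < b) (hx : 0 ≤ x) (hx1 : x ≤ 1) :
    min 1 b * (1 - x) ≤ 1 - x ^ b := by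
  rcases le_total 1 b with h | h
  · rw [min_eq_left h]
    have : x ^ b ≤ x ^ (1:ℝ) := by
      rcases hx.eq_or_lt with rfl | hx
      · rw [Real.zero_rpow hb.ne', Real.zero_rpow one_ne_zero]
      · exact Real.rpow_le_rpow_of_exponent_ge hx hx1 h
    rw [Real.rpow_one] at this
    linarith
  · rw [min_eq_right h]
    have := rpow_one_add_le_one_add_mul_self (s := x - 1) (by linarith) hb.le h
    rw [show 1 + (x - 1) = x by ring] at this
    linarith

theorem aux_pos (b x : ℝ) (hb : 0 < b) (hx : 1 ≤ x) :
    min 1 b * x ^ (b - 1) ≤ x ^ b - (x - 1) ^ b := by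
  have h0 : 0 < x := by linarith
  have h := aux_pow b ((x - 1) / x) hb (div_nonneg (by linarith) h0.le)
    (by rw [div_le_one h0]; linarith)
  rw [Real.div_rpow (by linarith) h0.le] at h
  have h1 := mul_le_mul_of_nonneg_right h (Real.rpow_nonneg h0.le b)
  have : 0 < x ^ b := by positivity
  have e : (1 - (x - 1) ^ b / x ^ b) * x ^ b = x ^ b - (x - 1) ^ b := by field_simp
  have e2 : min 1 b * (1 - (x - 1) / x) * x ^ b = min 1 b * x ^ (b - 1) := by
    rw [Real.rpow_sub_one h0.ne']; field_simp; ring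
  linarith

theorem aux_neg (b x : ℝ) (hb : b < 0) (hx : 1 ≤ x) :
    min 1 (-b) / 2 * x ^ (b - 1) ≤ x ^ b - (x + 1) ^ b := by
  have h0 : 0 < x := by linarith
  have h := aux_pow (-b) (x / (x + 1)) (by linarith) (by positivity)
    (by rw [div_le_one (by linarith)]; linarith)
  rw [Real.div_rpow h0.le (by linarith), Real.rpow_neg h0.le, Real.rpow_neg (by linarith)] at h
  have h1 := mul_le_mul_of_nonneg_right h (Real.rpow_nonneg h0.le b)
  have p1 : 0 < x ^ b := by positivity
  have p2 : 0 < (x + 1) ^ b := by positivity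
  have e : (1 - (x ^ b)⁻¹ / ((x + 1) ^ b)⁻¹) * x ^ b = x ^ b - (x + 1) ^ b := by field_simp
  have hm : 0 < min 1 (-b) := lt_min one_pos (by linarith)
  have e2 : min 1 (-b) / 2 * x ^ (b - 1) ≤ min 1 (-b) * (1 - x / (x + 1)) * x ^ b := by
    rw [Real.rpow_sub_one h0.ne']
    have : 1 / (2 * x) ≤ 1 - x / (x + 1) := by
      rw [show 1 - x / (x + 1) = 1 / (x + 1) by field_simp; ring]
      exact one_div_le_one_div_of_le (by linarith) (by linarith)
    calc _ = min 1 (-b) * (1 / (2 * x)) * x ^ b := by field_simp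
      _ ≤ _ := by gcongr
  linarith

/-- Corollary 2.4 (non-critical case): for `p > 1` and `α ≠ p - 1` there is a constant
`A > 0` such that the discrete weighted `p`-Hardy inequality with weights `n^α` holds. -/
theorem stmt_3 (p α : ℝ) (hp : 1 < p) (hα : α ≠ p - 1) :
    ∃ A : ℝ, 0 < A ∧ ∀ u : ℕ → ℝ, (Function.support u).Finite → u 0 = 0 →
      ∑' n : ℕ, |u (n + 1) - u n| ^ p * ((n : ℝ) + 1) ^ α ≥
        A * ∑' n : ℕ, |u (n + 1)| ^ p * ((n : ℝ) + 1) ^ (α - p) := by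
  have hp0 : p ≠ 0 := by linarith
  -- it suffices to bound partial sums
  suffices H : ∃ c K : ℝ, 0 < c ∧ 0 < K ∧ ∀ u : ℕ → ℝ, u 0 = 0 → ∀ N : ℕ,
      (∀ n, N ≤ n → u n = 0) →
      c * ∑ n ∈ Finset.range N, |u (n + 1)| ^ p * ((n : ℝ) + 1) ^ (α - p) ≤
      K * ∑ n ∈ Finset.range (N + 1), |u (n + 1) - u n| ^ p * ((n : ℝ) + 1) ^ α by
    obtain ⟨c, K, hc, hK, H⟩ := H
    refine ⟨c / K, by positivity, fun u hu h0 => ?_⟩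
    obtain ⟨M, hM⟩ := hu.bddAbove
    have hN : ∀ n, M + 1 ≤ n → u n = 0 := by
      intro n hn
      by_contra h
      have := hM (show n ∈ Function.support u from h)
      omega
    have := H u h0 (M + 1) hN
    rw [tsum_eq_sum (s := Finset.range (M + 1 + 1)), tsum_eq_sum (s := Finset.range (M + 1)),
      ge_iff_le, div_mul_eq_mul_div, div_le_iff₀ hK]
    · linarith
    · intro n hn
      simp only [Finset.mem_range, not_lt] at hn
      rw [hN (n + 1) (by omega)]
      simp [Real.zero_rpow hp0]
    · intro n hn
      simp only [Finset.mem_range, not_lt] at hn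
      rw [hN (n + 1) (by omega), hN n (by omega)]
      simp [Real.zero_rpow hp0]
  rcases lt_or_gt_of_ne hα with hb | hb
  · -- b < 0
    have hb' : α - p + 1 < 0 := by linarith
    obtain ⟨c, hc, hcx⟩ : ∃ c : ℝ, 0 < c ∧ ∀ x : ℝ, 1 ≤ x →
        c * x ^ (α - p) ≤ x ^ (α - p + 1) - (x + 1) ^ (α - p + 1) := by
      refine ⟨_, ?_, fun x hx => by
        have := aux_neg _ x hb' hx
        rwa [add_sub_cancel_right] at this⟩
      have : 0 < min 1 (-(α - p + 1)) := lt_min one_pos (by linarith)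
      positivity
    obtain ⟨K, hK, hY⟩ := aux_young p α (c / 2) hp (by positivity)
    refine ⟨c / 2, K, by positivity, hK, fun u h0 N hN => ?_⟩
    let G : ℕ → ℝ := fun n => |u n| ^ p * ((n : ℝ) + 1) ^ (α - p + 1)
    have key : ∀ n : ℕ, c / 2 * (|u (n + 1)| ^ p * ((n : ℝ) + 1) ^ (α - p)) ≤
        K * (|u (n + 1) - u n| ^ p * ((n : ℝ) + 1) ^ α) - (G (n + 1) - G n) := by
      intro n
      have hn : (0:ℝ) ≤ n := n.cast_nonneg
      have h1 := hY |u (n + 1)| |u n| |u (n + 1) - u n| (n + 1) (abs_nonneg _) (abs_nonneg _)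
        (abs_abs_sub_abs_le_abs_sub _ _) (by positivity)
      have h2 := mul_le_mul_of_nonneg_left (hcx (n + 1) (by linarith))
        (Real.rpow_nonneg (abs_nonneg (u (n + 1))) p)
      simp only [G]
      push_cast
      linarith
    have hs := Finset.sum_le_sum (s := Finset.range (N + 1)) (fun n _ => key n)
    rw [Finset.sum_sub_distrib, Finset.sum_range_sub, ← Finset.mul_sum, ← Finset.mul_sum] at hs
    have g0 : G 0 = 0 := by simp [G, h0, Real.zero_rpow hp0]
    have g1 : G (N + 1) = 0 := by simp [G, hN (N + 1) (by omega), Real.zero_rpow hp0]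
    rw [Finset.sum_range_succ (fun n => |u (n + 1)| ^ p * ((n : ℝ) + 1) ^ (α - p)),
      hN (N + 1) (by omega), abs_zero, Real.zero_rpow hp0, zero_mul, add_zero, g0, g1] at hs
    linarith
  · have hb' : 0 < α - p + 1 := by linarith
    obtain ⟨c, hc, hcx⟩ : ∃ c : ℝ, 0 < c ∧ ∀ x : ℝ, 1 ≤ x →
        c * x ^ (α - p) ≤ x ^ (α - p + 1) - (x - 1) ^ (α - p + 1) := by
      refine ⟨_, ?_, fun x hx => by
        have := aux_pos _ x hb' hx
        rwa [add_sub_cancel_right] at this⟩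
      exact lt_min one_pos hb'
    obtain ⟨K, hK, hY⟩ := aux_young p α (c / 2) hp (by positivity)
    refine ⟨c / 2, K, by positivity, hK, fun u h0 N hN => ?_⟩
    let G : ℕ → ℝ := fun n => |u (n + 1)| ^ p * (n : ℝ) ^ (α - p + 1)
    let D : ℕ → ℝ := fun n => |u (n + 1) - u n| ^ p * ((n : ℝ) + 1) ^ α
    have key : ∀ n : ℕ, c / 2 * (|u (n + 1)| ^ p * ((n : ℝ) + 1) ^ (α - p)) ≤
        K * D (n + 1) + (G (n + 1) - G n) := by
      intro n
      have hn : (0:ℝ) ≤ n := n.cast_nonneg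
      have h1 := hY |u (n + 1)| |u (n + 2)| |u (n + 2) - u (n + 1)| (n + 1)
        (abs_nonneg _) (abs_nonneg _)
        (by rw [abs_sub_comm (u (n + 2))]; exact abs_abs_sub_abs_le_abs_sub _ _) (by positivity)
      have h2 := mul_le_mul_of_nonneg_left (hcx (n + 1) (by linarith))
        (Real.rpow_nonneg (abs_nonneg (u (n + 1))) p)
      rw [add_sub_cancel_right] at h2
      have h3 : ((n : ℝ) + 1) ^ α ≤ ((n : ℝ) + 1 + 1) ^ α :=
        Real.rpow_le_rpow (by positivity) (by linarith) (by linarith)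
      have h4 : K * (|u (n + 2) - u (n + 1)| ^ p * ((n : ℝ) + 1) ^ α) ≤
        K * (|u (n + 2) - u (n + 1)| ^ p * ((n : ℝ) + 1 + 1) ^ α) := by gcongr
      simp only [G, D]
      push_cast
      rw [show n + 1 + 1 = n + 2 from rfl]
      linarith
    have hs := Finset.sum_le_sum (s := Finset.range N) (fun n _ => key n)
    rw [Finset.sum_add_distrib, Finset.sum_range_sub, ← Finset.mul_sum, ← Finset.mul_sum] at hs
    have g0 : G 0 = 0 := by simp [G, Real.zero_rpow hb'.ne']
    have g1 : G N = 0 := by simp [G, hN (N + 1) (by omega), Real.zero_rpow hp0]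
    have d0 : 0 ≤ D 0 := by simp only [D]; positivity
    have hd : ∑ n ∈ Finset.range (N + 1), D n = ∑ n ∈ Finset.range N, D (n + 1) + D 0 :=
      Finset.sum_range_succ' _ _
    change _ ≤ K * ∑ n ∈ Finset.range (N + 1), D n
    rw [hd, mul_add]
    have := mul_nonneg hK.le d0
    linarith
end

section
/- Let p > 1. There exists a constant A > 0 such that for every finitely supported sequence u : ℕ → ℝ with u_0 = 0, ∑_{n=1}^∞ |u_n - u_{n-1}|^p n^{p-1} ≥ A · ( |u_1|^p + ∑_{n=2}^∞ |u_n|^p / (n (log n)^p) ). -/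
lemma aux_conv (p : ℝ) (hp : 1 < p) (a b d : ℝ) (ha : 0 ≤ a) (hb : 0 ≤ b) (hd : 0 ≤ d)
    (h : a - b ≤ d) : a ^ p - b ^ p ≤ p * a ^ (p - 1) * d := by
  rcases ha.eq_or_lt with h0 | h0
  · subst h0
    rw [Real.zero_rpow (by linarith), Real.zero_rpow (by linarith)]
    have := Real.rpow_nonneg hb p
    simp; exact this
  · have h1 := one_add_mul_self_le_rpow_one_add (s := b / a - 1) (p := p)
      (by have : 0 ≤ b / a := by positivity
          linarith) hp.le
    rw [show 1 + (b / a - 1) = b / a by ring, Real.div_rpow hb ha, le_div_iff₀ (by positivity)] at h1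
    have e : a ^ p = a ^ (p - 1) * a := by
      rw [← Real.rpow_add_one h0.ne']; ring_nf
    have h2 : (1 + p * (b / a - 1)) * a ^ p = a ^ p + p * a ^ (p - 1) * (b - a) := by
      rw [e]; field_simp
    have h3 : p * a ^ (p - 1) * (a - b) ≤ p * a ^ (p - 1) * d := by gcongr
    nlinarith

lemma aux_key (p : ℝ) (hp : 1 < p) (e : ℝ) (he : 0 < e) (a b d L m : ℝ) (ha : 0 ≤ a) (hb : 0 ≤ b)
    (hd : 0 ≤ d) (h : a - b ≤ d) (hL : 0 < L) (hm : 0 < m) :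
    (a ^ p - b ^ p) * L ^ (-(p - 1)) ≤
      p * e * (a ^ p / (m * L ^ p)) + p * e ^ (-(p - 1)) * (d ^ p * m ^ (p - 1)) := by
  have h1 := aux_conv p hp a b d ha hb hd h
  have hR : 0 ≤ p * e ^ (-(p - 1)) * (d ^ p * m ^ (p - 1)) := by positivity
  have hR' : 0 ≤ p * e * (a ^ p / (m * L ^ p)) := by positivity
  have eL : L ^ p = L ^ (p - 1) * L := by
    rw [← Real.rpow_add_one hL.ne']; ring_nf
  have h2 : (a ^ p - b ^ p) * L ^ (-(p - 1)) ≤ p * a ^ (p - 1) * d * L ^ (-(p - 1)) := by gcongr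
  refine h2.trans ?_
  rcases ha.eq_or_lt with h0 | h0
  · subst h0
    rw [Real.zero_rpow (by linarith : p - 1 ≠ 0)]
    linarith
  have ea : a ^ p = a ^ (p - 1) * a := by
    rw [← Real.rpow_add_one h0.ne']; ring_nf
  rcases le_or_gt d (e * a / (m * L)) with hc | hc
  · have : p * a ^ (p - 1) * d * L ^ (-(p - 1)) ≤
        p * a ^ (p - 1) * (e * a / (m * L)) * L ^ (-(p - 1)) := by gcongr
    have e2 : p * a ^ (p - 1) * (e * a / (m * L)) * L ^ (-(p - 1)) =
        p * e * (a ^ p / (m * L ^ p)) := by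
      rw [ea, eL, Real.rpow_neg hL.le]; field_simp
    linarith
  · have hd0 : 0 < d := lt_trans (by positivity) hc
    have hc' : a ≤ m * L * d / e := by
      rw [le_div_iff₀ he]
      rw [div_lt_iff₀ (by positivity)] at hc
      linarith
    have h3 : a ^ (p - 1) ≤ (m * L * d / e) ^ (p - 1) :=
      Real.rpow_le_rpow ha hc' (by linarith)
    have h4 : p * a ^ (p - 1) * d * L ^ (-(p - 1)) ≤
        p * (m * L * d / e) ^ (p - 1) * d * L ^ (-(p - 1)) := by gcongr
    have ed : d ^ p = d ^ (p - 1) * d := by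
      rw [← Real.rpow_add_one hd0.ne']; ring_nf
    have e2 : p * (m * L * d / e) ^ (p - 1) * d * L ^ (-(p - 1)) =
        p * e ^ (-(p - 1)) * (d ^ p * m ^ (p - 1)) := by
      rw [ed, Real.rpow_neg hL.le, Real.rpow_neg he.le, Real.div_rpow (by positivity) he.le,
        Real.mul_rpow (by positivity) hd, Real.mul_rpow hm.le hL.le]
      field_simp
    linarith

lemma aux_phi (p : ℝ) (hp : 1 < p) (t s m : ℝ) (ht : 0 < t) (hm : 0 < m) (hts : t + 1 / (2 * m) ≤ s)
    (hs : s ≤ 2 * t) :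
    (p - 1) / (2 * 2 ^ p) * (1 / (m * t ^ p)) ≤ t ^ (-(p - 1)) - s ^ (-(p - 1)) := by
  have hm' : 0 < 1 / (2 * m) := by positivity
  have hs0 : 0 < s := by linarith
  -- s^(p-1) * t^(-(p-1)) ≥ 1 + (p-1)(1 - t/s)
  have h1 : 1 + (p - 1) * (1 - t / s) ≤ (t / s) ^ (-(p - 1)) := by
    rw [Real.rpow_def_of_pos (by positivity)]
    have a1 := Real.add_one_le_exp (Real.log (t / s) * -(p - 1))
    have a2 := Real.log_le_sub_one_of_pos (x := t / s) (by positivity)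
    nlinarith
  have es : s ^ p = s ^ (p - 1) * s := by
    rw [← Real.rpow_add_one hs0.ne']; ring_nf
  have h2 : (p - 1) * (s - t) / s ^ p ≤ t ^ (-(p - 1)) - s ^ (-(p - 1)) := by
    rw [Real.div_rpow ht.le hs0.le, le_div_iff₀ (by positivity)] at h1
    have : (1 + (p - 1) * (1 - t / s)) * s ^ (-(p - 1)) =
        s ^ (-(p - 1)) + (p - 1) * (s - t) / s ^ p := by
      rw [es, Real.rpow_neg hs0.le]; field_simp
    linarith
  refine le_trans ?_ h2
  have h3 : s ^ p ≤ 2 ^ p * t ^ p := by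
    rw [← Real.mul_rpow (by norm_num) ht.le]
    exact Real.rpow_le_rpow hs0.le hs (by linarith)
  have h4 : (p - 1) / (2 * 2 ^ p) * (1 / (m * t ^ p)) =
      (p - 1) * (1 / (2 * m)) / (2 ^ p * t ^ p) := by
    field_simp
  rw [h4]
  have : 0 < p - 1 := by linarith
  have : 1 / (2 * m) ≤ s - t := by linarith
  have : 0 ≤ (p - 1) * (s - t) := mul_nonneg (by linarith) (by linarith)
  gcongr

/-- Corollary 2.4 (critical case `α = p - 1`): a discrete Leray-type inequality with
weight `𝟙_{1}(n) + n⁻¹ log⁻ᵖ(n) 𝟙_{[2,∞)}(n)` holds for some constant `A > 0`. -/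
theorem stmt_4 (p : ℝ) (hp : 1 < p) :
    ∃ A : ℝ, 0 < A ∧ ∀ u : ℕ → ℝ, (Function.support u).Finite → u 0 = 0 →
      ∑' n : ℕ, |u (n + 1) - u n| ^ p * ((n : ℝ) + 1) ^ (p - 1) ≥
        A * (|u 1| ^ p +
          ∑' n : ℕ, |u (n + 2)| ^ p / (((n : ℝ) + 2) * Real.log ((n : ℝ) + 2) ^ p)) := by
  have hp0 : p ≠ 0 := by linarith
  have hp1 : 0 < p - 1 := by linarith
  obtain ⟨c, hc⟩ : ∃ c, c = (p - 1) / (2 * (2:ℝ) ^ p) := ⟨_, rfl⟩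
  have hc0 : 0 < c := by rw [hc]; positivity
  obtain ⟨C, hC⟩ : ∃ C, C = p * (c / (2 * p)) ^ (-(p - 1)) := ⟨_, rfl⟩
  have hC0 : 0 < C := by rw [hC]; positivity
  have hl2 : 0 < Real.log 2 := Real.log_pos (by norm_num)
  obtain ⟨K, hK⟩ : ∃ K, K = 1 + 1 / Real.log 2 := ⟨_, rfl⟩
  have hK0 : 0 < K := by rw [hK]; positivity
  refine ⟨1 / (1 + K ^ p * (C * (2 / c))), by positivity, ?_⟩
  intro u hu hu0
  obtain ⟨N, hN⟩ : ∃ N : ℕ, ∀ n, N ≤ n → u n = 0 := by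
    obtain ⟨N, hN⟩ := hu.bddAbove
    refine ⟨N + 1, fun n hn => ?_⟩
    by_contra h
    have := hN (Function.mem_support.mpr h)
    omega
  rw [tsum_eq_sum (s := Finset.range (N + 1)) (by
      intro n hn
      simp only [Finset.mem_range, not_lt] at hn
      rw [hN n (by omega), hN (n + 1) (by omega)]
      simp [Real.zero_rpow hp0]),
    tsum_eq_sum (s := Finset.range N) (by
      intro n hn
      simp only [Finset.mem_range, not_lt] at hn
      rw [hN (n + 2) (by omega)]
      simp [Real.zero_rpow hp0])]
  set D := ∑ n ∈ Finset.range (N + 1), |u (n + 1) - u n| ^ p * ((n : ℝ) + 1) ^ (p - 1) with hD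
  have hu1 : |u 1| ^ p ≤ D := by
    have := Finset.single_le_sum
      (f := fun n : ℕ => |u (n + 1) - u n| ^ p * ((n : ℝ) + 1) ^ (p - 1))
      (s := Finset.range (N + 1)) (fun i _ => by positivity) (Finset.mem_range.mpr (Nat.succ_pos N))
    simpa [hu0] using this
  let L : ℕ → ℝ := fun n => 1 + Real.log ((n : ℝ) + 1)
  have hL : ∀ n, 1 ≤ L n := fun n => by
    have : 0 ≤ Real.log ((n : ℝ) + 1) := Real.log_nonneg (by linarith [n.cast_nonneg (α := ℝ)])
    simp only [L]; linarith
  let G : ℕ → ℝ := fun n => |u (n + 1)| ^ p / (((n : ℝ) + 1) * L n ^ p)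
  let F : ℕ → ℝ := fun n => |u n| ^ p * L n ^ (-(p - 1))
  have hG0 : ∀ n, 0 ≤ G n := fun n => by
    have := hL n
    simp only [G]; positivity
  have step : ∀ n : ℕ, c / 2 * G n ≤
      C * (|u (n + 1) - u n| ^ p * ((n : ℝ) + 1) ^ (p - 1)) + (F n - F (n + 1)) := by
    intro n
    have hm : (0:ℝ) < (n:ℝ) + 1 := by positivity
    have hLn := hL n
    have k1 := aux_key p hp (c / (2 * p)) (by positivity) |u (n+1)| |u n| |u (n+1) - u n|
      (L n) ((n:ℝ)+1) (abs_nonneg _) (abs_nonneg _) (abs_nonneg _)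
      (abs_sub_abs_le_abs_sub _ _) (by linarith) hm
    have hdiff : L (n+1) - L n = Real.log (((n:ℝ)+2)/((n:ℝ)+1)) := by
      rw [Real.log_div (by positivity) (by positivity)]
      simp only [L]; push_cast; ring_nf
    have k2 := aux_phi p hp (L n) (L (n+1)) ((n:ℝ)+1) (by linarith) hm
      (by
        have := Real.one_sub_inv_le_log_of_pos (x := ((n:ℝ)+2)/((n:ℝ)+1)) (by positivity)
        have h2 : 1 / (2 * ((n:ℝ)+1)) ≤ 1 - (((n:ℝ)+2)/((n:ℝ)+1))⁻¹ := by
          have : 1 - (((n:ℝ)+2)/((n:ℝ)+1))⁻¹ = 1 / ((n:ℝ)+2) := by field_simp; ring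
          rw [this]
          apply one_div_le_one_div_of_le (by positivity)
          linarith [n.cast_nonneg (α := ℝ)]
        linarith)
      (by
        have := Real.log_le_sub_one_of_pos (x := ((n:ℝ)+2)/((n:ℝ)+1)) (by positivity)
        have h2 : ((n:ℝ)+2)/((n:ℝ)+1) ≤ 2 := by
          rw [div_le_iff₀ hm]; linarith [n.cast_nonneg (α := ℝ)]
        linarith)
    rw [← hc] at k2
    rw [← hC, show p * (c / (2 * p)) = c / 2 by field_simp] at k1
    have k3 := mul_le_mul_of_nonneg_left k2 (by positivity : 0 ≤ |u (n+1)| ^ p)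
    have k4 : |u (n+1)| ^ p * (c * (1 / (((n:ℝ)+1) * L n ^ p))) = c * G n := by
      simp only [G]; ring
    rw [k4] at k3
    simp only [F]
    change _ ≤ c / 2 * G n + _ at k1
    linarith
  have hsum := Finset.sum_le_sum (fun n (_ : n ∈ Finset.range (N + 1)) => step n)
  rw [Finset.sum_add_distrib, Finset.sum_range_sub', ← Finset.mul_sum, ← Finset.mul_sum, ← hD] at hsum
  have hF0 : F 0 = 0 := by simp [F, hu0, Real.zero_rpow hp0]
  have hFN : 0 ≤ F (N + 1) := by
    have := hL (N + 1)
    simp only [F]; positivity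
  have hGD : ∑ n ∈ Finset.range (N + 1), G n ≤ C * (2 / c) * D := by
    have : ∑ n ∈ Finset.range (N + 1), G n = (2 / c) * (c / 2 * ∑ n ∈ Finset.range (N + 1), G n) := by
      field_simp
    rw [this]
    calc _ ≤ 2 / c * (C * D) :=
          mul_le_mul_of_nonneg_left (by linarith) (by positivity)
      _ = _ := by ring
  have hS : ∑ n ∈ Finset.range N, |u (n + 2)| ^ p / (((n : ℝ) + 2) * Real.log ((n : ℝ) + 2) ^ p)
      ≤ K ^ p * ∑ n ∈ Finset.range (N + 1), G n := by
    rw [Finset.sum_range_succ', mul_add, Finset.mul_sum]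
    have : 0 ≤ K ^ p * G 0 := mul_nonneg (by positivity) (hG0 0)
    refine le_trans (Finset.sum_le_sum fun n _ => ?_) (le_add_of_nonneg_right this)
    have e : ((n + 1 : ℕ) : ℝ) + 1 = (n : ℝ) + 2 := by push_cast; ring
    have hL1 := hL (n + 1)
    simp only [G, e]
    have hlog : Real.log 2 ≤ Real.log ((n:ℝ) + 2) :=
      Real.log_le_log (by norm_num) (by linarith [n.cast_nonneg (α := ℝ)])
    have hlp : 0 < Real.log ((n:ℝ) + 2) := by linarith
    have hLK : L (n + 1) ≤ K * Real.log ((n:ℝ) + 2) := by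
      simp only [L, e, hK]
      have : 1 ≤ 1 / Real.log 2 * Real.log ((n:ℝ) + 2) := by
        rw [one_div, inv_mul_eq_div, le_div_iff₀ hl2]; linarith
      linarith
    have h5 : L (n + 1) ^ p ≤ K ^ p * Real.log ((n:ℝ) + 2) ^ p := by
      rw [← Real.mul_rpow hK0.le hlp.le]
      exact Real.rpow_le_rpow (by linarith) hLK (by linarith)
    have hLp : 0 < L (n + 1) ^ p := Real.rpow_pos_of_pos (by linarith) _
    rw [show n + 1 + 1 = n + 2 from rfl, ← mul_div_assoc, div_le_div_iff₀ (by positivity) (by positivity)]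
    calc _ = |u (n + 2)| ^ p * ((n:ℝ) + 2) * L (n + 1) ^ p := by ring
      _ ≤ |u (n + 2)| ^ p * ((n:ℝ) + 2) * (K ^ p * Real.log ((n:ℝ) + 2) ^ p) := by gcongr
      _ = _ := by ring
  have hS2 := hS.trans (mul_le_mul_of_nonneg_left hGD (by positivity : 0 ≤ K ^ p))
  rw [ge_iff_le, one_div, inv_mul_eq_div, div_le_iff₀ (by positivity)]
  linarith
end

section
/- Let p > 1. There is no constant A > 0 such that the inequality ∑_{n=1}^∞ |u_n - u_{n-1}|^p n^{p-1} ≥ A · ∑_{n=1}^∞ |u_n|^p / n holds for every finitely supported sequence u : ℕ → ℝ with u_0 = 0. -/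
/-- Corollary 2.4 (non-existence in the critical case): there is no constant `A > 0` such
that `∑ |u_n - u_{n-1}|^p n^{p-1} ≥ A ∑ |u_n|^p / n` for all finitely supported `u`
with `u 0 = 0`. -/
theorem stmt_5 (p : ℝ) (hp : 1 < p) :
    ¬ ∃ A : ℝ, 0 < A ∧ ∀ u : ℕ → ℝ, (Function.support u).Finite → u 0 = 0 →
      ∑' n : ℕ, |u (n + 1) - u n| ^ p * ((n : ℝ) + 1) ^ (p - 1) ≥
        A * ∑' n : ℕ, |u (n + 1)| ^ p / ((n : ℝ) + 1) := by
  rintro ⟨A, hA, h⟩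
  obtain ⟨H, hH⟩ : ∃ H : ℕ → ℝ, H = fun n => ∑ i ∈ Finset.range n, 1 / ((i : ℝ) + 1) := ⟨_, rfl⟩
  have hT : Filter.Tendsto H Filter.atTop Filter.atTop := by
    rw [hH]; exact Real.tendsto_sum_range_one_div_nat_succ_atTop
  have hsucc : ∀ n, H (n + 1) = H n + 1 / ((n : ℝ) + 1) := by
    intro n; rw [hH]; exact Finset.sum_range_succ _ _
  have hmono : Monotone H := by
    refine monotone_nat_of_le_succ fun n => ?_
    rw [hsucc]
    have : (0 : ℝ) ≤ 1 / ((n : ℝ) + 1) := by positivity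
    linarith
  have hH0 : H 0 = 0 := by rw [hH]; simp
  have hpos : ∀ n, 0 ≤ H n := fun n => hH0 ▸ hmono (Nat.zero_le n)
  set c : ℝ := (1 / 2 : ℝ) ^ p with hc
  have hcpos : 0 < c := by positivity
  obtain ⟨M, hM⟩ := (hT.eventually_ge_atTop (3 / (A * c))).exists
  obtain ⟨N, hN1, hNM, hN2⟩ := ((hT.eventually_ge_atTop 1).and
    ((Filter.eventually_ge_atTop M).and (hT.eventually_ge_atTop (2 * H M)))).exists
  set K := H N with hK
  have hKpos : 0 < K := by linarith
  obtain ⟨u, hu⟩ : ∃ u : ℕ → ℝ, u = fun n => if n = 0 then 0 else if n ≤ N then 1 - H n / K else 0 :=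
    ⟨_, rfl⟩
  have hu0 : u 0 = 0 := by simp [hu]
  have huN : ∀ n, N ≤ n → u n = 0 := by
    intro n hn
    rcases hn.eq_or_lt with rfl | hn
    · simp only [hu, le_refl, if_true, ← hK, div_self hKpos.ne']; simp
    · simp [hu, hn.not_ge]
  have hun : ∀ n, n ≠ 0 → n ≤ N → u n = 1 - H n / K := by
    intro n h0 hn; simp [hu, h0, hn]
  have hfin : (Function.support u).Finite := by
    refine (Set.finite_Iio N).subset fun n hn => ?_
    by_contra hh
    exact hn (huN n (by simpa using hh))
  have key := h u hfin hu0
  have hp0 : p ≠ 0 := by linarith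
  rw [tsum_eq_sum (s := Finset.range N), tsum_eq_sum (s := Finset.range N)] at key
  rotate_left
  · intro n hn
    have hn : N ≤ n := by simpa using hn
    rw [huN (n + 1) (by omega)]; simp [Real.zero_rpow hp0]
  · intro n hn
    have hn : N ≤ n := by simpa using hn
    rw [huN (n + 1) (by omega), huN n hn]; simp [Real.zero_rpow hp0]
  have hL : ∑ n ∈ Finset.range N, |u (n + 1) - u n| ^ p * ((n : ℝ) + 1) ^ (p - 1) ≤ 2 := by
    have hterm : ∀ n ∈ Finset.range N, |u (n + 1) - u n| ^ p * ((n : ℝ) + 1) ^ (p - 1) ≤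
        (if n = 0 then 1 else 0) + K⁻¹ * (1 / ((n : ℝ) + 1)) := by
      intro n hn
      have hn : n < N := by simpa using hn
      by_cases h0 : n = 0
      · subst h0
        rw [hu0, hun _ (by simp) (by omega)]
        have h1 : H (0 + 1) = 1 := by rw [hsucc, hH0]; simp
        rw [h1]
        have h2 : 1 / K ≤ 1 := by rw [div_le_one hKpos]; exact hN1
        have h3 : 0 < 1 / K := by positivity
        have h4 : |1 - 1 / K - 0| ^ p ≤ 1 := by
          apply Real.rpow_le_one (abs_nonneg _) _ (by linarith)
          rw [abs_le]; constructor <;> linarith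
        have h5 : ((0 : ℕ) : ℝ) + 1 = 1 := by norm_num
        rw [h5, Real.one_rpow, mul_one, if_pos rfl, div_one, mul_one]
        rw [one_div] at h3
        linarith
      · rw [hun _ (by simp) (by omega), hun _ h0 hn.le, hsucc]
        have hx : (0 : ℝ) < (n : ℝ) + 1 := by positivity
        have e : |1 - (H n + 1 / ((n : ℝ) + 1)) / K - (1 - H n / K)| = (K * ((n : ℝ) + 1))⁻¹ := by
          rw [show 1 - (H n + 1 / ((n : ℝ) + 1)) / K - (1 - H n / K) = -(K * ((n : ℝ) + 1))⁻¹ by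
            field_simp; ring]
          rw [abs_neg, abs_of_pos (by positivity)]
        rw [e, Real.inv_rpow (by positivity), Real.mul_rpow hKpos.le hx.le,
          Real.rpow_sub_one hx.ne']
        have hKp : K ≤ K ^ p := by
          simpa using Real.rpow_le_rpow_of_exponent_le hN1 hp.le
        have hxp : 0 < ((n : ℝ) + 1) ^ p := by positivity
        have : (K ^ p * ((n : ℝ) + 1) ^ p)⁻¹ * (((n : ℝ) + 1) ^ p / ((n : ℝ) + 1))
          = (K ^ p)⁻¹ * (1 / ((n : ℝ) + 1)) := by field_simp
        rw [this, if_neg h0, zero_add]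
        gcongr
    refine (Finset.sum_le_sum hterm).trans ?_
    rw [Finset.sum_add_distrib, ← Finset.mul_sum]
    have e1 : ∑ n ∈ Finset.range N, 1 / ((n : ℝ) + 1) = K := by rw [hK, hH]
    rw [e1, inv_mul_cancel₀ hKpos.ne', Finset.sum_ite_eq']
    split_ifs <;> norm_num
  have hR : c * H M ≤ ∑ n ∈ Finset.range N, |u (n + 1)| ^ p / ((n : ℝ) + 1) := by
    have e1 : H M = ∑ n ∈ Finset.range M, 1 / ((n : ℝ) + 1) := by rw [hH]
    rw [e1, Finset.mul_sum]
    refine le_trans (Finset.sum_le_sum fun n hn => ?_)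
      (Finset.sum_le_sum_of_subset_of_nonneg (Finset.range_mono hNM) fun n _ _ => by positivity)
    have hn : n < M := by simpa using hn
    rw [hun _ (by simp) (by omega), mul_one_div]
    have h1 : H (n + 1) / K ≤ 1 / 2 := by
      rw [div_le_iff₀ hKpos]
      have := hmono (show n + 1 ≤ M by omega)
      linarith
    have h2 : (1 / 2 : ℝ) ≤ |1 - H (n + 1) / K| := le_trans (by linarith) (le_abs_self _)
    rw [hc]
    gcongr
  have h3 : 3 ≤ A * (c * H M) := by
    rw [div_le_iff₀ (by positivity)] at hM
    linarith
  have := mul_le_mul_of_nonneg_left hR hA.le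
  linarith
end

section
/- Let γ be a real number with 1 < γ < 2, and for each positive integer n let S_n = ∑_{k=1}^n k^{γ-1}. Then for every integer n ≥ 2, S_{n-1} + S_n < 2 n^γ / γ. -/
lemma aux_ineq (γ : ℝ) (hγ1 : 1 < γ) (hγ2 : γ < 2) (x : ℝ) (hx : 0 < x) :
    x ^ (γ - 1) + (x + 1) ^ (γ - 1) ≤ 2 * (x + 1) ^ γ / γ - 2 * x ^ γ / γ := by
  have hd : ∀ s : ℝ, 0 < s → HasDerivAt
      (fun s : ℝ => 2 * s ^ γ / γ - (s - x) * (x ^ (γ - 1) + s ^ (γ - 1)))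
      (2 * (γ * s ^ (γ - 1)) / γ - (1 * (x ^ (γ - 1) + s ^ (γ - 1)) +
        (s - x) * ((γ - 1) * s ^ (γ - 1 - 1)))) s := by
    intro s hs
    have h1 := Real.hasDerivAt_rpow_const (x := s) (p := γ) (Or.inl hs.ne')
    have h2 := Real.hasDerivAt_rpow_const (x := s) (p := γ - 1) (Or.inl hs.ne')
    exact ((h1.const_mul 2).div_const γ).sub
      (((hasDerivAt_id s).sub_const x).mul (h2.const_add (x ^ (γ - 1))))
  have hm : MonotoneOn
      (fun s : ℝ => 2 * s ^ γ / γ - (s - x) * (x ^ (γ - 1) + s ^ (γ - 1))) (Set.Ici x) := by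
    apply monotoneOn_of_deriv_nonneg (convex_Ici x)
    · intro s hs
      exact (hd s (lt_of_lt_of_le hx hs)).continuousAt.continuousWithinAt
    · intro s hs
      rw [interior_Ici] at hs
      exact (hd s (lt_trans hx hs)).differentiableAt.differentiableWithinAt
    · intro s hs
      rw [interior_Ici] at hs
      have hs0 : 0 < s := lt_trans hx hs
      rw [(hd s hs0).deriv]
      have hb := rpow_one_add_le_one_add_mul_self (s := x / s - 1) (p := γ - 1)
        (by have := div_pos hx hs0; linarith) (by linarith) (by linarith)
      rw [show 1 + (x / s - 1) = x / s by ring, Real.div_rpow hx.le hs0.le,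
        div_le_iff₀ (Real.rpow_pos_of_pos hs0 _)] at hb
      have e : s ^ (γ - 1 - 1) = s ^ (γ - 1) / s := Real.rpow_sub_one hs0.ne' _
      have e2 : 2 * (γ * s ^ (γ - 1)) / γ = 2 * s ^ (γ - 1) := by
        field_simp
      rw [e, e2]
      have e3 : (s - x) * ((γ - 1) * (s ^ (γ - 1) / s))
          = (γ - 1) * s ^ (γ - 1) * (1 - x / s) := by
        field_simp
      rw [e3]
      linarith
  have := hm (Set.mem_Ici.2 le_rfl) (Set.mem_Ici.2 (by linarith : x ≤ x + 1)) (by linarith)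
  simp only [sub_self, zero_mul, add_sub_cancel_left, one_mul, sub_zero] at this
  linarith

/-- Proposition 4.1 (i): for `1 < γ < 2` and `S_n = ∑_{k=1}^n k^{γ-1}`, one has
`S_{n-1} + S_n < 2 n^γ / γ` for all `n ≥ 2`. -/
theorem stmt_7 (γ : ℝ) (hγ1 : 1 < γ) (hγ2 : γ < 2)
    (S : ℕ → ℝ) (hS : ∀ n, S n = ∑ k ∈ Finset.Icc 1 n, (k : ℝ) ^ (γ - 1)) :
    ∀ n : ℕ, 2 ≤ n → S (n - 1) + S n < 2 * (n : ℝ) ^ γ / γ := by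
  have hrec : ∀ n, S (n + 1) = S n + ((n : ℝ) + 1) ^ (γ - 1) := by
    intro n
    rw [hS, hS, Finset.sum_Icc_succ_top (by omega)]
    push_cast
    rfl
  have key : ∀ n : ℕ, S n + S (n + 1) < 2 * ((n : ℝ) + 1) ^ γ / γ := by
    intro n
    induction n with
    | zero =>
      rw [hrec 0, hS 0]
      simp
      rw [lt_div_iff₀ (by linarith)]
      linarith
    | succ m ih =>
      have h := aux_ineq γ hγ1 hγ2 ((m : ℝ) + 1) (by positivity)
      have h1 := hrec m
      have h2 := hrec (m + 1)
      push_cast at h2 ⊢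
      linarith
  intro n hn
  obtain ⟨m, rfl⟩ : ∃ m, n = m + 1 := ⟨n - 1, by omega⟩
  have := key m
  push_cast
  simpa using this
end

section
/- Let γ > 0 be a real number, and for each positive integer n let S_n = ∑_{k=1}^n k^{γ-1}. Then for every integer n ≥ 2, S_{n-1} · S_n < n^{2γ} / γ². -/
theorem aux_sinh (c s : ℝ) (hc : 1 ≤ c) (hs : 0 ≤ s) : c * Real.sinh s ≤ Real.sinh (c * s) := by
  have hd : ∀ x : ℝ, HasDerivAt (fun s => Real.sinh (c * s) - c * Real.sinh s)
      (Real.cosh (c * x) * (c * 1) - c * Real.cosh x) x := by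
    intro x
    exact ((hasDerivAt_id x).const_mul c).sinh.sub ((Real.hasDerivAt_sinh x).const_mul c)
  have hm : MonotoneOn (fun s => Real.sinh (c * s) - c * Real.sinh s) (Set.Ici 0) := by
    apply monotoneOn_of_deriv_nonneg (convex_Ici 0)
    · exact fun x _ => (hd x).continuousAt.continuousWithinAt
    · exact fun x _ => (hd x).differentiableAt.differentiableWithinAt
    · intro x hx
      rw [interior_Ici] at hx
      have hx : 0 < x := hx
      rw [(hd x).deriv]
      have : Real.cosh x ≤ Real.cosh (c * x) := by
        rw [Real.cosh_le_cosh, abs_of_pos hx, abs_of_pos (by positivity)]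
        nlinarith
      nlinarith
  have := hm (Set.mem_Ici.2 le_rfl) (Set.mem_Ici.2 hs) hs
  simp at this
  exact this

theorem aux_log (n : ℝ) (hn : 0 < n) :
    Real.arsinh (1 / n) + Real.arsinh (1 / (n + 1)) ≤ 2 * Real.log ((n + 1) / n) := by
  have h1 : (0:ℝ) < 1 / n := by positivity
  have h2 : (0:ℝ) < 1 / (n + 1) := by positivity
  have key : ∀ x : ℝ, 0 < x → Real.sqrt (1 + (1 / x) ^ 2) = Real.sqrt (x ^ 2 + 1) / x := by
    intro x hx
    rw [show 1 + (1 / x) ^ 2 = (x ^ 2 + 1) / x ^ 2 by field_simp,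
      Real.sqrt_div (by positivity), Real.sqrt_sq hx.le]
  unfold Real.arsinh
  rw [← Real.log_mul (by positivity) (by positivity), key n hn, key (n+1) (by positivity)]
  rw [show (2:ℝ) * Real.log ((n + 1) / n) = Real.log (((n + 1) / n) ^ 2) by
    rw [Real.log_pow]; norm_num]
  apply Real.log_le_log (by positivity)
  set a := Real.sqrt (n ^ 2 + 1) with ha
  set b := Real.sqrt ((n + 1) ^ 2 + 1) with hb
  have ha2 : a ^ 2 = n ^ 2 + 1 := Real.sq_sqrt (by positivity)
  have hb2 : b ^ 2 = (n + 1) ^ 2 + 1 := Real.sq_sqrt (by positivity)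
  have ha0 : 0 < a := Real.sqrt_pos.2 (by positivity)
  have hb0 : 0 < b := Real.sqrt_pos.2 (by positivity)
  have e1 : 2 * n * a ≤ 2 * n ^ 2 + 1 := by
    apply le_of_sq_le_sq _ (by positivity)
    rw [mul_pow, ha2]; nlinarith
  have e2 : n + n * a + (n + 1) ≤ (n + 1) * b := by
    apply le_of_sq_le_sq _ (by positivity)
    rw [mul_pow, hb2]
    have : (n + n * a + (n + 1)) ^ 2
      = (2*n+1)^2 + (2 * n + 1) * (2 * n * a) + n ^ 2 * a ^ 2 := by ring
    rw [this, ha2]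
    nlinarith [mul_le_mul_of_nonneg_left e1 (by positivity : (0:ℝ) ≤ 2 * n + 1)]
  have e3 : (1 + a) * (1 + b) * n ≤ (n + 1) ^ 3 := by
    have h3 : (n + 1) * ((b - 1) * (b + 1)) = (n + 1) ^ 3 := by
      have : (b - 1) * (b + 1) = b ^ 2 - 1 := by ring
      rw [this, hb2]; ring
    have : (1 + a) * n * (b + 1) ≤ (n + 1) * (b - 1) * (b + 1) :=
      mul_le_mul_of_nonneg_right (by linarith) (by linarith)
    linarith
  rw [show (1 / n + a / n) * (1 / (n + 1) + b / (n + 1)) = ((1 + a) * (1 + b)) / (n * (n + 1)) by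
    field_simp, div_pow, div_le_div_iff₀ (by positivity) (by positivity)]
  nlinarith [mul_le_mul_of_nonneg_left e3 hn.le]

theorem aux_theta (γ n : ℝ) (hγ : 2 ≤ γ) (hn : 0 < n) :
    Real.arsinh (γ / (2 * n)) + Real.arsinh (γ / (2 * (n + 1))) ≤ γ * Real.log ((n + 1) / n) := by
  have key : ∀ x : ℝ, 0 < x → Real.arsinh (γ / (2 * x)) ≤ γ / 2 * Real.arsinh (1 / x) := by
    intro x hx
    rw [← Real.sinh_le_sinh, Real.sinh_arsinh]
    have := aux_sinh (γ / 2) (Real.arsinh (1 / x)) (by linarith)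
      (Real.arsinh_nonneg_iff.2 (by positivity))
    rw [Real.sinh_arsinh] at this
    refine le_trans (le_of_eq ?_) this
    field_simp
  have h1 := key n hn
  have h2 := key (n + 1) (by linarith)
  have h3 := mul_le_mul_of_nonneg_left (aux_log n hn) (by linarith : 0 ≤ γ / 2)
  linarith

theorem aux_bern_s8 (p x t : ℝ) (hp : 0 ≤ p) (hp1 : p ≤ 1) (hx : 0 ≤ x) (ht : 0 < t) :
    x ^ p ≤ t ^ p + p * t ^ (p - 1) * (x - t) := by
  have h := rpow_one_add_le_one_add_mul_self (s := x / t - 1)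
    (by have : 0 ≤ x / t := by positivity
        linarith) hp hp1
  rw [show 1 + (x / t - 1) = x / t by ring, Real.div_rpow hx ht.le, div_le_iff₀ (by positivity)] at h
  refine h.trans (le_of_eq ?_)
  rw [Real.rpow_sub_one ht.ne']
  field_simp

theorem aux_trap (p n : ℝ) (hp : 0 ≤ p) (hp1 : p ≤ 1) (hn : 0 < n) :
    (n ^ p + (n + 1) ^ p) / 2 ≤ ((n + 1) ^ (p + 1) - n ^ (p + 1)) / (p + 1) := by
  have hd : ∀ x : ℝ, 0 < x → HasDerivAt
      (fun t : ℝ => t ^ (p + 1) / (p + 1) - (t - n) * (n ^ p + t ^ p) / 2)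
      ((p + 1) * x ^ (p + 1 - 1) / (p + 1)
        - (1 * (n ^ p + x ^ p) + (x - n) * (p * x ^ (p - 1))) / 2) x := by
    intro x hx
    refine ((Real.hasDerivAt_rpow_const (Or.inl hx.ne')).div_const _).sub
      (HasDerivAt.div_const (HasDerivAt.mul ((hasDerivAt_id x).sub_const n)
       ((Real.hasDerivAt_rpow_const (Or.inl hx.ne')).const_add _)) 2)
  have hm : MonotoneOn (fun t : ℝ => t ^ (p + 1) / (p + 1) - (t - n) * (n ^ p + t ^ p) / 2)
      (Set.Ici n) := by
    apply monotoneOn_of_deriv_nonneg (convex_Ici n)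
    · exact fun x hx => (hd x (lt_of_lt_of_le hn hx)).continuousAt.continuousWithinAt
    · intro x hx
      rw [interior_Ici] at hx
      exact (hd x (lt_trans hn hx)).differentiableAt.differentiableWithinAt
    · intro x hx
      rw [interior_Ici] at hx
      have hx0 : 0 < x := lt_trans hn hx
      rw [(hd x hx0).deriv]
      have := aux_bern_s8 p n x hp hp1 hn.le hx0
      rw [mul_div_cancel_left₀ _ (by linarith : p + 1 ≠ 0), add_sub_cancel_right]
      linarith
  have := hm (Set.mem_Ici.2 le_rfl) (Set.mem_Ici.2 (by linarith : n ≤ n + 1)) (by linarith)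
  simp only [sub_self, zero_mul, zero_div, sub_zero, add_sub_cancel_left, one_mul] at this
  rw [sub_div]
  linarith

/-- Proposition 4.1 (ii): for `γ > 0` and `S_n = ∑_{k=1}^n k^{γ-1}`, one has
`S_{n-1} · S_n < n^{2γ} / γ²` for all `n ≥ 2`. -/
theorem stmt_8 (γ : ℝ) (hγ : 0 < γ)
    (S : ℕ → ℝ) (hS : ∀ n, S n = ∑ k ∈ Finset.Icc 1 n, (k : ℝ) ^ (γ - 1)) :
    ∀ n : ℕ, 2 ≤ n → S (n - 1) * S n < (n : ℝ) ^ (2 * γ) / γ ^ 2 := by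
  have h0 : S 0 = 0 := by simp [hS]
  have hs : ∀ n : ℕ, S (n + 1) = S n + ((n : ℝ) + 1) ^ (γ - 1) := by
    intro n
    rw [hS, hS, Finset.sum_Icc_succ_top (by omega)]
    push_cast; rfl
  have hnn : ∀ n, 0 ≤ S n := by
    intro n
    rw [hS]
    exact Finset.sum_nonneg fun k _ => by positivity
  intro n hn
  obtain ⟨m, rfl⟩ : ∃ m, n = m + 1 := ⟨n - 1, by omega⟩
  rw [Nat.add_sub_cancel]
  push_cast
  have hm0 : (0:ℝ) < (m:ℝ) + 1 := by positivity
  have hR : ((m:ℝ) + 1) ^ (2 * γ) / γ ^ 2 = (((m:ℝ) + 1) ^ γ / γ) ^ 2 := by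
    rw [div_pow, mul_comm, Real.rpow_mul hm0.le]; norm_num
  rw [hR]
  have hpos : 0 < ((m:ℝ) + 1) ^ (γ - 1) := by positivity
  have hSm := hnn m
  have hsm := hs m
  rcases le_total γ 1 with h1 | h1
  · have hb : ∀ n : ℕ, S n ≤ (n : ℝ) ^ γ / γ := by
      intro n
      induction n with
      | zero => simp [h0, hγ.ne']
      | succ k ih =>
        rw [hs, le_div_iff₀ hγ]
        rw [le_div_iff₀ hγ] at ih
        have := aux_bern_s8 γ k (k + 1) hγ.le h1 (by positivity) (by positivity)
        push_cast
        linarith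
    have := hb (m + 1)
    push_cast at this
    nlinarith
  rcases le_total γ 2 with h2 | h2
  · have hb : ∀ n : ℕ, S n + ((n:ℝ) + 1) ^ (γ - 1) / 2 ≤ ((n : ℝ) + 1) ^ γ / γ := by
      intro n
      induction n with
      | zero =>
        simp only [h0, Nat.cast_zero, zero_add, Real.one_rpow]
        exact one_div_le_one_div_of_le hγ h2
      | succ k ih =>
        rw [hs]
        have := aux_trap (γ - 1) (k + 1) (by linarith) (by linarith) (by positivity)
        rw [sub_add_cancel, sub_div] at this
        push_cast
        linarith
    have := hb m
    rw [hsm]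
    nlinarith
  · have conv : ∀ x : ℝ, 0 < x → x ^ γ / γ * Real.exp (-Real.arsinh (γ / (2 * x))) + x ^ (γ - 1)
        = x ^ γ / γ * Real.exp (Real.arsinh (γ / (2 * x))) := by
      intro x hx
      have := Real.sinh_arsinh (γ / (2 * x))
      rw [Real.sinh_eq] at this
      have h' : Real.exp (Real.arsinh (γ / (2 * x))) =
        Real.exp (-Real.arsinh (γ / (2 * x))) + γ / x := by
        have e : γ / x = 2 * (γ / (2 * x)) := by field_simp
        rw [e]; linarith
      rw [h', Real.rpow_sub_one hx.ne']
      field_simp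
    have hb : ∀ n : ℕ, S n < ((n : ℝ) + 1) ^ γ / γ
        * Real.exp (-Real.arsinh (γ / (2 * ((n:ℝ) + 1)))) := by
      intro n
      induction n with
      | zero => rw [h0]; positivity
      | succ k ih =>
        have hk : (0:ℝ) < (k:ℝ) + 1 := by positivity
        have hc := conv ((k:ℝ) + 1) hk
        rw [hs]
        refine lt_of_lt_of_le (b := ((k:ℝ) + 1) ^ γ / γ
          * Real.exp (Real.arsinh (γ / (2 * ((k:ℝ) + 1))))) (by linarith) ?_
        push_cast
        have ht := aux_theta γ ((k:ℝ) + 1) h2 hk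
        rw [div_mul_eq_mul_div, div_mul_eq_mul_div]
        apply div_le_div_of_nonneg_right _ hγ.le
        rw [Real.rpow_def_of_pos hk, Real.rpow_def_of_pos (by positivity), ← Real.exp_add,
          ← Real.exp_add, Real.exp_le_exp]
        rw [Real.log_div (by positivity) (by positivity)] at ht
        linarith
    have hbm := hb m
    have hc := conv _ hm0
    have h3 : S (m + 1) < ((m : ℝ) + 1) ^ γ / γ
        * Real.exp (Real.arsinh (γ / (2 * ((m:ℝ) + 1)))) := by linarith
    refine lt_of_lt_of_eq (mul_lt_mul'' hbm h3 hSm (hnn _)) ?_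
    rw [mul_mul_mul_comm, ← Real.exp_add, neg_add_cancel, Real.exp_zero]
    ring
end

section
/- Let γ be any real number, and for each positive integer n let S_n = ∑_{k=1}^n k^{γ-1}. Then for every integer n ≥ 2, S_n > exp(γ/n) · S_{n-1}. -/
open Real Set

lemma aux_exp (x : ℝ) (hx : 0 < x) : (exp x - 1) * (2 - x) < 2 * x := by
  have hm : StrictMonoOn (fun x : ℝ => 2 * x - (exp x - 1) * (2 - x)) (Ici 0) := by
    apply strictMonoOn_of_deriv_pos (convex_Ici 0) (by fun_prop)
    intro y hy
    rw [interior_Ici] at hy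
    have hy : 0 < y := hy
    have hd : HasDerivAt (fun x : ℝ => 2 * x - (exp x - 1) * (2 - x))
        (2 * 1 - (exp y * (2 - y) + (exp y - 1) * (-1))) y :=
      ((hasDerivAt_id y).const_mul 2).sub
        (((Real.hasDerivAt_exp y).sub_const 1).mul ((hasDerivAt_id y).const_sub 2))
    rw [hd.deriv]
    have h1 := Real.add_one_lt_exp (x := -y) (by linarith)
    have h2 : exp y * exp (-y) = 1 := by rw [← Real.exp_add]; simp
    nlinarith [Real.exp_pos y]
  have := hm (a := 0) (b := x) (by simp) hx.le hx
  simp at this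
  linarith

lemma aux_fin (γ T : ℝ) (hγ : 0 < γ) (n : ℝ) (hn : 0 < n)
    (h : γ * T ≤ n ^ γ - γ * n ^ (γ - 1) / 2) :
    (exp (γ / n) - 1) * T < n ^ (γ - 1) := by
  have hx : 0 < γ / n := by positivity
  have h1 := aux_exp _ hx
  set x := γ / n with hxd
  have hg : γ = x * n := by rw [hxd]; field_simp
  have hp : n ^ γ = n * n ^ (γ - 1) := by
    rw [Real.rpow_sub_one hn.ne']; field_simp
  have hpp : 0 < n ^ (γ - 1) := by positivity
  set p := n ^ (γ - 1)
  rw [hp, hg] at h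
  have h2 : x * T ≤ p * (1 - x / 2) := by
    have : n * (x * T) ≤ n * (p * (1 - x / 2)) := by linarith
    exact le_of_mul_le_mul_left this hn
  have h3 : 0 < exp x - 1 := by linarith [Real.add_one_lt_exp hx.ne']
  have h4 := mul_le_mul_of_nonneg_left h2 h3.le
  have h5 := mul_lt_mul_of_pos_left h1 hpp
  have : x * ((exp x - 1) * T) < x * p := by linarith
  exact lt_of_mul_lt_mul_left this hx.le

lemma aux_tan (s x t : ℝ) (hs0 : 0 ≤ s) (hs1 : s ≤ 1) (hx : 0 < x) (ht : t ≤ x) :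
    (x - t) ^ s ≤ x ^ s - s * t * x ^ (s - 1) := by
  have h := rpow_one_add_le_one_add_mul_self (s := -(t / x))
    (by rw [neg_le_neg_iff, div_le_one hx]; exact ht) hs0 hs1
  have hnn : 0 ≤ 1 + -(t / x) := by
    have : t / x ≤ 1 := by rw [div_le_one hx]; exact ht
    linarith
  have e : x - t = x * (1 + -(t / x)) := by field_simp; ring
  rw [e, Real.mul_rpow hx.le hnn, Real.rpow_sub_one hx.ne']
  calc _ ≤ x ^ s * (1 + s * -(t / x)) := by gcongr
    _ = _ := by ring

lemma aux_mid (γ k : ℝ) (h0 : 0 < γ) (h1 : γ ≤ 1) (hk : 1 ≤ k) :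
    γ * k ^ (γ - 1) ≤ (k + 1/2) ^ γ - (k - 1/2) ^ γ := by
  have hd : ∀ t ∈ Icc (0:ℝ) (1/2), HasDerivAt
      (fun t : ℝ => (k + t) ^ γ - (k - t) ^ γ - 2 * γ * k ^ (γ - 1) * t)
      (1 * γ * (k + t) ^ (γ - 1) - (-1) * γ * (k - t) ^ (γ - 1)
        - 2 * γ * k ^ (γ - 1) * 1) t := by
    intro t ht
    have a1 : k + t ≠ 0 := by linarith [ht.1]
    have a2 : k - t ≠ 0 := by linarith [ht.2]
    exact ((((hasDerivAt_id t).const_add k).rpow_const (Or.inl a1)).sub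
      (((hasDerivAt_id t).const_sub k).rpow_const (Or.inl a2))).sub
      ((hasDerivAt_id t).const_mul _)
  have hm : MonotoneOn
      (fun t : ℝ => (k + t) ^ γ - (k - t) ^ γ - 2 * γ * k ^ (γ - 1) * t) (Icc 0 (1/2)) := by
    apply monotoneOn_of_deriv_nonneg (convex_Icc _ _)
    · exact fun t ht => (hd t ht).continuousAt.continuousWithinAt
    · exact fun t ht => (hd t (interior_subset ht)).differentiableAt.differentiableWithinAt
    · intro t ht
      have ht := interior_subset ht
      rw [(hd t ht).deriv]
      have a1 : 0 < k + t := by linarith [ht.1]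
      have a2 : 0 < k - t := by linarith [ht.2]
      have hk0 : 0 < k := by linarith
      have hpq : k ^ (γ - 1) * k ^ (γ - 1) ≤ (k + t) ^ (γ - 1) * (k - t) ^ (γ - 1) := by
        rw [← Real.mul_rpow hk0.le hk0.le, ← Real.mul_rpow a1.le a2.le]
        apply Real.rpow_le_rpow_of_nonpos (by positivity) _ (by linarith)
        nlinarith [sq_nonneg t]
      have p1 : 0 < (k + t) ^ (γ - 1) := by positivity
      have p2 : 0 < (k - t) ^ (γ - 1) := by positivity
      have p3 : 0 < k ^ (γ - 1) := by positivity
      have : 2 * k ^ (γ - 1) ≤ (k + t) ^ (γ - 1) + (k - t) ^ (γ - 1) := by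
        apply le_of_sq_le_sq _ (by positivity)
        nlinarith [sq_nonneg ((k + t) ^ (γ - 1) - (k - t) ^ (γ - 1))]
      nlinarith
  have := hm (a := 0) (b := 1/2) (by simp) (by simp) (by norm_num)
  simp at this
  norm_num at this ⊢
  linarith

lemma aux_trap_s9 (γ k : ℝ) (h0 : 1 ≤ γ) (h1 : γ ≤ 2) (hk : 1 ≤ k) :
    γ * (k ^ (γ - 1) + (k + 1) ^ (γ - 1)) / 2 ≤ (k + 1) ^ γ - k ^ γ := by
  have hd : ∀ t ∈ Icc (0:ℝ) 1, HasDerivAt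
      (fun t : ℝ => (k + t) ^ γ - (γ / 2 * t) * (k ^ (γ - 1) + (k + t) ^ (γ - 1)))
      (1 * γ * (k + t) ^ (γ - 1) - ((γ / 2 * 1) * (k ^ (γ - 1) + (k + t) ^ (γ - 1))
        + (γ / 2 * t) * (1 * (γ - 1) * (k + t) ^ (γ - 1 - 1)))) t := by
    intro t ht
    have a1 : k + t ≠ 0 := by linarith [ht.1]
    exact (((hasDerivAt_id t).const_add k).rpow_const (Or.inl a1)).sub
      (((hasDerivAt_id t).const_mul _).mul
      ((((hasDerivAt_id t).const_add k).rpow_const (Or.inl a1)).const_add _))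
  have hm : MonotoneOn
      (fun t : ℝ => (k + t) ^ γ - (γ / 2 * t) * (k ^ (γ - 1) + (k + t) ^ (γ - 1)))
      (Icc 0 1) := by
    apply monotoneOn_of_deriv_nonneg (convex_Icc _ _)
    · exact fun t ht => (hd t ht).continuousAt.continuousWithinAt
    · exact fun t ht => (hd t (interior_subset ht)).differentiableAt.differentiableWithinAt
    · intro t ht
      have ht := interior_subset ht
      rw [(hd t ht).deriv]
      have a1 : 0 < k + t := by linarith [ht.1]
      have h := aux_tan (γ - 1) (k + t) t (by linarith) (by linarith) a1 (by linarith)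
      rw [add_sub_cancel_right] at h
      nlinarith
  have := hm (a := 0) (b := 1) (by simp) (by simp) (by norm_num)
  simp at this
  linarith

lemma aux_two_nat (n : ℝ) (m : ℕ) (hm : n = m + 1) :
    n * exp (2 / (n + 1)) + (n + 1) * exp (-(2 / n)) ≤ 2 * n + 1 := by
  rcases m with _ | m
  · simp at hm
    subst hm
    norm_num
    have h1 := Real.exp_one_lt_d9
    have h2 := Real.exp_one_gt_d9
    have h3 : exp (-2) * (exp 1 * exp 1) = 1 := by
      rw [← Real.exp_add, ← Real.exp_add]; norm_num
    have h4 : exp (-2) ≤ 0.14 := by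
      have : (7.2:ℝ) ≤ exp 1 * exp 1 := by nlinarith
      nlinarith [Real.exp_pos (-2)]
    linarith
  · push_cast at hm
    have hm0 : (0:ℝ) ≤ m := by positivity
    have hn : 0 < n := by linarith
    have b1 := Real.exp_bound' (x := 2 / (n + 1)) (by positivity)
      (by rw [div_le_one (by positivity)]; linarith) (n := 7) (by norm_num)
    have b2 := Real.exp_bound (x := -(2 / n))
      (by rw [abs_neg, abs_of_pos (by positivity), div_le_one (by positivity)]; linarith)
      (n := 8) (by norm_num)
    rw [abs_neg, abs_of_pos (by positivity : 0 < 2 / n)] at b2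
    have b3 := (abs_le.1 b2).2
    simp [Finset.sum_range_succ, Nat.factorial] at b1 b3
    refine le_trans (add_le_add (mul_le_mul_of_nonneg_left b1 hn.le)
      (mul_le_mul_of_nonneg_left b3 (by positivity : 0 ≤ n + 1))) ?_
    rw [← sub_nonneg]
    have : n = m + 2 := by linarith
    subst this
    generalize (m : ℝ) = z at *
    field_simp
    ring_nf
    positivity

lemma aux_G (l b a : ℝ) (hl : 1 ≤ l) (hb : 0 < b) (hab : b ≤ a) :
    log (sinh (l * b)) - log b - l * log (sinh b) + l * log b ≤
    log (sinh (l * a)) - log a - l * log (sinh a) + l * log a := by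
  have hL : MonotoneOn (fun x : ℝ => cosh x / sinh x - x⁻¹) (Ioi 0) := by
    have hd : ∀ x ∈ Ioi (0:ℝ), HasDerivAt (fun x : ℝ => cosh x / sinh x - x⁻¹)
        ((sinh x * sinh x - cosh x * cosh x) / (sinh x) ^ 2 - -(x ^ 2)⁻¹) x := by
      intro x hx
      have hs : sinh x ≠ 0 := (Real.sinh_pos_iff.2 hx).ne'
      exact ((Real.hasDerivAt_cosh x).div (Real.hasDerivAt_sinh x) hs).sub
        (hasDerivAt_inv (ne_of_gt hx))
    apply monotoneOn_of_deriv_nonneg (convex_Ioi _)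
    · exact fun t ht => (hd t ht).continuousAt.continuousWithinAt
    · exact fun t ht => (hd t (interior_subset ht)).differentiableAt.differentiableWithinAt
    · intro x hx
      have hx := interior_subset hx
      rw [(hd x hx).deriv]
      have hx : 0 < x := hx
      have h1 : x ≤ sinh x := Real.self_le_sinh_iff.2 hx.le
      have h2 : sinh x * sinh x - cosh x * cosh x = -1 := by
        nlinarith [Real.cosh_sq x]
      rw [h2]
      have : (sinh x ^ 2)⁻¹ ≤ (x ^ 2)⁻¹ := by gcongr
      rw [neg_div, one_div]
      linarith
  have hd : ∀ x ∈ Ioi (0:ℝ), HasDerivAt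
      (fun x : ℝ => log (sinh (l * x)) - log x - l * log (sinh x) + l * log x)
      ((cosh (l * x) * (l * 1)) / sinh (l * x) - x⁻¹ - l * (cosh x / sinh x) + l * x⁻¹) x := by
    intro x hx
    have hx : 0 < x := hx
    have hs : sinh x ≠ 0 := (Real.sinh_pos_iff.2 hx).ne'
    have hs' : sinh (l * x) ≠ 0 := (Real.sinh_pos_iff.2 (by positivity)).ne'
    exact ((((((hasDerivAt_id x).const_mul l).sinh).log hs').sub
      (Real.hasDerivAt_log hx.ne')).sub
      (((Real.hasDerivAt_sinh x).log hs).const_mul l)).add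
      ((Real.hasDerivAt_log hx.ne').const_mul l)
  have hm : MonotoneOn
      (fun x : ℝ => log (sinh (l * x)) - log x - l * log (sinh x) + l * log x) (Ioi 0) := by
    apply monotoneOn_of_deriv_nonneg (convex_Ioi _)
    · exact fun t ht => (hd t ht).continuousAt.continuousWithinAt
    · exact fun t ht => (hd t (interior_subset ht)).differentiableAt.differentiableWithinAt
    · intro x hx
      have hx := interior_subset hx
      rw [(hd x hx).deriv]
      have hx : 0 < x := hx
      have h := hL (a := x) (b := l * x) hx (by show 0 < l * x; positivity) (by nlinarith)
      simp only at h
      have e : (cosh (l * x) * (l * 1)) / sinh (l * x) - x⁻¹ - l * (cosh x / sinh x) + l * x⁻¹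
        = l * ((cosh (l * x) / sinh (l * x) - (l * x)⁻¹) - (cosh x / sinh x - x⁻¹)) := by
        have : x⁻¹ = l * (l * x)⁻¹ := by field_simp
        linear_combination (-1 : ℝ) * this
      rw [e]
      apply mul_nonneg (by linarith) (by linarith)
  exact hm hb (lt_of_lt_of_le hb hab) hab

lemma aux_sinh1 (y : ℝ) : exp (2 * y) - 1 = 2 * exp y * sinh y := by
  rw [Real.sinh_eq, two_mul, Real.exp_add, Real.exp_neg]
  field_simp

lemma aux_sinh2 (y : ℝ) : 1 - exp (-(2 * y)) = 2 * exp (-y) * sinh y := by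
  rw [Real.sinh_eq, two_mul, neg_add, Real.exp_add, Real.exp_neg]
  field_simp

lemma aux_step (γ : ℝ) (h2 : 2 ≤ γ) (n : ℝ) (m : ℕ) (hm : n = m + 1) :
    (exp (γ / (n + 1)) - 1) * n ^ (γ - 1) ≤ (n + 1) ^ (γ - 1) * (1 - exp (-(γ / n))) := by
  have hn : 0 < n := by rw [hm]; positivity
  have hn1 : 0 < n + 1 := by linarith
  obtain ⟨l, rfl⟩ : ∃ l, γ = 2 * l := ⟨γ / 2, by ring⟩
  have hl : 1 ≤ l := by linarith
  have hl0 : 0 < l := by linarith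
  have f := aux_two_nat n m hm
  have e1 : 2 * l / (n + 1) = 2 * (l * (n + 1)⁻¹) := by ring
  have e2 : 2 * l / n = 2 * (l * n⁻¹) := by ring
  have hab : (n + 1)⁻¹ ≤ n⁻¹ := by gcongr; linarith
  have hG := aux_G l _ _ hl (by positivity : 0 < (n + 1)⁻¹) hab
  have f' : (exp (2 * (n + 1)⁻¹) - 1) * n ≤ (n + 1) * (1 - exp (-(2 * n⁻¹))) := by
    rw [← div_eq_mul_inv, ← div_eq_mul_inv]; linarith
  rw [aux_sinh1, aux_sinh2] at f'
  rw [e1, e2, aux_sinh1, aux_sinh2]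
  rw [Real.log_inv, Real.log_inv] at hG
  have ha : 0 < n⁻¹ := by positivity
  have hb : 0 < (n + 1)⁻¹ := by positivity
  generalize n⁻¹ = a at *
  generalize (n + 1)⁻¹ = b at *
  have s1 : 0 < sinh a := Real.sinh_pos_iff.2 ha
  have s2 : 0 < sinh b := Real.sinh_pos_iff.2 hb
  have s3 : 0 < sinh (l * a) := Real.sinh_pos_iff.2 (by positivity)
  have s4 : 0 < sinh (l * b) := Real.sinh_pos_iff.2 (by positivity)
  have g1 : exp b * sinh b * n ≤ (n + 1) * (exp (-a) * sinh a) := by linarith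
  have g2 := Real.log_le_log (by positivity) g1
  rw [Real.log_mul (by positivity) (by positivity), Real.log_mul (by positivity) (by positivity),
    Real.log_mul (by positivity) (by positivity), Real.log_mul (by positivity) (by positivity),
    Real.log_exp, Real.log_exp] at g2
  have p1 : 0 < n ^ (2 * l - 1) := by positivity
  have p2 : 0 < (n + 1) ^ (2 * l - 1) := by positivity
  have key : exp (l * b) * sinh (l * b) * n ^ (2 * l - 1) ≤
      (n + 1) ^ (2 * l - 1) * (exp (-(l * a)) * sinh (l * a)) := by
    rw [← Real.log_le_log_iff (by positivity) (by positivity)]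
    rw [Real.log_mul (by positivity) (by positivity), Real.log_mul (by positivity) (by positivity),
      Real.log_mul (by positivity) (by positivity), Real.log_mul (by positivity) (by positivity),
      Real.log_exp, Real.log_exp, Real.log_rpow hn, Real.log_rpow hn1]
    have g3 := mul_le_mul_of_nonneg_left g2 hl0.le
    linarith
  linarith

lemma aux_main (γ : ℝ) (h0 : 0 < γ) (m : ℕ) :
    (exp (γ / ((m : ℝ) + 1)) - 1) * ∑ k ∈ Finset.Icc 1 m, (k : ℝ) ^ (γ - 1)
      < ((m : ℝ) + 1) ^ (γ - 1) := by
  have hp (m : ℕ) : (0:ℝ) < (m:ℝ) + 1 := by positivity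
  rcases le_total γ 1 with h1 | h1
  · have key : ∀ m : ℕ, γ * ∑ k ∈ Finset.Icc 1 m, (k : ℝ) ^ (γ - 1) ≤ ((m : ℝ) + 1 / 2) ^ γ := by
      intro m
      induction m with
      | zero => simp; positivity
      | succ m ih =>
        rw [Finset.sum_Icc_succ_top (by omega), mul_add]
        have := aux_mid γ ((m + 1 : ℕ) : ℝ) h0 h1 (by push_cast; linarith [m.cast_nonneg (α := ℝ)])
        have e : ((m + 1 : ℕ) : ℝ) - 1 / 2 = m + 1 / 2 := by push_cast; ring
        rw [e] at this
        linarith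
    apply aux_fin γ _ h0 _ (hp m)
    have h := aux_tan γ ((m:ℝ) + 1) (1 / 2) h0.le h1 (hp m) (by linarith [m.cast_nonneg (α := ℝ)])
    have e : (m : ℝ) + 1 - 1 / 2 = m + 1 / 2 := by ring
    rw [e] at h
    linarith [key m]
  rcases le_total γ 2 with h2 | h2
  · apply aux_fin γ _ h0 _ (hp m)
    induction m with
    | zero => simp; linarith
    | succ m ih =>
      rw [Finset.sum_Icc_succ_top (by omega), mul_add]
      have := aux_trap_s9 γ ((m : ℝ) + 1) h1 h2 (by linarith [m.cast_nonneg (α := ℝ)])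
      push_cast
      linarith
  · induction m with
    | zero => simp
    | succ m ih =>
      rw [Finset.sum_Icc_succ_top (by omega)]
      have hs := aux_step γ h2 ((m : ℝ) + 1) m rfl
      push_cast
      set n := (m : ℝ) + 1 with hn
      have hn0 : 0 < n := hp m
      have hE : exp (γ / n) * exp (-(γ / n)) = 1 := by rw [← Real.exp_add]; simp
      have x0 : 0 < γ / n := by positivity
      have x1 : 0 < γ / (n + 1) := by positivity
      have E1 : 0 < exp (γ / n) - 1 := by linarith [Real.add_one_lt_exp x0.ne']
      have F1 : 0 < exp (γ / (n + 1)) - 1 := by linarith [Real.add_one_lt_exp x1.ne']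
      generalize exp (γ / n) = E at *
      generalize exp (-(γ / n)) = E' at *
      generalize exp (γ / (n + 1)) - 1 = F at *
      generalize n ^ (γ - 1) = p at *
      generalize (n + 1) ^ (γ - 1) = q at *
      generalize ∑ k ∈ Finset.Icc 1 m, (k : ℝ) ^ (γ - 1) = T at *
      have a1 := mul_lt_mul_of_pos_left ih F1
      have a2 := mul_le_mul_of_nonneg_left hs (by linarith : 0 ≤ E)
      have a3 : E * (q * (1 - E')) = q * (E - 1) := by linear_combination (-q) * hE
      have : (E - 1) * (F * (T + p)) < (E - 1) * q := by linarith
      exact lt_of_mul_lt_mul_left this E1.le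

/-- Proposition 4.1 (iii): for any real `γ` and `S_n = ∑_{k=1}^n k^{γ-1}`, one has
`S_n > exp(γ/n) · S_{n-1}` for all `n ≥ 2`. -/
theorem stmt_9 (γ : ℝ)
    (S : ℕ → ℝ) (hS : ∀ n, S n = ∑ k ∈ Finset.Icc 1 n, (k : ℝ) ^ (γ - 1)) :
    ∀ n : ℕ, 2 ≤ n → S n > Real.exp (γ / (n : ℝ)) * S (n - 1) := by
  intro n hn
  obtain ⟨m, rfl⟩ : ∃ m, n = m + 1 := ⟨n - 1, by omega⟩
  rw [Nat.add_sub_cancel, hS, hS, Finset.sum_Icc_succ_top (by omega)]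
  push_cast
  rcases le_or_gt γ 0 with h | h
  · have h1 : Real.exp (γ / ((m : ℝ) + 1)) ≤ 1 := by
      rw [Real.exp_le_one_iff]
      exact div_nonpos_of_nonpos_of_nonneg h (by positivity)
    have h2 : 0 ≤ ∑ k ∈ Finset.Icc 1 m, (k : ℝ) ^ (γ - 1) :=
      Finset.sum_nonneg fun k _ => by positivity
    have h3 : 0 < ((m : ℝ) + 1) ^ (γ - 1) := by positivity
    nlinarith
  · linarith [aux_main γ h m]
end

section
/- Define F(x, γ) = (1+x)^{γ-1} (1 - exp(-γ x)) - exp(γ x / (1+x)) + 1 for x ∈ [0,1] and γ ≥ 2. Then for every positive integer n and every real γ ≥ 2, F(1/n, γ) ≥ 0. -/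
theorem aux_base (x : ℝ) (hx : 0 < x) (hx1 : x ≤ 1) :
    Real.exp (2 * x / (1 + x)) + (1 + x) * Real.exp (-(2 * x)) ≤ 2 + x := by
  have h1 : (0:ℝ) < 1 + x := by linarith
  have hA := Real.exp_bound' (x := 2 * x / (1 + x)) (by positivity)
    (by rw [div_le_one h1]; linarith) (n := 7) (by norm_num)
  have hT := Real.sum_le_exp_of_nonneg (x := 2 * x) (by positivity) 8
  simp only [Finset.sum_range_succ, Finset.sum_range_zero, Nat.factorial] at hA hT
  norm_num at hA hT
  set T := 1 + 2 * x + (2 * x) ^ 2 / 2 + (2 * x) ^ 3 / 6 + (2 * x) ^ 4 / 24 + (2 * x) ^ 5 / 120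
    + (2 * x) ^ 6 / 720 + (2 * x) ^ 7 / 5040 with hTd
  have hTp : 0 < T := by positivity
  have hE : Real.exp (-(2 * x)) ≤ 1 / T := by
    rw [Real.exp_neg, ← one_div]
    exact one_div_le_one_div_of_le hTp hT
  have hE2 : (1 + x) * Real.exp (-(2 * x)) ≤ (1 + x) * (1 / T) :=
    mul_le_mul_of_nonneg_left hE h1.le
  refine le_trans (add_le_add hA hE2) ?_
  rw [← sub_nonneg]
  rw [hTd] at hTp ⊢
  have hne := hTp.ne'
  have h1' := h1.ne'
  field_simp
  ring_nf
  positivity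

theorem aux_conv_s10 (a b : ℝ) (hb : 0 < b) (hab : b ≤ a) :
    ConvexOn ℝ (Set.Ioi (0:ℝ))
      (fun t => Real.log (Real.sinh (a * t)) - Real.log (Real.sinh (b * t))) := by
  have ha : 0 < a := lt_of_lt_of_le hb hab
  have hd : ∀ c : ℝ, 0 < c → ∀ t : ℝ, 0 < t →
      HasDerivAt (fun t => Real.log (Real.sinh (c * t)))
        (c * Real.cosh (c * t) / Real.sinh (c * t)) t := by
    intro c hc t ht
    have h0 : 0 < Real.sinh (c * t) := Real.sinh_pos_iff.2 (by positivity)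
    have h1 : HasDerivAt (fun t => c * t) c t := by
      simpa using (hasDerivAt_id t).const_mul c
    have := (h1.sinh).log h0.ne'
    convert this using 1
    ring
  have hd2 : ∀ c : ℝ, 0 < c → ∀ t : ℝ, 0 < t →
      HasDerivAt (fun t => c * Real.cosh (c * t) / Real.sinh (c * t))
        (-(c / Real.sinh (c * t)) ^ 2) t := by
    intro c hc t ht
    have h0 : 0 < Real.sinh (c * t) := Real.sinh_pos_iff.2 (by positivity)
    have h1 : HasDerivAt (fun t => c * t) c t := by
      simpa using (hasDerivAt_id t).const_mul c
    refine ((h1.cosh.const_mul c).div h1.sinh h0.ne').congr_deriv ?_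
    symm
    have := Real.cosh_sq (c * t)
    rw [div_pow, ← neg_div]
    congr 1
    linear_combination c ^ 2 * this
  have key : ∀ t : ℝ, 0 < t → a * Real.sinh (b * t) ≤ b * Real.sinh (a * t) := by
    intro t ht
    have hm : MonotoneOn (fun t => b * Real.sinh (a * t) - a * Real.sinh (b * t))
        (Set.Ici (0:ℝ)) := by
      have hD : ∀ t : ℝ, HasDerivAt (fun t => b * Real.sinh (a * t) - a * Real.sinh (b * t))
          (b * (Real.cosh (a * t) * a) - a * (Real.cosh (b * t) * b)) t := by
        intro t
        have h1 : ∀ c : ℝ, HasDerivAt (fun t => c * t) c t := fun c => by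
          simpa using (hasDerivAt_id t).const_mul c
        exact ((h1 a).sinh.const_mul b).sub ((h1 b).sinh.const_mul a)
      apply monotoneOn_of_deriv_nonneg (convex_Ici 0)
      · exact fun t _ => (hD t).continuousAt.continuousWithinAt
      · exact fun t _ => (hD t).differentiableAt.differentiableWithinAt
      · intro t ht
        rw [interior_Ici] at ht
        have ht : 0 < t := ht
        rw [(hD t).deriv]
        have : Real.cosh (b * t) ≤ Real.cosh (a * t) := by
          rw [Real.cosh_le_cosh, abs_of_pos (by positivity), abs_of_pos (by positivity)]
          gcongr
        have := mul_le_mul_of_nonneg_left this (mul_pos ha hb).le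
        linarith
    have := hm (Set.mem_Ici.2 le_rfl) (Set.mem_Ici.2 ht.le) ht.le
    simp at this
    linarith
  apply convexOn_of_hasDerivWithinAt2_nonneg (convex_Ioi 0)
    (f' := fun t => a * Real.cosh (a * t) / Real.sinh (a * t)
      - b * Real.cosh (b * t) / Real.sinh (b * t))
    (f'' := fun t => -(a / Real.sinh (a * t)) ^ 2 - -(b / Real.sinh (b * t)) ^ 2)
  · exact fun t ht => ((hd a ha t ht).sub (hd b hb t ht)).continuousAt.continuousWithinAt
  · intro t ht
    rw [interior_Ioi] at ht
    exact ((hd a ha t ht).sub (hd b hb t ht)).hasDerivWithinAt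
  · intro t ht
    rw [interior_Ioi] at ht
    exact ((hd2 a ha t ht).sub (hd2 b hb t ht)).hasDerivWithinAt
  · intro t ht
    rw [interior_Ioi] at ht
    have ht : 0 < t := ht
    have h0 : 0 < Real.sinh (a * t) := Real.sinh_pos_iff.2 (by positivity)
    have h1 : 0 < Real.sinh (b * t) := Real.sinh_pos_iff.2 (by positivity)
    have : a / Real.sinh (a * t) ≤ b / Real.sinh (b * t) := by
      rw [div_le_div_iff₀ h0 h1]; exact key t ht
    have := pow_le_pow_left₀ (by positivity) this 2
    linarith

theorem aux_iff (x a b g : ℝ) (hx : 0 < x) (ha : 2 * a = x) (hb : 2 * b = x / (1 + x))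
    (hg : 0 < g) :
    0 ≤ (1 + x) ^ (g - 1) * (1 - Real.exp (-(g * x))) - Real.exp (g * x / (1 + x)) + 1 ↔
    0 ≤ (g - 1) * Real.log (1 + x) - g * (a + b)
      + (Real.log (Real.sinh (a * g)) - Real.log (Real.sinh (b * g))) := by
  have h1 : (0:ℝ) < 1 + x := by linarith
  have hb0 : 0 < b := by
    have : 0 < x / (1 + x) := by positivity
    linarith
  have ha0 : 0 < a := by linarith
  have hsa : 0 < Real.sinh (a * g) := Real.sinh_pos_iff.2 (by positivity)
  have hsb : 0 < Real.sinh (b * g) := Real.sinh_pos_iff.2 (by positivity)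
  have e1 : 1 - Real.exp (-(g * x)) = 2 * (Real.exp (-(a * g)) * Real.sinh (a * g)) := by
    have : -(g * x) = -(a * g) + -(a * g) := by rw [← ha]; ring
    rw [this, Real.exp_add, Real.sinh_eq]
    have : Real.exp (-(a * g)) * Real.exp (a * g) = 1 := by rw [← Real.exp_add]; simp
    linear_combination -this
  have e2 : Real.exp (g * x / (1 + x)) - 1 = 2 * (Real.exp (b * g) * Real.sinh (b * g)) := by
    have : g * x / (1 + x) = b * g + b * g := by rw [mul_div_assoc, ← hb]; ring
    rw [this, Real.exp_add, Real.sinh_eq]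
    have : Real.exp (-(b * g)) * Real.exp (b * g) = 1 := by rw [← Real.exp_add]; simp
    linear_combination this
  have hR : 0 < (1 + x) ^ (g - 1) := Real.rpow_pos_of_pos h1 _
  have e3 : 0 ≤ (1 + x) ^ (g - 1) * (1 - Real.exp (-(g * x))) - Real.exp (g * x / (1 + x)) + 1 ↔
      Real.exp (b * g) * Real.sinh (b * g) ≤
        (1 + x) ^ (g - 1) * (Real.exp (-(a * g)) * Real.sinh (a * g)) := by
    rw [e1]
    constructor <;> intro h <;> linarith
  rw [e3, ← Real.log_le_log_iff (by positivity) (by positivity),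
    Real.log_mul (by positivity) hsb.ne', Real.log_mul hR.ne' (by positivity),
    Real.log_mul (by positivity) hsa.ne', Real.log_exp, Real.log_exp, Real.log_rpow h1]
  constructor <;> intro h <;> linarith

theorem aux_main_s10 (x g : ℝ) (hx : 0 < x) (hx1 : x ≤ 1) (hg : 2 ≤ g) :
    0 ≤ (1 + x) ^ (g - 1) * (1 - Real.exp (-(g * x))) - Real.exp (g * x / (1 + x)) + 1 := by
  have h1 : (0:ℝ) < 1 + x := by linarith
  obtain ⟨a, ha⟩ : ∃ a, 2 * a = x := ⟨x / 2, by ring⟩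
  obtain ⟨b, hb⟩ : ∃ b, 2 * b = x / (1 + x) := ⟨x / (1 + x) / 2, by ring⟩
  have hb0 : 0 < b := by
    have : 0 < x / (1 + x) := by positivity
    linarith
  have ha0 : 0 < a := by linarith
  have hab' : a = b * (1 + x) := by
    have : x / (1 + x) * (1 + x) = x := by field_simp
    rw [← hb] at this
    linarith
  have hab : b ≤ a := by rw [hab']; nlinarith
  have h2 := (aux_iff x a b 2 hx ha hb (by norm_num)).1 (by
    have := aux_base x hx hx1
    have e : (1 + x) ^ ((2:ℝ) - 1) = 1 + x := by norm_num
    rw [e]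
    linarith)
  rcases hg.eq_or_lt with rfl | hg
  · exact (aux_iff x a b 2 hx ha hb (by norm_num)).2 h2
  rw [aux_iff x a b g hx ha hb (by linarith)]
  set L := Real.log (1 + x) with hL
  set f : ℝ → ℝ := fun t => Real.log (Real.sinh (a * t)) - Real.log (Real.sinh (b * t)) with hf
  have hc : ConvexOn ℝ (Set.Ioi (0:ℝ)) f := aux_conv_s10 a b hb0 hab
  change 0 ≤ (2 - 1) * L - 2 * (a + b) + f 2 at h2
  change 0 ≤ (g - 1) * L - g * (a + b) + f g
  -- upper bound near zero
  have hup : ∀ e : ℝ, 0 < e → f e ≤ L + Real.log (Real.cosh (a * e)) := by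
    intro e he
    have hsa : 0 < Real.sinh (a * e) := Real.sinh_pos_iff.2 (by positivity)
    have hsb : 0 < Real.sinh (b * e) := Real.sinh_pos_iff.2 (by positivity)
    have q1 : b * e ≤ Real.sinh (b * e) := Real.self_le_sinh_iff.2 (by positivity)
    have q2 : Real.sinh (a * e) ≤ a * e * Real.cosh (a * e) := by
      have hm : MonotoneOn (fun t => t * Real.cosh t - Real.sinh t) (Set.Ici (0:ℝ)) := by
        have hD : ∀ t : ℝ, HasDerivAt (fun t => t * Real.cosh t - Real.sinh t)
            (1 * Real.cosh t + t * Real.sinh t - Real.cosh t) t := fun t =>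
          ((hasDerivAt_id t).mul (Real.hasDerivAt_cosh t)).sub (Real.hasDerivAt_sinh t)
        apply monotoneOn_of_deriv_nonneg (convex_Ici 0)
        · exact fun t _ => (hD t).continuousAt.continuousWithinAt
        · exact fun t _ => (hD t).differentiableAt.differentiableWithinAt
        · intro t ht
          rw [interior_Ici] at ht
          have ht : 0 < t := ht
          rw [(hD t).deriv]
          have := mul_pos ht (Real.sinh_pos_iff.2 ht)
          linarith
      have hae : 0 ≤ a * e := by positivity
      have := hm (Set.mem_Ici.2 le_rfl) (Set.mem_Ici.2 hae) hae
      simp at this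
      linarith
    have hch := Real.cosh_pos (a * e)
    have : Real.log (Real.sinh (a * e)) ≤
        L + Real.log (Real.cosh (a * e)) + Real.log (Real.sinh (b * e)) := by
      rw [hL, ← Real.log_mul h1.ne' hch.ne', ← Real.log_mul (by positivity) hsb.ne']
      apply Real.log_le_log hsa
      calc Real.sinh (a * e) ≤ a * e * Real.cosh (a * e) := q2
        _ = (1 + x) * Real.cosh (a * e) * (b * e) := by rw [hab']; ring
        _ ≤ _ := by gcongr
    simp only [hf]
    linarith
  have hineq : ∀ e ∈ Set.Ioo (0:ℝ) 2, (g - e) * f 2 ≤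
      (g - 2) * (L + Real.log (Real.cosh (a * e))) + (2 - e) * f g := by
    intro e he
    obtain ⟨he0, he2⟩ := he
    have hge : 0 < g - e := by linarith
    have h := (And.right hc) (Set.mem_Ioi.2 he0) (Set.mem_Ioi.2 (show (0:ℝ) < g by linarith))
      (show 0 ≤ (g - 2) / (g - e) from div_nonneg (by linarith) hge.le)
      (show 0 ≤ (2 - e) / (g - e) from div_nonneg (by linarith) hge.le)
      (by field_simp; ring)
    have e2 : ((g - 2) / (g - e)) • e + ((2 - e) / (g - e)) • g = 2 := by
      simp only [smul_eq_mul]; field_simp; ring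
    rw [e2] at h
    simp only [smul_eq_mul] at h
    have h' := mul_le_mul_of_nonneg_left h hge.le
    have e3 : (g - e) * ((g - 2) / (g - e) * f e + (2 - e) / (g - e) * f g)
        = (g - 2) * f e + (2 - e) * f g := by field_simp
    rw [e3] at h'
    have := mul_le_mul_of_nonneg_left (hup e he0) (show 0 ≤ g - 2 by linarith)
    linarith
  have hlim : (g - 0) * f 2 ≤
      (g - 2) * (L + Real.log (Real.cosh (a * 0))) + (2 - 0) * f g := by
    have c1 : ContinuousAt (fun e : ℝ => (g - e) * f 2) 0 := by fun_prop
    have c2 : ContinuousAt (fun e : ℝ =>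
        (g - 2) * (L + Real.log (Real.cosh (a * e))) + (2 - e) * f g) 0 := by
      have : ContinuousAt (fun e : ℝ => Real.log (Real.cosh (a * e))) 0 :=
        ContinuousAt.log (by fun_prop) (Real.cosh_pos _).ne'
      fun_prop
    refine le_of_tendsto_of_tendsto (b := nhdsWithin 0 (Set.Ioi 0))
      (c1.tendsto.mono_left nhdsWithin_le_nhds) (c2.tendsto.mono_left nhdsWithin_le_nhds) ?_
    filter_upwards [Ioo_mem_nhdsGT (show (0:ℝ) < 2 by norm_num)] with e he
    exact hineq e he
  simp at hlim
  have := mul_nonneg (show 0 ≤ g by linarith) h2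
  linarith


/-- Lemma 4.2: with `F(x,γ) = (1+x)^{γ-1}(1 - exp(-γx)) - exp(γx/(1+x)) + 1`,
one has `F(1/n, γ) ≥ 0` for every positive integer `n` and every `γ ≥ 2`. -/
theorem stmt_10 (F : ℝ → ℝ → ℝ)
    (hF : ∀ x γ : ℝ, F x γ =
      (1 + x) ^ (γ - 1) * (1 - Real.exp (-(γ * x))) - Real.exp (γ * x / (1 + x)) + 1) :
    ∀ n : ℕ, 1 ≤ n → ∀ γ : ℝ, 2 ≤ γ → 0 ≤ F (1 / (n : ℝ)) γ := by
  intro n hn g hg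
  rw [hF]
  have hn1 : (1:ℝ) ≤ n := by exact_mod_cast hn
  exact aux_main_s10 _ g (by positivity) (by rw [div_le_one (by linarith)]; exact hn1) hg
end

section
/- Let p > 1 and α > p - 1 be real numbers, and for each positive integer n let S_n = ∑_{k=1}^n k^{α-p}. Then for every integer n ≥ 2, S_{n-1}^{-1/(p-1)} - S_n^{-1/(p-1)} ≥ (α-p+1)^{p/(p-1)} / ( (p-1) n^{α/(p-1)} ). -/
open Real in
theorem aux_A (q x y N : ℝ) (hq : 0 < q) (hx : 0 < x) (hxy : x < y) (hN : 0 < N)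
    (h : (y - x) / N ≤ log y - log x) :
    q * (y - x) * N ^ (-(q + 1)) ≤ x ^ (-q) - y ^ (-q) := by
  have hy : 0 < y := hx.trans hxy
  obtain ⟨X, rfl⟩ : ∃ X, x = exp X := ⟨log x, (exp_log hx).symm⟩
  obtain ⟨Y, rfl⟩ : ∃ Y, y = exp Y := ⟨log y, (exp_log hy).symm⟩
  obtain ⟨M, rfl⟩ : ∃ M, N = exp M := ⟨log N, (exp_log hN).symm⟩
  simp only [log_exp] at h
  rw [← exp_mul, ← exp_mul, ← exp_mul]
  have hXY : X < Y := exp_lt_exp.mp hxy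
  have key : ∀ r : ℝ, exp (r * Y) - exp (r * X) = exp (r * ((X + Y) / 2)) * (2 * sinh (r * ((Y - X) / 2))) := by
    intro r
    rw [sinh_eq, mul_div_cancel₀ _ (two_ne_zero), mul_sub, ← exp_add, ← exp_add]
    congr 2 <;> ring
  have h1 := key 1
  simp only [one_mul] at h1
  have hs : (Y - X) / 2 ≤ sinh ((Y - X) / 2) := self_le_sinh_iff.mpr (by linarith)
  have hpos : 0 < exp Y - exp X := by linarith
  have h2 : exp ((X + Y) / 2) ≤ exp M := by
    have e1 : exp ((X + Y) / 2) * (Y - X) ≤ exp Y - exp X := by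
      rw [h1]; gcongr; linarith
    have e2 : exp Y - exp X ≤ (Y - X) * exp M := by
      rwa [div_le_iff₀ hN] at h
    have : exp ((X + Y) / 2) * (Y - X) ≤ exp M * (Y - X) := by linarith
    exact le_of_mul_le_mul_right this (by linarith)
  have h3 : (X + Y) / 2 ≤ M := exp_le_exp.mp h2
  have h4 := key (-q)
  have e5 : exp (X * -q) - exp (Y * -q) = exp (-q * ((X + Y) / 2)) * (2 * sinh (q * ((Y - X) / 2))) := by
    rw [neg_mul, neg_mul q ((Y - X) / 2), sinh_neg] at h4
    rw [mul_comm X, mul_comm Y]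
    rw [neg_mul, neg_mul, neg_mul] at *
    linarith
  rw [e5]
  have hs2 : q * ((Y - X) / 2) ≤ sinh (q * ((Y - X) / 2)) :=
    self_le_sinh_iff.mpr (by have := sub_pos.mpr hXY; positivity)
  have e6 : exp (M * -(q + 1)) = exp (-q * M) / exp M := by
    rw [← exp_sub]; congr 1; ring
  rw [e6]
  calc q * (exp Y - exp X) * (exp (-q * M) / exp M)
      = exp (-q * M) * (q * ((exp Y - exp X) / exp M)) := by ring
    _ ≤ exp (-q * ((X + Y) / 2)) * (2 * sinh (q * ((Y - X) / 2))) := by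
      apply mul_le_mul
      · apply exp_le_exp.mpr; nlinarith
      · have : q * ((exp Y - exp X) / exp M) ≤ q * (Y - X) := by gcongr
        linarith
      · positivity
      · positivity

open Real in
theorem aux_bern_s12 (g x y : ℝ) (hg : 0 ≤ g) (hg1 : g ≤ 1) (hx : 0 ≤ x) (hy : 0 < y) :
    x ^ g ≤ y ^ g + g * (x - y) * y ^ (g - 1) := by
  have h := rpow_one_add_le_one_add_mul_self (s := x / y - 1) (by have : 0 ≤ x / y := by positivity
                                                                  linarith) hg hg1
  rw [add_sub_cancel, div_rpow hx hy.le, div_le_iff₀ (by positivity)] at h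
  rw [rpow_sub_one hy.ne']
  refine h.trans (le_of_eq ?_)
  field_simp

open Real in
theorem aux_trap_s12 (b x y : ℝ) (h1 : 1 ≤ b) (h2 : b ≤ 2) (hx : 0 < x) (hxy : x ≤ y) :
    (y - x) * (x ^ (b - 1) + y ^ (b - 1)) / 2 ≤ (y ^ b - x ^ b) / b := by
  have hb : 0 < b := by linarith
  let f : ℝ → ℝ := fun z => (z ^ b - x ^ b) / b - (z - x) * (x ^ (b - 1) + z ^ (b - 1)) / 2
  have hd : ∀ z ∈ Set.Ici x, HasDerivAt f ((b * z ^ (b - 1)) / b - (1 * (x ^ (b - 1) + z ^ (b - 1)) + (z - x) * ((b - 1) * z ^ (b - 1 - 1))) / 2) z := by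
    intro z hz
    have hz0 : z ≠ 0 := (lt_of_lt_of_le hx hz).ne'
    exact (((hasDerivAt_rpow_const (Or.inl hz0)).sub_const _).div_const _).sub
      ((((hasDerivAt_id z).sub_const x).mul ((hasDerivAt_rpow_const (Or.inl hz0)).const_add _)).div_const _)
  have hm : MonotoneOn f (Set.Ici x) := by
    apply monotoneOn_of_deriv_nonneg (convex_Ici x)
    · exact fun z hz => (hd z hz).continuousAt.continuousWithinAt
    · intro z hz
      rw [interior_Ici] at hz
      exact (hd z (Set.Ioi_subset_Ici_self hz)).differentiableAt.differentiableWithinAt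
    · intro z hz
      rw [interior_Ici] at hz
      have hz' : x < z := hz
      rw [(hd z (Set.Ioi_subset_Ici_self hz)).deriv, mul_div_cancel_left₀ _ hb.ne']
      have := aux_bern_s12 (b - 1) x z (by linarith) (by linarith) hx.le (hx.trans hz')
      linarith
  have := hm (Set.self_mem_Ici) hxy hxy
  simp only [f] at this
  simp at this
  linarith

open Real in
theorem aux_P (s : ℝ) (hs : 0 ≤ s) :
    (3 - s ^ 2) ≤ (3 + 6 * s + 5 * s ^ 2 + 2 * s ^ 3) * exp (-(2 * s)) := by
  let f : ℝ → ℝ := fun s => (3 + 6 * s + 5 * s ^ 2 + 2 * s ^ 3) * exp (-(2 * s)) - (3 - s ^ 2)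
  have hd : ∀ z, HasDerivAt f (2 * z * (1 - (1 + 2 * z + 2 * z ^ 2) * exp (-(2 * z)))) z := by
    intro z
    have a1 := (((((hasDerivAt_id z).const_mul 6).const_add 3).add
      ((hasDerivAt_pow 2 z).const_mul 5)).add ((hasDerivAt_pow 3 z).const_mul 2)).mul
      (((hasDerivAt_id z).const_mul 2).neg.exp)
    have a2 := a1.sub ((hasDerivAt_pow 2 z).const_sub 3)
    refine (a2.congr_deriv ?_)
    simp
    ring
  have hm : MonotoneOn f (Set.Ici 0) := by
    apply monotoneOn_of_deriv_nonneg (convex_Ici 0)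
    · exact fun z hz => (hd z).continuousAt.continuousWithinAt
    · exact fun z hz => (hd z).differentiableAt.differentiableWithinAt
    · intro z hz
      rw [interior_Ici] at hz
      have hz' : 0 < z := hz
      rw [(hd z).deriv]
      have h := quadratic_le_exp_of_nonneg (x := 2 * z) (by linarith)
      have : (1 + 2 * z + 2 * z ^ 2) * exp (-(2 * z)) ≤ 1 := by
        rw [exp_neg, ← div_eq_mul_inv, div_le_one (exp_pos _)]
        linarith
      have : 0 ≤ 1 - (1 + 2 * z + 2 * z ^ 2) * exp (-(2 * z)) := by linarith
      positivity
  have := hm (Set.self_mem_Ici) hs hs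
  simp only [f] at this
  simp at this
  linarith

open Real in
theorem aux_K (s : ℝ) (hs : 0 ≤ s) :
    exp (2 * s / (1 + s)) - 1 ≤ (1 + s) * (1 - exp (-(2 * s))) := by
  let f : ℝ → ℝ := fun s => log (2 + s - (1 + s) * exp (-(2 * s))) - 2 * s / (1 + s)
  have hpos : ∀ z : ℝ, 0 ≤ z → 0 < 2 + z - (1 + z) * exp (-(2 * z)) := by
    intro z hz
    have : exp (-(2 * z)) ≤ 1 := exp_le_one_iff.mpr (by linarith)
    nlinarith
  have hd : ∀ z ∈ Set.Ici (0:ℝ), HasDerivAt f ((1 - exp (-(2 * z)) + 2 * (1 + z) * exp (-(2 * z))) / (2 + z - (1 + z) * exp (-(2 * z))) - 2 / (1 + z) ^ 2) z := by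
    intro z hz
    have hz' : (0:ℝ) ≤ z := hz
    have a1 := ((((hasDerivAt_id z).const_add 2).sub (((hasDerivAt_id z).const_add 1).mul
      (((hasDerivAt_id z).const_mul 2).neg.exp))).log (hpos z hz').ne').sub
      (((hasDerivAt_id z).const_mul 2).div ((hasDerivAt_id z).const_add 1) (by simp; linarith))
    refine (a1.congr_deriv ?_)
    simp
    congr 1
    · congr 1
      ring
    · congr 1
      ring
  have hm : MonotoneOn f (Set.Ici 0) := by
    apply monotoneOn_of_deriv_nonneg (convex_Ici 0)
    · exact fun z hz => (hd z hz).continuousAt.continuousWithinAt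
    · intro z hz
      rw [interior_Ici] at hz
      exact (hd z (Set.Ioi_subset_Ici_self hz)).differentiableAt.differentiableWithinAt
    · intro z hz
      rw [interior_Ici] at hz
      have hz' : 0 < z := hz
      rw [(hd z (Set.Ioi_subset_Ici_self hz)).deriv, sub_nonneg, div_le_div_iff₀ (by positivity) (hpos z hz'.le)]
      have := aux_P z hz'.le
      nlinarith
  have := hm (Set.self_mem_Ici) hs hs
  simp only [f] at this
  norm_num at this
  rw [le_log_iff_exp_le (hpos s hs)] at this
  linarith

open Real in
theorem aux_coth (v w : ℝ) (hv : 0 < v) (hvw : v ≤ w) :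
    cosh v / sinh v - 1 / v ≤ cosh w / sinh w - 1 / w := by
  let f : ℝ → ℝ := fun v => cosh v / sinh v - 1 / v
  have hd : ∀ z ∈ Set.Ici v, HasDerivAt f ((sinh z * sinh z - cosh z * cosh z) / sinh z ^ 2 - (0 * z - 1 * 1) / z ^ 2) z := by
    intro z hz
    have hz' : 0 < z := lt_of_lt_of_le hv hz
    exact ((hasDerivAt_cosh z).div (hasDerivAt_sinh z) (sinh_pos_iff.mpr hz').ne').sub
      ((hasDerivAt_const z (1:ℝ)).div (hasDerivAt_id z) hz'.ne')
  have hm : MonotoneOn f (Set.Ici v) := by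
    apply monotoneOn_of_deriv_nonneg (convex_Ici v)
    · exact fun z hz => (hd z hz).continuousAt.continuousWithinAt
    · intro z hz
      rw [interior_Ici] at hz
      exact (hd z (Set.Ioi_subset_Ici_self hz)).differentiableAt.differentiableWithinAt
    · intro z hz
      rw [interior_Ici] at hz
      have hz' : 0 < z := hv.trans hz
      have e : sinh z * sinh z - cosh z * cosh z = -1 := by
        have := cosh_sq z
        nlinarith
      rw [(hd z (Set.Ioi_subset_Ici_self hz)).deriv, e]
      have h := self_le_sinh_iff.mpr hz'.le
      have : 1 / sinh z ^ 2 ≤ 1 / z ^ 2 := by gcongr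
      have e2 : (-1 : ℝ) / sinh z ^ 2 = - (1 / sinh z ^ 2) := by ring
      have e3 : (0 * z - 1 * 1 : ℝ) / z ^ 2 = - (1 / z ^ 2) := by ring
      rw [e2, e3]
      linarith
  exact hm (Set.self_mem_Ici) hvw hvw

open Real in
theorem aux_W (l t s : ℝ) (hl : 1 ≤ l) (ht : 0 < t) (hts : t ≤ s) :
    (l - 1) * log t + log (sinh (l * t)) - l * log (sinh t) ≤
    (l - 1) * log s + log (sinh (l * s)) - l * log (sinh s) := by
  let f : ℝ → ℝ := fun v => (l - 1) * log v + log (sinh (l * v)) - l * log (sinh v)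
  have hd : ∀ z ∈ Set.Ici t, HasDerivAt f ((l - 1) * z⁻¹ + (cosh (l * z) * (l * 1)) / sinh (l * z) - l * (cosh z / sinh z)) z := by
    intro z hz
    have hz' : 0 < z := lt_of_lt_of_le ht hz
    exact (((hasDerivAt_log hz'.ne').const_mul _).add
      ((((hasDerivAt_id z).const_mul l).sinh).log (sinh_pos_iff.mpr (by simp; positivity)).ne')).sub
      (((hasDerivAt_sinh z).log (sinh_pos_iff.mpr hz').ne').const_mul l)
  have hm : MonotoneOn f (Set.Ici t) := by
    apply monotoneOn_of_deriv_nonneg (convex_Ici t)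
    · exact fun z hz => (hd z hz).continuousAt.continuousWithinAt
    · intro z hz
      rw [interior_Ici] at hz
      exact (hd z (Set.Ioi_subset_Ici_self hz)).differentiableAt.differentiableWithinAt
    · intro z hz
      rw [interior_Ici] at hz
      have hz' : 0 < z := ht.trans hz
      rw [(hd z (Set.Ioi_subset_Ici_self hz)).deriv]
      have h := aux_coth z (l * z) hz' (by nlinarith)
      have h2 := mul_le_mul_of_nonneg_left h (by linarith : 0 ≤ l)
      have e : l * (1 / (l * z)) = z⁻¹ := by
        have : l ≠ 0 := by linarith
        field_simp
      have e2 : cosh (l * z) * (l * 1) / sinh (l * z) = l * (cosh (l * z) / sinh (l * z)) := by ring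
      rw [mul_sub, mul_sub, e, one_div] at h2
      rw [e2]
      linarith
  exact hm (Set.self_mem_Ici) hts hts

open Real in
theorem aux_step_s12 (b x : ℝ) (hb : 2 ≤ b) (hx : 0 < x) :
    x ^ (b - 1) * (exp (b / (x + 1)) - 1) ≤ (x + 1) ^ (b - 1) * (1 - exp (-(b / x))) := by
  obtain ⟨l, rfl⟩ : ∃ l, b = 2 * l := ⟨b / 2, by ring⟩
  have hl : 1 ≤ l := by linarith
  have hs : 0 < 1 / x := by positivity
  have ht : 0 < 1 / (x + 1) := by positivity
  have hW := aux_W l (1 / (x + 1)) (1 / x) hl ht (by gcongr; linarith)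
  have hK := aux_K (1 / x) hs.le
  have sx : 0 < sinh (1 / x) := sinh_pos_iff.mpr hs
  have st : 0 < sinh (1 / (x + 1)) := sinh_pos_iff.mpr ht
  have sx' : 0 < sinh (l * (1 / x)) := sinh_pos_iff.mpr (by positivity)
  have st' : 0 < sinh (l * (1 / (x + 1))) := sinh_pos_iff.mpr (by positivity)
  have E1 : ∀ z : ℝ, exp (2 * z) - 1 = 2 * (exp z * sinh z) := by
    intro z
    rw [sinh_eq]
    have : exp z * exp (-z) = 1 := by rw [← exp_add]; simp
    have h2 : exp (2 * z) = exp z * exp z := by rw [← exp_add]; congr 1; ring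
    linarith
  have E2 : ∀ z : ℝ, 1 - exp (-(2 * z)) = 2 * (exp (-z) * sinh z) := by
    intro z
    rw [sinh_eq]
    have : exp z * exp (-z) = 1 := by rw [← exp_add]; simp
    have h2 : exp (-(2 * z)) = exp (-z) * exp (-z) := by rw [← exp_add]; congr 1; ring
    linarith
  have e1 : 2 * (1 / x) / (1 + 1 / x) = 2 * (1 / (x + 1)) := by field_simp
  have e2 : 1 + 1 / x = (x + 1) / x := by field_simp
  rw [e1, e2, E1, E2] at hK
  have hK2 : x * (exp (1 / (x + 1)) * sinh (1 / (x + 1))) ≤ (x + 1) * (exp (-(1 / x)) * sinh (1 / x)) := by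
    have := mul_le_mul_of_nonneg_left hK hx.le
    have e3 : x * ((x + 1) / x * (2 * (exp (-(1 / x)) * sinh (1 / x)))) = 2 * ((x + 1) * (exp (-(1 / x)) * sinh (1 / x))) := by
      field_simp
    linarith
  have hx1 : 0 < x + 1 := by linarith
  have hK3 := log_le_log (by positivity) hK2
  rw [log_mul hx.ne' (by positivity), log_mul (exp_pos _).ne' st.ne', log_mul hx1.ne' (by positivity),
    log_mul (exp_pos _).ne' sx.ne', log_exp, log_exp] at hK3
  have hK4 := mul_le_mul_of_nonneg_left hK3 (by linarith : 0 ≤ l)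
  rw [one_div, one_div, log_inv, log_inv] at hW
  have f1 : 2 * l / (x + 1) = 2 * (l * (x + 1)⁻¹) := by ring
  have f2 : 2 * l / x = 2 * (l * x⁻¹) := by ring
  rw [f1, f2, E1, E2]
  rw [one_div] at hK4 sx' st' sx st
  rw [one_div] at hK4
  rw [← log_le_log_iff (by positivity) (by positivity)]
  rw [log_mul (by positivity) (by positivity), log_mul (by positivity) (by positivity),
    log_mul (by positivity) (by positivity), log_mul (by positivity) (by positivity),
    log_mul (by positivity) (by positivity), log_mul (by positivity) (by positivity),
    log_exp, log_exp, log_rpow hx, log_rpow hx1]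
  nlinarith

open Real in
theorem aux_ratio (b : ℝ) (hb : 0 < b) (S : ℕ → ℝ) (h0 : S 0 = 0)
    (hS : ∀ n : ℕ, S (n + 1) = S n + ((n + 1 : ℕ) : ℝ) ^ (b - 1)) (hpos : ∀ n : ℕ, 0 < S (n + 1)) (n : ℕ) :
    b / ((n + 2 : ℕ) : ℝ) ≤ log (S (n + 2)) - log (S (n + 1)) := by
  have key : ∀ n : ℕ, 0 < ((n + 1 : ℕ) : ℝ) := fun n => by positivity
  rcases le_total b 2 with h2 | h2
  · have T : S (n + 1) + ((n + 2 : ℕ) : ℝ) ^ (b - 1) / 2 ≤ ((n + 2 : ℕ) : ℝ) ^ b / b := by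
      rcases le_total b 1 with h1 | h1
      · have : ∀ m : ℕ, S m ≤ (m : ℝ) ^ b / b := by
          intro m
          induction m with
          | zero => rw [h0]; positivity
          | succ m ih =>
            rw [hS]
            have := aux_bern_s12 b (m : ℝ) ((m + 1 : ℕ) : ℝ) hb.le h1 (by positivity) (key m)
            rw [le_div_iff₀ hb] at ih ⊢
            push_cast at this ⊢
            linarith
        have h := this (n + 2)
        rw [hS] at h
        have : 0 < (((n + 1) + 1 : ℕ) : ℝ) ^ (b - 1) := rpow_pos_of_pos (key _) _
        have e : n + 2 = n + 1 + 1 := rfl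
        rw [e]
        linarith
      · have : ∀ m : ℕ, S m + ((m + 1 : ℕ) : ℝ) ^ (b - 1) / 2 ≤ ((m + 1 : ℕ) : ℝ) ^ b / b := by
          intro m
          induction m with
          | zero =>
            rw [h0]; simp
            rw [inv_le_inv₀ (by norm_num) hb]; exact h2
          | succ m ih =>
            rw [hS]
            have := aux_trap_s12 b ((m + 1 : ℕ) : ℝ) ((m + 1 + 1 : ℕ) : ℝ) h1 h2 (key m) (by push_cast; linarith)
            have e : ((m + 1 + 1 : ℕ) : ℝ) - ((m + 1 : ℕ) : ℝ) = 1 := by push_cast; ring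
            rw [e, sub_div] at this
            linarith
        exact this (n + 1)
    have hx := hpos n
    have hn : 0 < ((n + 2 : ℕ) : ℝ) := key (n + 1)
    have ha : 0 < ((n + 2 : ℕ) : ℝ) ^ (b - 1) := rpow_pos_of_pos hn _
    have hSS : S (n + 2) = S (n + 1) + ((n + 2 : ℕ) : ℝ) ^ (b - 1) := hS (n + 1)
    have e : ((n + 2 : ℕ) : ℝ) ^ b = ((n + 2 : ℕ) : ℝ) * ((n + 2 : ℕ) : ℝ) ^ (b - 1) := by
      rw [rpow_sub_one hn.ne']; field_simp
    rw [e] at T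
    rw [hSS]
    generalize S (n + 1) = x at *
    generalize ((n + 2 : ℕ) : ℝ) = N at *
    generalize N ^ (b - 1) = a at *
    have hl := le_log_one_add_of_nonneg (x := a / x) (by positivity)
    rw [← log_div (by positivity) hx.ne']
    have e2 : (x + a) / x = 1 + a / x := by field_simp
    rw [e2]
    refine le_trans ?_ hl
    have e3 : 2 * (a / x) / (a / x + 2) = 2 * a / (a + 2 * x) := by field_simp
    rw [e3, div_le_div_iff₀ hn (by positivity)]
    rw [le_div_iff₀ hb] at T
    linarith
  · have P : ∀ m : ℕ, S m * (exp (b / ((m + 1 : ℕ) : ℝ)) - 1) ≤ ((m + 1 : ℕ) : ℝ) ^ (b - 1) := by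
      intro m
      induction m with
      | zero => rw [h0]; simp
      | succ m ih =>
        have st := aux_step_s12 b ((m + 1 : ℕ) : ℝ) h2 (key m)
        have ec : ((m + 1 : ℕ) : ℝ) + 1 = ((m + 1 + 1 : ℕ) : ℝ) := by push_cast; ring
        rw [ec] at st
        rw [hS]
        have hk := key m
        have hk2 := key (m + 1)
        generalize ((m + 1 : ℕ) : ℝ) = x at *
        generalize ((m + 1 + 1 : ℕ) : ℝ) = y at *
        have hE : 1 < exp (b / x) := one_lt_exp_iff.mpr (by positivity)
        have hF : 1 < exp (b / y) := one_lt_exp_iff.mpr (by positivity)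
        rw [exp_neg] at st
        generalize exp (b / x) = E at *
        generalize exp (b / y) = F at *
        have hE' : 0 < E - 1 := by linarith
        have i1 : (S m + x ^ (b - 1)) * (E - 1) ≤ x ^ (b - 1) * E := by linarith
        have i2 : x ^ (b - 1) * E * (F - 1) ≤ y ^ (b - 1) * (E - 1) := by
          have := mul_le_mul_of_nonneg_left st (by linarith : 0 ≤ E)
          have e : E * (y ^ (b - 1) * (1 - E⁻¹)) = y ^ (b - 1) * (E - 1) := by
            field_simp
          linarith
        have i3 := mul_le_mul_of_nonneg_right i1 (by linarith : 0 ≤ F - 1)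
        refine le_of_mul_le_mul_right ?_ hE'
        linarith
    have h := P (n + 1)
    have hSS : S (n + 2) = S (n + 1) + ((n + 1 + 1 : ℕ) : ℝ) ^ (b - 1) := hS (n + 1)
    have hx := hpos n
    have h3 : S (n + 1) * exp (b / ((n + 2 : ℕ) : ℝ)) ≤ S (n + 2) := by
      rw [hSS]
      have e : n + 2 = n + 1 + 1 := rfl
      rw [e]; linarith
    have h4 := log_le_log (by positivity) h3
    rw [log_mul hx.ne' (exp_pos _).ne', log_exp] at h4
    linarith

/-- Corollary 4.3 (simplified form): for `p > 1`, `α > p - 1` and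
`S_n = ∑_{k=1}^n k^{α-p}`, for every `n ≥ 2` one has
`S_{n-1}^{-1/(p-1)} - S_n^{-1/(p-1)} ≥ (α-p+1)^{p/(p-1)} / ((p-1) n^{α/(p-1)})`. -/
theorem stmt_12 (p α : ℝ) (hp : 1 < p) (hα : p - 1 < α)
    (S : ℕ → ℝ) (hS : ∀ n, S n = ∑ k ∈ Finset.Icc 1 n, (k : ℝ) ^ (α - p)) :
    ∀ n : ℕ, 2 ≤ n →
      S (n - 1) ^ (-1 / (p - 1)) - S n ^ (-1 / (p - 1)) ≥
        (α - p + 1) ^ (p / (p - 1)) / ((p - 1) * (n : ℝ) ^ (α / (p - 1))) := by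
  intro n hn
  obtain ⟨m, rfl⟩ : ∃ m, n = m + 2 := ⟨n - 2, by omega⟩
  have hb : 0 < α - p + 1 := by linarith
  have hp1 : 0 < p - 1 := by linarith
  have hrec : ∀ n : ℕ, S (n + 1) = S n + ((n + 1 : ℕ) : ℝ) ^ (α - p + 1 - 1) := by
    intro n
    rw [hS, hS, Finset.sum_Icc_succ_top (by omega), add_sub_cancel_right]
  have hpos : ∀ n : ℕ, 0 < S (n + 1) := by
    intro n
    rw [hS]
    apply Finset.sum_pos
    · intro i hi
      have : 0 < i := by simp at hi; omega
      positivity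
    · exact ⟨1, by simp⟩
  have hr := aux_ratio (α - p + 1) hb S (by rw [hS]; simp) hrec hpos m
  have hSS : S (m + 2) = S (m + 1) + ((m + 2 : ℕ) : ℝ) ^ (α - p + 1 - 1) := hrec (m + 1)
  have e0 : m + 2 - 1 = m + 1 := rfl
  rw [e0]
  have hN : 0 < ((m + 2 : ℕ) : ℝ) := by positivity
  generalize ((m + 2 : ℕ) : ℝ) = N at *
  have ha : 0 < N ^ (α - p + 1 - 1) := by positivity
  obtain ⟨b, hbe⟩ : ∃ b, b = α - p + 1 := ⟨_, rfl⟩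
  obtain ⟨q, hqe⟩ : ∃ q, q = 1 / (p - 1) := ⟨_, rfl⟩
  have hq : 0 < q := by rw [hqe]; positivity
  rw [← hbe] at hb hr hSS ha ⊢
  have hd : S (m + 2) - S (m + 1) = N ^ (b - 1) := by linarith
  have A := aux_A q (S (m + 1)) (S (m + 2)) (N ^ b / b) hq (hpos m) (by linarith) (by positivity) (by
    rw [hd]
    refine le_trans (le_of_eq ?_) hr
    rw [Real.rpow_sub_one hN.ne']
    field_simp)
  have e1 : -1 / (p - 1) = -q := by rw [hqe]; ring
  have e2 : p / (p - 1) = q + 1 := by rw [hqe]; field_simp; ring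
  have e3 : α / (p - 1) = b * q + 1 := by rw [hqe, hbe]; field_simp; ring
  rw [e1, e2, e3]
  refine le_trans (le_of_eq ?_) A
  rw [hd, Real.rpow_neg (by positivity), Real.div_rpow (by positivity) hb.le, ← Real.rpow_mul hN.le]
  have e4 : N ^ (b * (q + 1)) = N ^ (b * q + 1) * N ^ (b - 1) := by
    rw [← Real.rpow_add hN]; congr 1; ring
  rw [e4, hqe]
  have := Real.rpow_pos_of_pos hN (b * (1 / (p - 1)) + 1)
  have := Real.rpow_pos_of_pos hb (1 / (p - 1) + 1)
  field_simp
end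

section
/- Let p > 1 and let α ≥ 0 be a real number with α ≠ p - 1. Then for every finitely supported sequence u : ℕ → ℝ with u_0 = 0, ∑_{n=1}^∞ |u_n - u_{n-1}|^p n^α ≥ |(α - p + 1)/p|^p · ∑_{n=1}^∞ |u_n|^p n^{α-p}. -/
theorem aux_young_s13 (p s c w1 w2 a b : ℝ) (hp : 1 < p) (hs0 : 0 < s) (hs1 : s < 1) (hc : 0 ≤ c)
    (h1 : c ≤ w1 * (1 - s) ^ (p - 1)) (h2 : c ≤ w2 * s ^ (p - 1)) :
    c * |a| ^ p ≤ w1 * |a - b| ^ p + w2 * |b| ^ p := by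
  have hs1' : 0 < 1 - s := by linarith
  have hconv := (convexOn_rpow hp.le).2 (x := |a - b| / (1 - s)) (y := |b| / s)
    (Set.mem_Ici.2 (by positivity)) (Set.mem_Ici.2 (by positivity)) hs1'.le hs0.le (by ring)
  simp only [smul_eq_mul] at hconv
  rw [mul_div_cancel₀ _ hs1'.ne', mul_div_cancel₀ _ hs0.ne',
    Real.div_rpow (abs_nonneg _) hs1'.le, Real.div_rpow (abs_nonneg _) hs0.le] at hconv
  have e1 : (1 - s) ^ p = (1 - s) ^ (p - 1) * (1 - s) := by
    rw [← Real.rpow_add_one hs1'.ne']; ring_nf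
  have e2 : s ^ p = s ^ (p - 1) * s := by
    rw [← Real.rpow_add_one hs0.ne']; ring_nf
  have hA : 0 < (1 - s) ^ (p - 1) := Real.rpow_pos_of_pos hs1' _
  have hB : 0 < s ^ (p - 1) := Real.rpow_pos_of_pos hs0 _
  rw [e1, e2] at hconv
  have htri : |a| ^ p ≤ (|a - b| + |b|) ^ p := by
    apply Real.rpow_le_rpow (abs_nonneg _) _ (by linarith)
    have := abs_add_le (a - b) b
    simpa using this
  have hd : 0 ≤ |a - b| ^ p := by positivity
  have hb : 0 ≤ |b| ^ p := by positivity
  calc c * |a| ^ p ≤ c * ((1 - s) * (|a - b| ^ p / ((1 - s) ^ (p - 1) * (1 - s)))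
        + s * (|b| ^ p / (s ^ (p - 1) * s))) := by
        apply mul_le_mul_of_nonneg_left (htri.trans hconv) hc
    _ = c / (1 - s) ^ (p - 1) * |a - b| ^ p + c / s ^ (p - 1) * |b| ^ p := by
        field_simp
    _ ≤ _ := by
        gcongr
        · rwa [div_le_iff₀ hA]
        · rwa [div_le_iff₀ hB]

/-- one step, subcritical case; `n = y` denotes the real index -/
theorem aux_step1 (p l n a b : ℝ) (hp : 1 < p) (hl : 0 < l) (hlp : l * p ≤ p - 1) (hn : 1 ≤ n)
    (hb : n = 1 → b = 0) :
    l ^ p * (|a| ^ p * n ^ (p - 1 - l * p - p)) + l ^ (p - 1) * n ^ (-(l * p)) * |a| ^ p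
      ≤ |a - b| ^ p * n ^ (p - 1 - l * p) + l ^ (p - 1) * (n - 1) ^ (-(l * p)) * |b| ^ p := by
  have hn0 : 0 < n := by linarith
  have hq : 0 < p - 1 := by linarith
  set e := l * p / (p - 1) with he
  have he0 : 0 < e := by positivity
  have he1 : e ≤ 1 := by rw [he, div_le_one hq]; exact hlp
  set y := 1 - 1 / n with hy
  have hy0 : 0 ≤ y := by rw [hy, sub_nonneg, div_le_one hn0]; exact hn
  have hye : y ^ e ≤ 1 - e * (1 / n) := by
    have := rpow_one_add_le_one_add_mul_self (s := -(1 / n)) (by linarith) he0.le he1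
    rw [hy]; convert this using 1 <;> ring_nf
  set D := l / n + y ^ e with hD
  have hye0 : 0 ≤ y ^ e := Real.rpow_nonneg hy0 _
  have hD0 : 0 < D := by positivity
  have hD1 : D ≤ 1 - (l / n) / (p - 1) := by
    have : l / n + (1 - e * (1 / n)) = 1 - (l / n) / (p - 1) := by
      rw [he]; field_simp; ring
    linarith
  have hDq : (1 + l / n) * D ^ (p - 1) ≤ 1 := by
    have h1 : D ≤ Real.exp (-((l / n) / (p - 1))) := by
      have := Real.add_one_le_exp (-((l / n) / (p - 1)))
      linarith
    have h2 : D ^ (p - 1) ≤ Real.exp (-(l / n)) := by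
      calc D ^ (p - 1) ≤ (Real.exp (-((l / n) / (p - 1)))) ^ (p - 1) :=
            Real.rpow_le_rpow hD0.le h1 hq.le
        _ = _ := by rw [← Real.exp_mul]; congr 1; field_simp
    have h3 : 1 + l / n ≤ Real.exp (l / n) := by
      have := Real.add_one_le_exp (l / n); linarith
    calc _ ≤ Real.exp (l / n) * Real.exp (-(l / n)) := by
          apply mul_le_mul h3 h2 (Real.rpow_nonneg hD0.le _) (Real.exp_pos _).le
      _ = 1 := by rw [← Real.exp_add]; simp
  set c := l ^ (p - 1) * n ^ (-(l * p)) * (1 + l / n) with hc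
  have hc0 : 0 ≤ c := by positivity
  have hlhs : l ^ p * (|a| ^ p * n ^ (p - 1 - l * p - p)) + l ^ (p - 1) * n ^ (-(l * p)) * |a| ^ p
      = c * |a| ^ p := by
    have e1 : l ^ p = l ^ (p - 1) * l := by
      rw [← Real.rpow_add_one hl.ne']; ring_nf
    have e2 : n ^ (p - 1 - l * p - p) = n ^ (-(l * p)) / n := by
      rw [← Real.rpow_sub_one hn0.ne']; ring_nf
    rw [hc, e1, e2]; field_simp; ring
  rw [hlhs]
  have hcD : c * D ^ (p - 1) ≤ l ^ (p - 1) * n ^ (-(l * p)) := by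
    calc c * D ^ (p - 1) = l ^ (p - 1) * n ^ (-(l * p)) * ((1 + l / n) * D ^ (p - 1)) := by
          rw [hc]; ring
      _ ≤ l ^ (p - 1) * n ^ (-(l * p)) * 1 := by gcongr
      _ = _ := by ring
  have hDp : 0 < D ^ (p - 1) := Real.rpow_pos_of_pos hD0 _
  have hw1 : c ≤ n ^ (p - 1 - l * p) * ((l / n) / D) ^ (p - 1) := by
    rw [Real.div_rpow (by positivity) hD0.le, ← mul_div_assoc, le_div_iff₀ hDp]
    refine hcD.trans (le_of_eq ?_)
    rw [Real.div_rpow hl.le hn0.le, show p - 1 - l * p = -(l * p) + (p - 1) by ring,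
      Real.rpow_add hn0]
    have : 0 < n ^ (p - 1) := Real.rpow_pos_of_pos hn0 _
    field_simp
  rcases eq_or_lt_of_le hn with h | h
  · have hb0 := hb h.symm
    subst hb0
    have hy0' : y = 0 := by rw [hy, ← h]; norm_num
    have hDl : (l / n) / D = 1 := by
      rw [hD, hy0', Real.zero_rpow he0.ne', add_zero, div_self (by positivity)]
    rw [hDl, Real.one_rpow, mul_one] at hw1
    rw [abs_zero, Real.zero_rpow (by linarith), mul_zero, add_zero, sub_zero, mul_comm]
    gcongr
  · have hy1 : 0 < y := by
      rw [hy, sub_pos, div_lt_one hn0]; exact h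
    have hyep : 0 < y ^ e := Real.rpow_pos_of_pos hy1 _
    have hs : 1 - y ^ e / D = (l / n) / D := by
      rw [hD]; rw [hD] at hD0; field_simp; ring
    have := aux_young_s13 p (y ^ e / D) c (n ^ (p - 1 - l * p)) (l ^ (p - 1) * (n - 1) ^ (-(l * p)))
      a b hp (by positivity)
      (by rw [div_lt_one hD0, hD]; have : 0 < l / n := by positivity
          linarith) hc0 (by rw [hs]; exact hw1) ?_
    · rw [mul_comm (|a - b| ^ p)]; exact this
    · rw [Real.div_rpow hyep.le hD0.le, ← mul_div_assoc, le_div_iff₀ hDp]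
      refine hcD.trans (le_of_eq ?_)
      rw [← Real.rpow_mul hy0, show e * (p - 1) = l * p by rw [he]; field_simp, mul_assoc]
      congr 1
      have h3 : y = (n - 1) / n := by rw [hy]; field_simp
      have hn1 : 0 < n - 1 := by linarith
      rw [h3, Real.div_rpow hn1.le hn0.le, Real.rpow_neg hn0.le, Real.rpow_neg hn1.le]
      have : 0 < (n - 1) ^ (l * p) := Real.rpow_pos_of_pos hn1 _
      field_simp

/-- one step, supercritical case -/
theorem aux_step2 (p l n m a b : ℝ) (hp : 1 < p) (hl : 0 < l) (hn : 1 ≤ n)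
    (hm0 : 0 < m) (hm : m ≤ n + 1 / p)
    (hA : (m - 1 / p) ^ (l * p) + l * n ^ (l * p - 1) ≤ m ^ (l * p)) :
    l ^ p * (|a| ^ p * n ^ (p - 1 + l * p - p)) + l ^ (p - 1) * (m - 1 / p) ^ (l * p) * |a| ^ p
      ≤ |b - a| ^ p * (n + 1) ^ (p - 1 + l * p)
        + l ^ (p - 1) * (m + 1 - 1 / p) ^ (l * p) * |b| ^ p := by
  have hn0 : 0 < n := by linarith
  have hp0 : 0 < p := by linarith
  have hq : 0 < p - 1 := by linarith
  have hpi : 1 / p < 1 := by rw [div_lt_one hp0]; exact hp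
  set y := m + 1 - 1 / p with hy
  have hmy : m < y := by linarith
  have hy0 : 0 < y := by linarith
  have hyn : y ≤ n + 1 := by linarith
  set e := l * p / (p - 1) with he
  have he0 : 0 < e := by positivity
  have hle : l ^ p * (|a| ^ p * n ^ (p - 1 + l * p - p))
      + l ^ (p - 1) * (m - 1 / p) ^ (l * p) * |a| ^ p ≤ l ^ (p - 1) * m ^ (l * p) * |a| ^ p := by
    have e1 : l ^ p = l ^ (p - 1) * l := by
      rw [← Real.rpow_add_one hl.ne']; ring_nf
    have e2 : n ^ (p - 1 + l * p - p) = n ^ (l * p - 1) := by ring_nf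
    rw [e1, e2]
    calc _ = l ^ (p - 1) * ((m - 1 / p) ^ (l * p) + l * n ^ (l * p - 1)) * |a| ^ p := by ring
      _ ≤ _ := by gcongr
  refine hle.trans ?_
  set t := y / m with ht
  have ht0 : 0 < t := by positivity
  have ht1 : 1 < t := by rw [ht, one_lt_div hm0]; exact hmy
  have hte : 1 + l / y ≤ t ^ e := by
    have h1 : 1 - t⁻¹ ≤ Real.log t := Real.one_sub_inv_le_log_of_pos ht0
    have h2 : t ^ e = Real.exp (Real.log t * e) := Real.rpow_def_of_pos ht0 e
    have h3 := Real.add_one_le_exp (Real.log t * e)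
    have h4 : (1 - t⁻¹) * e = l / y := by
      have h5 : y - m = (p - 1) / p := by rw [hy]; field_simp; ring
      have h6 : 1 - t⁻¹ = (y - m) / y := by rw [ht]; field_simp
      rw [h6, h5, he]; field_simp
    have h7 : (1 - t⁻¹) * e ≤ Real.log t * e := by gcongr
    rw [h2]; linarith
  have hte0 : 0 < t ^ e := Real.rpow_pos_of_pos ht0 _
  have hteq : (t ^ e) ^ (p - 1) = y ^ (l * p) / m ^ (l * p) := by
    rw [← Real.rpow_mul ht0.le, show e * (p - 1) = l * p by rw [he]; field_simp, ht,
      Real.div_rpow hy0.le hm0.le]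
  have hly : 0 < l / y := by positivity
  have hmlp : 0 < m ^ (l * p) := Real.rpow_pos_of_pos hm0 _
  have hylp : 0 < y ^ (l * p) := Real.rpow_pos_of_pos hy0 _
  have := aux_young_s13 p (1 / t ^ e) (l ^ (p - 1) * m ^ (l * p)) ((n + 1) ^ (p - 1 + l * p))
    (l ^ (p - 1) * y ^ (l * p)) a b hp (by positivity)
    (by rw [div_lt_one hte0]; linarith) (by positivity) ?_ ?_
  · rw [abs_sub_comm b a, mul_comm (|a - b| ^ p)]; exact this
  · have h1 : (l / y) / t ^ e ≤ 1 - 1 / t ^ e := by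
      rw [div_le_iff₀ hte0, sub_mul, div_mul_cancel₀ _ hte0.ne']; linarith
    calc l ^ (p - 1) * m ^ (l * p) = y ^ (p - 1 + l * p) * ((l / y) / t ^ e) ^ (p - 1) := by
          rw [Real.div_rpow hly.le hte0.le, hteq, Real.div_rpow hl.le hy0.le, Real.rpow_add hy0]
          have : 0 < y ^ (p - 1) := Real.rpow_pos_of_pos hy0 _
          field_simp
      _ ≤ _ := by gcongr
  · rw [Real.div_rpow zero_le_one hte0.le, hteq, Real.one_rpow]
    apply le_of_eq
    field_simp

theorem aux_sum1 (d h E : ℕ → ℝ) (C : ℝ) (N : ℕ) (h0 : E 0 = 0)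
    (hs : ∀ k, C * h k + E (k + 1) ≤ d k + E k) :
    C * ∑ k ∈ Finset.range N, h k + E N ≤ ∑ k ∈ Finset.range N, d k := by
  induction N with
  | zero => simp [h0]
  | succ N ih => rw [Finset.sum_range_succ, Finset.sum_range_succ]; linarith [hs N]

theorem aux_sum2 (d h E : ℕ → ℝ) (C : ℝ) (N : ℕ) (hd : 0 ≤ d 0) (hE : 0 ≤ E 0)
    (hs : ∀ k, C * h k + E k ≤ d (k + 1) + E (k + 1)) :
    C * ∑ k ∈ Finset.range N, h k ≤ ∑ k ∈ Finset.range (N + 1), d k + E N := by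
  induction N with
  | zero => simp; linarith
  | succ N ih => rw [Finset.sum_range_succ, Finset.sum_range_succ]; linarith [hs N]

/-- Theorem 4.5 (inequality): for `p > 1`, `α ≥ 0`, `α ≠ p - 1`, the discrete weighted
`p`-Hardy inequality holds with the sharp continuous constant `|(α-p+1)/p|^p`. -/
theorem stmt_13 (p α : ℝ) (hp : 1 < p) (hα0 : 0 ≤ α) (hα : α ≠ p - 1) :
    ∀ u : ℕ → ℝ, (Function.support u).Finite → u 0 = 0 →
      ∑' n : ℕ, |u (n + 1) - u n| ^ p * ((n : ℝ) + 1) ^ α ≥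
        |(α - p + 1) / p| ^ p * ∑' n : ℕ, |u (n + 1)| ^ p * ((n : ℝ) + 1) ^ (α - p) := by
  intro u hu hu0
  have hp0 : 0 < p := by linarith
  obtain ⟨N, hN⟩ : ∃ N : ℕ, ∀ k, N ≤ k → u k = 0 := by
    obtain ⟨M, hM⟩ := hu.bddAbove
    refine ⟨M + 1, fun k hk => ?_⟩
    by_contra hne
    have := hM (Function.mem_support.2 hne)
    omega
  have hz : (0 : ℝ) ^ p = 0 := Real.zero_rpow hp0.ne'
  have hT1 : ∑' n : ℕ, |u (n + 1) - u n| ^ p * ((n : ℝ) + 1) ^ α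
      = ∑ n ∈ Finset.range (N + 1), |u (n + 1) - u n| ^ p * ((n : ℝ) + 1) ^ α := by
    apply tsum_eq_sum
    intro k hk
    rw [Finset.mem_range, not_lt] at hk
    rw [hN k (by omega), hN (k + 1) (by omega)]; simp [hz]
  have hT2 : ∀ M, N ≤ M → ∑' n : ℕ, |u (n + 1)| ^ p * ((n : ℝ) + 1) ^ (α - p)
      = ∑ n ∈ Finset.range M, |u (n + 1)| ^ p * ((n : ℝ) + 1) ^ (α - p) := by
    intro M hM
    apply tsum_eq_sum
    intro k hk
    rw [Finset.mem_range, not_lt] at hk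
    rw [hN (k + 1) (by omega)]; simp [hz]
  rw [hT1, ge_iff_le]
  rcases lt_or_gt_of_ne hα with h | h
  · obtain ⟨l, hl⟩ : ∃ l, l = (p - 1 - α) / p := ⟨_, rfl⟩
    have hl0 : 0 < l := by rw [hl]; apply div_pos <;> linarith
    have hlp : α = p - 1 - l * p := by rw [hl]; field_simp; ring
    have hC : |(α - p + 1) / p| = l := by
      rw [show (α - p + 1) / p = -l by rw [hl]; ring, abs_neg, abs_of_pos hl0]
    rw [hC, hT2 (N + 1) (by omega)]
    have key := aux_sum1 (fun n : ℕ => |u (n + 1) - u n| ^ p * ((n : ℝ) + 1) ^ α)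
      (fun n : ℕ => |u (n + 1)| ^ p * ((n : ℝ) + 1) ^ (α - p))
      (fun n : ℕ => l ^ (p - 1) * (n : ℝ) ^ (-(l * p)) * |u n| ^ p) (l ^ p) (N + 1)
      (by simp [hu0, hz]) ?_
    · simpa [hN (N + 1) (by omega), hz] using key
    · intro k
      have := aux_step1 p l ((k : ℝ) + 1) (u (k + 1)) (u k) hp hl0 (by linarith)
        (by have : (0 : ℝ) ≤ k := Nat.cast_nonneg k
            linarith)
        (by intro hk
            have : k = 0 := by
              have : (k : ℝ) = 0 := by linarith
              exact_mod_cast this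
            rw [this]; exact hu0)
      rw [← hlp, add_sub_cancel_right] at this
      simpa using this
  · obtain ⟨l, hl⟩ : ∃ l, l = (α - p + 1) / p := ⟨_, rfl⟩
    have hl0 : 0 < l := by rw [hl]; apply div_pos <;> linarith
    have hlp : α = p - 1 + l * p := by rw [hl]; field_simp; ring
    rw [← hl, abs_of_pos hl0, hT2 N le_rfl]
    have hpi : 1 / p < 1 := by rw [div_lt_one hp0]; exact hp
    have hpi0 : 0 < 1 / p := by positivity
    obtain ⟨t, ht0, ht1, hA⟩ : ∃ t : ℝ, 0 ≤ t ∧ t ≤ 1 / p ∧ ∀ n : ℝ, 1 ≤ n →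
        (n + t - 1 / p) ^ (l * p) + l * n ^ (l * p - 1) ≤ (n + t) ^ (l * p) := by
      have hlp0 : 0 < l * p := by positivity
      rcases le_total 1 (l * p) with h1 | h1
      · refine ⟨1 / p, hpi0.le, le_rfl, fun n hn => ?_⟩
        have hn0 : 0 < n := by linarith
        have hb := one_add_mul_self_le_rpow_one_add (s := 1 / p / n)
          (by have : 0 < 1 / p / n := by positivity
              linarith) h1
        have e1 : n + 1 / p = n * (1 + 1 / p / n) := by field_simp
        have e2 : l * p * (1 / p / n) = l / n := by field_simp
        rw [e2] at hb
        rw [add_sub_cancel_right, e1, Real.mul_rpow hn0.le (by positivity),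
          Real.rpow_sub_one hn0.ne']
        have := mul_le_mul_of_nonneg_left hb (Real.rpow_nonneg hn0.le (l * p))
        refine le_trans (le_of_eq ?_) this
        ring
      · refine ⟨0, le_rfl, hpi0.le, fun n hn => ?_⟩
        have hn0 : 0 < n := by linarith
        have hs1 : 1 / p / n ≤ 1 := by
          rw [div_le_one hn0]; linarith
        have hb := rpow_one_add_le_one_add_mul_self (s := -(1 / p / n))
          (by linarith) hlp0.le h1
        have e1 : n + 0 - 1 / p = n * (1 + -(1 / p / n)) := by field_simp; ring
        have e2 : l * p * (-(1 / p / n)) = -(l / n) := by field_simp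
        rw [e2] at hb
        rw [e1, Real.mul_rpow hn0.le (by linarith), Real.rpow_sub_one hn0.ne', add_zero]
        have := mul_le_mul_of_nonneg_left hb (Real.rpow_nonneg hn0.le (l * p))
        have e3 : n ^ (l * p) * (1 + -(l / n)) = n ^ (l * p) - l * (n ^ (l * p) / n) := by ring
        linarith
    have key := aux_sum2 (fun n : ℕ => |u (n + 1) - u n| ^ p * ((n : ℝ) + 1) ^ α)
      (fun n : ℕ => |u (n + 1)| ^ p * ((n : ℝ) + 1) ^ (α - p))
      (fun n : ℕ => l ^ (p - 1) * ((n : ℝ) + 1 + t - 1 / p) ^ (l * p) * |u (n + 1)| ^ p) (l ^ p) N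
      (by positivity) ?_ ?_
    · simpa [hN (N + 1) (by omega), hz] using key
    · have : 0 ≤ ((0 : ℕ) : ℝ) + 1 + t - 1 / p := by push_cast; linarith
      have := Real.rpow_nonneg this (l * p)
      positivity
    · intro k
      have hk : (0 : ℝ) ≤ k := Nat.cast_nonneg k
      have := aux_step2 p l ((k : ℝ) + 1) ((k : ℝ) + 1 + t) (u (k + 1)) (u (k + 1 + 1)) hp hl0
        (by linarith) (by linarith) (by linarith) (hA _ (by linarith))
      rw [← hlp] at this
      have e : (k : ℝ) + 1 + t + 1 - 1 / p = (k : ℝ) + 1 + 1 + t - 1 / p := by ring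
      rw [e] at this
      simpa only [Nat.cast_add, Nat.cast_one] using this
end

section
/- Let p > 1 and let α ≥ 0 be a real number with α ≠ p - 1. For every constant C > |(α - p + 1)/p|^p there exists a finitely supported sequence u : ℕ → ℝ with u_0 = 0, not identically zero, such that ∑_{n=1}^∞ |u_n - u_{n-1}|^p n^α < C · ∑_{n=1}^∞ |u_n|^p n^{α-p}. In other words, the constant |(α - p + 1)/p|^p in the discrete Hardy inequality is sharp. -/
lemma aux_lim (p α b : ℝ) (hp : 1 < p) (hb : b * p = p - 1 - α) :
    Filter.Tendsto (fun n : ℕ => |((n : ℝ) + 1) ^ b - (n : ℝ) ^ b| ^ p * ((n : ℝ) + 1) ^ α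
      * ((n : ℝ) + 1)) Filter.atTop (nhds (|b| ^ p)) := by
  have h1 : HasDerivAt (fun x : ℝ => x ^ b) b 1 := by
    have := Real.hasDerivAt_rpow_const (x := 1) (p := b) (Or.inl one_ne_zero)
    simpa using this
  have h2 := h1.tendsto_slope
  have h3 : Filter.Tendsto (fun n : ℕ => 1 - 1 / ((n : ℝ) + 1)) Filter.atTop
      (nhdsWithin 1 {1}ᶜ) := by
    apply tendsto_nhdsWithin_of_tendsto_nhds_of_eventually_within
    · have := (tendsto_one_div_add_atTop_nhds_zero_nat (𝕜 := ℝ)).const_sub 1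
      simpa using this
    · refine Filter.Eventually.of_forall fun n => ?_
      have : (0 : ℝ) < 1 / ((n : ℝ) + 1) := by positivity
      simp only [Set.mem_compl_iff, Set.mem_singleton_iff]
      intro h
      linarith
  have h4 := (h2.comp h3).abs.rpow_const (p := p) (Or.inr (by linarith))
  refine h4.congr fun n => ?_
  have hn : (0 : ℝ) < (n : ℝ) + 1 := by positivity
  have e1 : (1 - 1 / ((n : ℝ) + 1)) = n / ((n : ℝ) + 1) := by field_simp; ring
  have e2 : (n : ℝ) / ((n : ℝ) + 1) - 1 = - (1 / ((n : ℝ) + 1)) := by field_simp; ring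
  have e3 : |slope (fun x : ℝ => x ^ b) 1 (n / ((n : ℝ) + 1))|
      = |((n : ℝ) + 1) ^ b - (n : ℝ) ^ b| * (((n : ℝ) + 1) * (((n : ℝ) + 1) ^ b)⁻¹) := by
    rw [slope_def_field, Real.one_rpow, e2, Real.div_rpow (by positivity) hn.le]
    have hq : (0 : ℝ) < ((n : ℝ) + 1) ^ b := by positivity
    rw [← abs_of_pos (show (0 : ℝ) < (((n : ℝ) + 1) * (((n : ℝ) + 1) ^ b)⁻¹) by positivity),
      ← abs_mul]
    congr 1
    field_simp
    ring
  simp only [Function.comp]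
  rw [e1, e3, Real.mul_rpow (abs_nonneg _) (by positivity), mul_assoc]
  congr 1
  rw [← Real.rpow_neg hn.le]
  nth_rewrite 1 [← Real.rpow_one ((n : ℝ) + 1)]
  rw [← Real.rpow_add hn, ← Real.rpow_mul hn.le]
  nth_rewrite 3 [← Real.rpow_one ((n : ℝ) + 1)]
  rw [← Real.rpow_add hn]
  congr 1
  linarith

lemma aux_bdd (t : ℕ → ℝ) (c : ℝ)
    (h : ∀ᶠ n : ℕ in Filter.atTop, t n ≤ c * (1 / ((n : ℝ) + 1))) :
    ∃ K : ℝ, ∀ M : ℕ, ∑ n ∈ Finset.range M, t n ≤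
      K + c * ∑ n ∈ Finset.range M, 1 / ((n : ℝ) + 1) := by
  obtain ⟨N, hN⟩ := Filter.eventually_atTop.1 h
  refine ⟨∑ n ∈ Finset.range N, |t n - c * (1 / ((n : ℝ) + 1))|, fun M => ?_⟩
  rw [Finset.mul_sum, ← sub_le_iff_le_add, ← Finset.sum_sub_distrib]
  induction M with
  | zero => simpa using Finset.sum_nonneg fun n _ => abs_nonneg _
  | succ M ih =>
    by_cases hM : N ≤ M
    · rw [Finset.sum_range_succ]
      have := hN M hM
      linarith
    · calc _ ≤ ∑ n ∈ Finset.range (M+1), |t n - c * (1 / ((n : ℝ) + 1))| :=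
            Finset.sum_le_sum fun n _ => le_abs_self _
        _ ≤ _ := Finset.sum_le_sum_of_subset_of_nonneg
            (Finset.range_mono (by omega)) fun _ _ _ => abs_nonneg _

/-- Theorem 4.5 (sharpness): for `p > 1`, `α ≥ 0`, `α ≠ p - 1`, no constant larger than
`|(α-p+1)/p|^p` works in the discrete weighted `p`-Hardy inequality. -/
theorem stmt_14 (p α : ℝ) (hp : 1 < p) (hα0 : 0 ≤ α) (hα : α ≠ p - 1) :
    ∀ C : ℝ, |(α - p + 1) / p| ^ p < C →
      ∃ u : ℕ → ℝ, (Function.support u).Finite ∧ u 0 = 0 ∧ u ≠ 0 ∧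
        ∑' n : ℕ, |u (n + 1) - u n| ^ p * ((n : ℝ) + 1) ^ α <
          C * ∑' n : ℕ, |u (n + 1)| ^ p * ((n : ℝ) + 1) ^ (α - p) := by
  intro C hC
  have hp0 : p ≠ 0 := by linarith
  obtain ⟨b, hbd⟩ : ∃ b : ℝ, b = (p - 1 - α) / p := ⟨_, rfl⟩
  have hb : b * p = p - 1 - α := by rw [hbd]; field_simp
  have hab : |(α - p + 1) / p| = |b| := by
    rw [← abs_neg b, hbd]; congr 1; ring
  rw [hab] at hC
  obtain ⟨c, hc1, hc2⟩ := exists_between hC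
  have hC0 : 0 ≤ C := (Real.rpow_nonneg (abs_nonneg b) p).trans hC.le
  let w : ℕ → ℝ := fun n => if n = 0 then 0 else (n : ℝ) ^ b
  let t : ℕ → ℝ := fun n => |w (n + 1) - w n| ^ p * ((n : ℝ) + 1) ^ α
  have ht : ∀ᶠ n : ℕ in Filter.atTop, t n ≤ c * (1 / ((n : ℝ) + 1)) := by
    filter_upwards [(aux_lim p α b hp hb).eventually_lt_const hc1,
      Filter.eventually_gt_atTop 0] with n h1 h2
    have hn : (0 : ℝ) < (n : ℝ) + 1 := by positivity
    have : t n = |((n : ℝ) + 1) ^ b - (n : ℝ) ^ b| ^ p * ((n : ℝ) + 1) ^ α := by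
      simp [t, w, h2.ne']
    rw [this, mul_one_div, le_div_iff₀ hn]
    exact h1.le
  obtain ⟨K, hK⟩ := aux_bdd t c ht
  obtain ⟨M, hM, hM0⟩ := ((Real.tendsto_sum_range_one_div_nat_succ_atTop.eventually_gt_atTop
    ((K + 2 ^ α) / (C - c))).and (Filter.eventually_gt_atTop 0)).exists
  rw [div_lt_iff₀ (by linarith)] at hM
  have hMr : (0 : ℝ) < M := by exact_mod_cast hM0
  let u : ℕ → ℝ := fun n => if n ≤ M then w n else
    if n ≤ 2 * M then (M : ℝ) ^ b * ((2 * M - n) / M) else 0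
  have u1 : ∀ n, n ≤ M → u n = w n := fun n h => by simp [u, h]
  have u2 : ∀ n, M ≤ n → n ≤ 2 * M → u n = (M : ℝ) ^ b * ((2 * M - n) / M) := by
    intro n h h'
    rcases h.eq_or_lt with h | h
    · subst h
      rw [u1 _ le_rfl]
      simp only [w, hM0.ne', if_false]
      field_simp
      ring
    · simp [u, h', not_le.2 h]
  have u3 : ∀ n, 2 * M ≤ n → u n = 0 := by
    intro n h
    rcases h.eq_or_lt with h | h
    · subst h
      rw [u2 _ (by omega) le_rfl]
      push_cast
      simp
    · simp [u, show ¬ n ≤ M by omega, show ¬ n ≤ 2 * M by omega]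
  refine ⟨u, ?_, ?_, ?_, ?_⟩
  · refine (Finset.range (2 * M)).finite_toSet.subset fun n hn => ?_
    by_contra h
    exact hn (u3 n (by simpa using h))
  · simp [u, w]
  · intro h
    have := congrFun h M
    rw [u1 _ le_rfl] at this
    simp only [w, hM0.ne', if_false, Pi.zero_apply] at this
    exact absurd this (by positivity)
  rw [tsum_eq_sum (s := Finset.range (2 * M)), tsum_eq_sum (s := Finset.range (2 * M))]
  rotate_left
  · intro n hn
    simp only [Finset.mem_range, not_lt] at hn
    rw [u3 (n+1) (by omega)]
    simp [Real.zero_rpow hp0]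
  · intro n hn
    simp only [Finset.mem_range, not_lt] at hn
    rw [u3 (n+1) (by omega), u3 n hn]
    simp [Real.zero_rpow hp0]
  have hR : ∑ n ∈ Finset.range M, 1 / ((n : ℝ) + 1) ≤
      ∑ n ∈ Finset.range (2 * M), |u (n + 1)| ^ p * ((n : ℝ) + 1) ^ (α - p) := by
    calc _ = ∑ n ∈ Finset.range M, |u (n + 1)| ^ p * ((n : ℝ) + 1) ^ (α - p) := by
          refine Finset.sum_congr rfl fun n hn => ?_
          have hn' : (0 : ℝ) < (n : ℝ) + 1 := by positivity
          rw [Finset.mem_range] at hn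
          rw [u1 _ (by omega)]
          simp only [w, Nat.succ_ne_zero, if_false, Nat.cast_add, Nat.cast_one]
          rw [abs_of_pos (by positivity), ← Real.rpow_mul hn'.le, ← Real.rpow_add hn', hb,
            show p - 1 - α + (α - p) = -1 by ring, Real.rpow_neg_one, one_div]
      _ ≤ _ := Finset.sum_le_sum_of_subset_of_nonneg
            (Finset.range_mono (by omega)) fun _ _ _ => by positivity
  have hL : ∑ n ∈ Finset.range (2 * M), |u (n + 1) - u n| ^ p * ((n : ℝ) + 1) ^ α ≤
      ∑ n ∈ Finset.range M, t n + 2 ^ α := by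
    rw [two_mul, Finset.sum_range_add]
    refine add_le_add (Finset.sum_le_sum fun n hn => ?_) ?_
    · rw [Finset.mem_range] at hn
      rw [u1 _ (by omega), u1 _ (by omega)]
    · calc _ ≤ ∑ n ∈ Finset.range M, ((M : ℝ) ^ b / M) ^ p * (2 * M) ^ α := by
            refine Finset.sum_le_sum fun n hn => ?_
            rw [Finset.mem_range] at hn
            rw [u2 (M + n + 1) (by omega) (by omega), u2 (M + n) (by omega) (by omega)]
            have : (M : ℝ) ^ b * ((2 * M - ((M + n + 1 : ℕ) : ℝ)) / M)
              - (M : ℝ) ^ b * ((2 * M - ((M + n : ℕ) : ℝ)) / M) = - ((M : ℝ) ^ b / M) := by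
              push_cast
              field_simp
              ring
            rw [this, abs_neg, abs_of_pos (by positivity)]
            have : ((M + n : ℕ) : ℝ) + 1 ≤ 2 * M := by
              exact_mod_cast (show M + n + 1 ≤ 2 * M by omega)
            gcongr
        _ = 2 ^ α := by
            rw [Finset.sum_const, Finset.card_range, nsmul_eq_mul,
              Real.div_rpow (by positivity) hMr.le, ← Real.rpow_mul hMr.le,
              Real.mul_rpow (by norm_num) hMr.le, ← Real.rpow_sub hMr]
            have : (M : ℝ) * ((M : ℝ) ^ (b * p - p) * (M : ℝ) ^ α) = 1 := by
              rw [← Real.rpow_add hMr]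
              nth_rewrite 1 [← Real.rpow_one (M : ℝ)]
              rw [← Real.rpow_add hMr, hb, show 1 + (p - 1 - α - p + α) = 0 by ring,
                Real.rpow_zero]
            linear_combination (2 : ℝ) ^ α * this
  have := hK M
  have := mul_le_mul_of_nonneg_left hR hC0
  nlinarith
end
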